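/- arXiv:2501.18499 — 3 statements merged into one kernel-verified Lean document; each statement's English description precedes it below -/
import Mathlib

section
/- (Loop removal) Every diagram d : ▶^m → ▶^n in Syn_M is PGA-equal to an acyclic diagram, i.e. to a diagram composed only of the generators player0, lose0, player1, lose1, merge, start and priority p (no cup or cap). -/
set_option autoImplicit true

namespace PaperPG

/-! ## The diagrammatic syntax `Syn_M` and the equational theory PGA -/

/-- The two generating objects (wire colours): `r` = ▶ and `l` = ◀. -/
inductive Obj : Type
  | r : Obj
  | l : Obj
  deriving DecidableEq

/-- Objects of the free prop: words over `{▶, ◀}`. -/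
abbrev Word := List Obj

/-- The word `▶^m`. -/
def rword (m : ℕ) : Word := List.replicate m Obj.r

/-- Morphisms of the free two-coloured prop `Syn_M`: formal (sequential and parallel)
composites of identities, symmetries and the generators of the calculus of parity
games, with priorities bounded by `M`. -/
inductive Syn (M : ℕ) : Word → Word → Type where
  | id : (v : Word) → Syn M v v
  | comp : {u v w : Word} → Syn M u v → Syn M v w → Syn M u w
  | tensor : {u1 w1 u2 w2 : Word} → Syn M u1 w1 → Syn M u2 w2 → Syn M (u1 ++ u2) (w1 ++ w2)
  | symm : (v w : Word) → Syn M (v ++ w) (w ++ v)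
  | player0 : Syn M [Obj.r] [Obj.r, Obj.r]
  | lose0 : Syn M [Obj.r] []
  | player1 : Syn M [Obj.r] [Obj.r, Obj.r]
  | lose1 : Syn M [Obj.r] []
  | merge : Syn M [Obj.r, Obj.r] [Obj.r]
  | start : Syn M [] [Obj.r]
  | priority : Fin (M + 1) → Syn M [Obj.r] [Obj.r]
  | cup : Syn M [] [Obj.r, Obj.l]
  | cap : Syn M [Obj.l, Obj.r] []

infixl:60 " ⨟ " => Syn.comp
infixl:65 " ⊠ " => Syn.tensor

/-- Transport a diagram along equalities of words. -/
def Syn.castHom {M : ℕ} {u u' w w' : Word} (hu : u = u') (hw : w = w')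
    (f : Syn M u w) : Syn M u' w' := by
  subst hu; subst hw; exact f

/-- The inner body of the parity axiom: `merge ⨟ player0` followed by
`(player1 ⨟ (id ⊠ priority p)) ⊠ id`. -/
def parityBody (M : ℕ) (p : Fin (M + 1)) : Syn M [Obj.r, Obj.r] [Obj.r, Obj.r, Obj.r] :=
  Syn.merge ⨟ Syn.player0
    ⨟ ((Syn.player1 ⨟ (Syn.id [Obj.r] ⊠ Syn.priority p) : Syn M [Obj.r] [Obj.r, Obj.r])
        ⊠ Syn.id [Obj.r])

/-- The left-hand side of the parity axiom (E): the feedback loop formed, via `cup`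
and `cap`, by feeding the `priority p` output of `parityBody` back to its second
input. -/
def parityLHS (M : ℕ) (p : Fin (M + 1)) : Syn M [Obj.r] [Obj.r, Obj.r] :=
  (Syn.id [Obj.r] ⊠ Syn.cup : Syn M [Obj.r] [Obj.r, Obj.r, Obj.l])
  ⨟ (parityBody M p ⊠ Syn.id [Obj.l] : Syn M [Obj.r, Obj.r, Obj.l] [Obj.r, Obj.r, Obj.r, Obj.l])
  ⨟ ((Syn.id [Obj.r] ⊠ Syn.id [Obj.r]) ⊠ Syn.symm [Obj.r] [Obj.l] :
      Syn M [Obj.r, Obj.r, Obj.r, Obj.l] [Obj.r, Obj.r, Obj.l, Obj.r])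
  ⨟ ((Syn.id [Obj.r] ⊠ Syn.symm [Obj.r] [Obj.l]) ⊠ Syn.id [Obj.r] :
      Syn M [Obj.r, Obj.r, Obj.l, Obj.r] [Obj.r, Obj.l, Obj.r, Obj.r])
  ⨟ ((Syn.id [Obj.r] ⊠ Syn.cap) ⊠ Syn.id [Obj.r] :
      Syn M [Obj.r, Obj.l, Obj.r, Obj.r] [Obj.r, Obj.r])

/-- The smallest congruence (with respect to sequential and parallel composition) on
the morphisms of `Syn_M` containing the laws of symmetric monoidal categories and the
axioms of Parity Game Algebra (PGA): (A) compact closure and loop removal,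
(B) the distributive lattice axioms, (C) the priority axioms, (D) the distributive
law of priorities over the lattice structure and (E) the parity axiom. -/
inductive PGAeq {M : ℕ} : {v w : Word} → Syn M v w → Syn M v w → Prop where
  -- equivalence
  | refl (f : Syn M v w) : PGAeq f f
  | symm_rel {f g : Syn M v w} : PGAeq f g → PGAeq g f
  | trans {f g h : Syn M v w} : PGAeq f g → PGAeq g h → PGAeq f h
  -- congruence with respect to the two compositions
  | comp_congr {f f' : Syn M u v} {g g' : Syn M v w} :
      PGAeq f f' → PGAeq g g' → PGAeq (f ⨟ g) (f' ⨟ g')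
  | tensor_congr {f f' : Syn M u1 w1} {g g' : Syn M u2 w2} :
      PGAeq f f' → PGAeq g g' → PGAeq (f ⊠ g) (f' ⊠ g')
  -- laws of (strict) symmetric monoidal categories
  | comp_assoc (f : Syn M u v) (g : Syn M v w) (h : Syn M w x) :
      PGAeq ((f ⨟ g) ⨟ h) (f ⨟ (g ⨟ h))
  | id_comp (f : Syn M v w) : PGAeq (Syn.id v ⨟ f) f
  | comp_id (f : Syn M v w) : PGAeq (f ⨟ Syn.id w) f
  | tensor_id (v w : Word) : PGAeq (Syn.id v ⊠ Syn.id w) (Syn.id (v ++ w))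
  | interchange (f1 : Syn M u1 v1) (g1 : Syn M v1 w1) (f2 : Syn M u2 v2) (g2 : Syn M v2 w2) :
      PGAeq ((f1 ⨟ g1) ⊠ (f2 ⨟ g2)) ((f1 ⊠ f2) ⨟ (g1 ⊠ g2))
  | tensor_assoc (f : Syn M u1 w1) (g : Syn M u2 w2) (h : Syn M u3 w3) :
      PGAeq (Syn.castHom (List.append_assoc u1 u2 u3) (List.append_assoc w1 w2 w3)
              ((f ⊠ g) ⊠ h))
            (f ⊠ (g ⊠ h))
  | tensor_nil (f : Syn M u w) :
      PGAeq (Syn.castHom (List.append_nil u) (List.append_nil w) (f ⊠ Syn.id [])) f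
  | swap_nat (f : Syn M u1 w1) (g : Syn M u2 w2) :
      PGAeq ((f ⊠ g) ⨟ Syn.symm w1 w2) (Syn.symm u1 u2 ⨟ (g ⊠ f))
  | swap_inv (v w : Word) : PGAeq (Syn.symm v w ⨟ Syn.symm w v) (Syn.id (v ++ w))
  | hexagon (u v w : Word) :
      PGAeq (Syn.symm u (v ++ w))
        (Syn.castHom (List.append_assoc u v w) (List.append_assoc v w u).symm
          ((Syn.symm u v ⊠ Syn.id w)
            ⨟ Syn.castHom (List.append_assoc v u w).symm rfl (Syn.id v ⊠ Syn.symm u w)))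
  -- (A) compact closure: yanking, and removal of a closed loop
  | yank_r : PGAeq (v := [Obj.r]) (w := [Obj.r]) ((Syn.cup ⊠ Syn.id [Obj.r]) ⨟ (Syn.id [Obj.r] ⊠ Syn.cap))
      (Syn.id [Obj.r])
  | yank_l : PGAeq (v := [Obj.l]) (w := [Obj.l]) ((Syn.id [Obj.l] ⊠ Syn.cup) ⨟ (Syn.cap ⊠ Syn.id [Obj.l]))
      (Syn.id [Obj.l])
  | loop : PGAeq (v := ([] : Word)) (w := ([] : Word)) (Syn.cup ⨟ Syn.symm [Obj.r] [Obj.l] ⨟ Syn.cap) (Syn.id [])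
  -- (B) distributive lattice axioms
  | B1 : PGAeq (v := [Obj.r, Obj.r, Obj.r]) (w := [Obj.r]) ((Syn.merge ⊠ Syn.id [Obj.r]) ⨟ Syn.merge)
      ((Syn.id [Obj.r] ⊠ Syn.merge) ⨟ Syn.merge)
  | B2 : PGAeq (v := [Obj.r, Obj.r]) (w := [Obj.r]) (Syn.symm [Obj.r] [Obj.r] ⨟ Syn.merge) Syn.merge
  | B3r : PGAeq (v := [Obj.r]) (w := [Obj.r]) ((Syn.id [Obj.r] ⊠ Syn.start) ⨟ Syn.merge) (Syn.id [Obj.r])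
  | B3l : PGAeq (v := [Obj.r]) (w := [Obj.r]) ((Syn.start ⊠ Syn.id [Obj.r]) ⨟ Syn.merge) (Syn.id [Obj.r])
  | B4 : PGAeq (v := [Obj.r]) (w := [Obj.r, Obj.r, Obj.r]) (Syn.player0 ⨟ (Syn.player0 ⊠ Syn.id [Obj.r]))
      (Syn.player0 ⨟ (Syn.id [Obj.r] ⊠ Syn.player0))
  | B5 : PGAeq (v := [Obj.r]) (w := [Obj.r, Obj.r]) (Syn.player0 ⨟ Syn.symm [Obj.r] [Obj.r]) Syn.player0
  | B6r : PGAeq (v := [Obj.r]) (w := [Obj.r]) (Syn.player0 ⨟ (Syn.lose0 ⊠ Syn.id [Obj.r])) (Syn.id [Obj.r])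
  | B6l : PGAeq (v := [Obj.r]) (w := [Obj.r]) (Syn.player0 ⨟ (Syn.id [Obj.r] ⊠ Syn.lose0)) (Syn.id [Obj.r])
  | B7 : PGAeq (v := [Obj.r]) (w := [Obj.r, Obj.r, Obj.r]) (Syn.player1 ⨟ (Syn.player1 ⊠ Syn.id [Obj.r]))
      (Syn.player1 ⨟ (Syn.id [Obj.r] ⊠ Syn.player1))
  | B8 : PGAeq (v := [Obj.r]) (w := [Obj.r, Obj.r]) (Syn.player1 ⨟ Syn.symm [Obj.r] [Obj.r]) Syn.player1
  | B9r : PGAeq (v := [Obj.r]) (w := [Obj.r]) (Syn.player1 ⨟ (Syn.lose1 ⊠ Syn.id [Obj.r])) (Syn.id [Obj.r])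
  | B9l : PGAeq (v := [Obj.r]) (w := [Obj.r]) (Syn.player1 ⨟ (Syn.id [Obj.r] ⊠ Syn.lose1)) (Syn.id [Obj.r])
  | B10 : PGAeq (v := [Obj.r, Obj.r]) (w := [Obj.r, Obj.r]) (Syn.merge ⨟ Syn.player0)
      ((Syn.player0 ⊠ Syn.player0)
        ⨟ ((Syn.id [Obj.r] ⊠ Syn.symm [Obj.r] [Obj.r]) ⊠ Syn.id [Obj.r] :
          Syn M [Obj.r, Obj.r, Obj.r, Obj.r] [Obj.r, Obj.r, Obj.r, Obj.r])
        ⨟ (Syn.merge ⊠ Syn.merge))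
  | B11 : PGAeq (v := [Obj.r, Obj.r]) (w := ([] : Word)) (Syn.merge ⨟ Syn.lose0) (Syn.lose0 ⊠ Syn.lose0)
  | B12 : PGAeq (v := ([] : Word)) (w := [Obj.r, Obj.r]) (Syn.start ⨟ Syn.player0) (Syn.start ⊠ Syn.start)
  | B13 : PGAeq (v := ([] : Word)) (w := [Obj.r, Obj.r]) (Syn.start ⨟ Syn.player1) (Syn.start ⊠ Syn.start)
  | B14 : PGAeq (v := ([] : Word)) (w := ([] : Word)) (Syn.start ⨟ Syn.lose0) (Syn.id [])
  | B15 : PGAeq (v := ([] : Word)) (w := ([] : Word)) (Syn.start ⨟ Syn.lose1) (Syn.id [])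
  | B16 : PGAeq (v := [Obj.r]) (w := [Obj.r]) (Syn.player0 ⨟ Syn.merge) (Syn.id [Obj.r])
  | B17 : PGAeq (v := [Obj.r]) (w := [Obj.r]) (Syn.player1 ⨟ Syn.merge) (Syn.id [Obj.r])
  | B18 : PGAeq (v := [Obj.r, Obj.r]) (w := [Obj.r, Obj.r]) (Syn.merge ⨟ Syn.player1)
      ((Syn.player1 ⊠ Syn.player1)
        ⨟ ((Syn.id [Obj.r] ⊠ Syn.symm [Obj.r] [Obj.r]) ⊠ Syn.id [Obj.r] :
          Syn M [Obj.r, Obj.r, Obj.r, Obj.r] [Obj.r, Obj.r, Obj.r, Obj.r])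
        ⨟ (Syn.merge ⊠ Syn.merge))
  | B19 : PGAeq (v := [Obj.r, Obj.r]) (w := ([] : Word)) (Syn.merge ⨟ Syn.lose1) (Syn.lose1 ⊠ Syn.lose1)
  | B20 : PGAeq (v := [Obj.r]) (w := [Obj.r, Obj.r, Obj.r]) (Syn.player0 ⨟ (Syn.player1 ⊠ Syn.id [Obj.r]))
      (Syn.player1 ⨟ (Syn.player0 ⊠ Syn.player0)
        ⨟ ((Syn.id [Obj.r] ⊠ Syn.symm [Obj.r] [Obj.r]) ⊠ Syn.id [Obj.r] :
          Syn M [Obj.r, Obj.r, Obj.r, Obj.r] [Obj.r, Obj.r, Obj.r, Obj.r])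
        ⨟ ((Syn.id [Obj.r] ⊠ Syn.id [Obj.r]) ⊠ Syn.merge :
          Syn M [Obj.r, Obj.r, Obj.r, Obj.r] [Obj.r, Obj.r, Obj.r]))
  | B21 : PGAeq (v := [Obj.r]) (w := [Obj.r]) (Syn.player0 ⨟ (Syn.lose1 ⊠ Syn.id [Obj.r])) (Syn.lose1 ⨟ Syn.start)
  | B22 : PGAeq (v := [Obj.r]) (w := [Obj.r, Obj.r, Obj.r]) (Syn.player1 ⨟ (Syn.player0 ⊠ Syn.id [Obj.r]))
      (Syn.player0 ⨟ (Syn.player1 ⊠ Syn.player1)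
        ⨟ ((Syn.id [Obj.r] ⊠ Syn.symm [Obj.r] [Obj.r]) ⊠ Syn.id [Obj.r] :
          Syn M [Obj.r, Obj.r, Obj.r, Obj.r] [Obj.r, Obj.r, Obj.r, Obj.r])
        ⨟ ((Syn.id [Obj.r] ⊠ Syn.id [Obj.r]) ⊠ Syn.merge :
          Syn M [Obj.r, Obj.r, Obj.r, Obj.r] [Obj.r, Obj.r, Obj.r]))
  | B23 : PGAeq (v := [Obj.r]) (w := [Obj.r]) (Syn.player1 ⨟ (Syn.lose0 ⊠ Syn.id [Obj.r])) (Syn.lose0 ⨟ Syn.start)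
  -- (C) priority axioms
  | C1 (p : Fin (M + 1)) : PGAeq (v := [Obj.r, Obj.r]) (w := [Obj.r]) ((Syn.priority p ⊠ Syn.priority p) ⨟ Syn.merge)
      (Syn.merge ⨟ Syn.priority p)
  | C2 (p : Fin (M + 1)) : PGAeq (v := ([] : Word)) (w := [Obj.r]) (Syn.start ⨟ Syn.priority p) Syn.start
  | C3 (p q : Fin (M + 1)) : PGAeq (v := [Obj.r]) (w := [Obj.r]) (Syn.priority p ⨟ Syn.priority q)
      (Syn.priority (max p q))
  | C4 : PGAeq (Syn.priority 0) (Syn.id [Obj.r])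
  -- (D) distributive law of priorities over the lattice structure
  | D1 (p : Fin (M + 1)) : PGAeq (v := [Obj.r]) (w := [Obj.r, Obj.r]) (Syn.priority p ⨟ Syn.player0)
      (Syn.player0 ⨟ (Syn.priority p ⊠ Syn.priority p))
  | D2 (p : Fin (M + 1)) : PGAeq (v := [Obj.r]) (w := ([] : Word)) (Syn.priority p ⨟ Syn.lose0) Syn.lose0
  | D3 (p : Fin (M + 1)) : PGAeq (v := [Obj.r]) (w := [Obj.r, Obj.r]) (Syn.priority p ⨟ Syn.player1)
      (Syn.player1 ⨟ (Syn.priority p ⊠ Syn.priority p))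
  | D4 (p : Fin (M + 1)) : PGAeq (v := [Obj.r]) (w := ([] : Word)) (Syn.priority p ⨟ Syn.lose1) Syn.lose1
  -- (E) the parity axiom
  | parity_even (p : Fin (M + 1)) (h : Even p.val) :
      PGAeq (parityLHS M p) Syn.player0
  | parity_odd (p : Fin (M + 1)) (h : Odd p.val) :
      PGAeq (v := [Obj.r]) (w := [Obj.r, Obj.r]) (parityLHS M p) (Syn.start ⊠ Syn.id [Obj.r])
/-! ## Acyclic diagrams, layers and normal forms -/

/-- A diagram is *acyclic* if it is composed only of the generators
`player0, lose0, player1, lose1, merge, start, priority p` (together with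
identities and wire crossings on `▶`-wires), i.e. it contains no `cup` or `cap`. -/
inductive Acyclic {M : ℕ} : {v w : Word} → Syn M v w → Prop where
  | id (k : ℕ) : Acyclic (Syn.id (rword k))
  | symm (k j : ℕ) : Acyclic (Syn.symm (rword k) (rword j))
  | player0 : Acyclic Syn.player0
  | lose0 : Acyclic Syn.lose0
  | player1 : Acyclic Syn.player1
  | lose1 : Acyclic Syn.lose1
  | merge : Acyclic Syn.merge
  | start : Acyclic Syn.start
  | priority (p : Fin (M + 1)) : Acyclic (Syn.priority p)
  | comp {u v w : Word} {f : Syn M u v} {g : Syn M v w} :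
      Acyclic f → Acyclic g → Acyclic (f ⨟ g)
  | tensor {u1 w1 u2 w2 : Word} {f : Syn M u1 w1} {g : Syn M u2 w2} :
      Acyclic f → Acyclic g → Acyclic (f ⊠ g)

/-- A *layer* of generators from `S`: a diagram built only from generators in `S`
together with identities and wire crossings. -/
inductive Layer {M : ℕ} (S : {v w : Word} → Syn M v w → Prop) :
    {v w : Word} → Syn M v w → Prop where
  | base {v w : Word} {f : Syn M v w} : S f → Layer S f
  | id (k : ℕ) : Layer S (Syn.id (rword k))
  | symm (k j : ℕ) : Layer S (Syn.symm (rword k) (rword j))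
  | comp {u v w : Word} {f : Syn M u v} {g : Syn M v w} :
      Layer S f → Layer S g → Layer S (f ⨟ g)
  | tensor {u1 w1 u2 w2 : Word} {f : Syn M u1 w1} {g : Syn M u2 w2} :
      Layer S f → Layer S g → Layer S (f ⊠ g)

/-- The generators `player0`, `lose0`. -/
inductive Gen0 {M : ℕ} : {v w : Word} → Syn M v w → Prop where
  | player0 : Gen0 Syn.player0
  | lose0 : Gen0 Syn.lose0

/-- The generators `player1`, `lose1`. -/
inductive Gen1 {M : ℕ} : {v w : Word} → Syn M v w → Prop where
  | player1 : Gen1 Syn.player1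
  | lose1 : Gen1 Syn.lose1

/-- The generators `priority p`. -/
inductive GenP {M : ℕ} : {v w : Word} → Syn M v w → Prop where
  | priority (p : Fin (M + 1)) : GenP (Syn.priority p)

/-- The generators `merge`, `start`. -/
inductive GenM {M : ℕ} : {v w : Word} → Syn M v w → Prop where
  | merge : GenM Syn.merge
  | start : GenM Syn.start

/-- A diagram is in *normal form* when it factors into a layer of `player0/lose0`,
followed by a layer of `player1/lose1`, followed by a layer of priorities, followed
by a layer of `merge/start`. -/
def InNormalForm {M : ℕ} {v w : Word} (d : Syn M v w) : Prop :=
  ∃ (a b c : Word) (f1 : Syn M v a) (f2 : Syn M a b) (f3 : Syn M b c) (f4 : Syn M c w),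
    Layer Gen0 f1 ∧ Layer Gen1 f2 ∧ Layer GenP f3 ∧ Layer GenM f4 ∧
    d = f1 ⨟ (f2 ⨟ (f3 ⨟ f4))

theorem rword_append (a b : ℕ) : rword a ++ rword b = rword (a + b) :=
  (List.replicate_add a b Obj.r).symm

theorem mergeN_dom (k : ℕ) :
    [Obj.r] ++ ((rword k ++ [Obj.r]) ++ rword k) = rword ((k + 1) + (k + 1)) := by
  show rword 1 ++ ((rword k ++ rword 1) ++ rword k) = rword ((k + 1) + (k + 1))
  simp only [rword_append]
  exact congrArg rword (by omega)

theorem mergeN_mid (k : ℕ) :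
    [Obj.r, Obj.r] ++ rword (k + k) = [Obj.r] ++ (([Obj.r] ++ rword k) ++ rword k) := by
  show rword 2 ++ rword (k + k) = rword 1 ++ ((rword 1 ++ rword k) ++ rword k)
  simp only [rword_append]
  exact congrArg rword (by omega)

/-- The `k`-wire generalisation `merge_k : ▶^{2k} → ▶^k` of `merge`, merging the
`i`-th wire of the first group with the `i`-th wire of the second group. -/
def mergeN (M : ℕ) : (k : ℕ) → Syn M (rword (k + k)) (rword k)
  | 0 => Syn.id []
  | k + 1 =>
      Syn.castHom (mergeN_dom k) rfl
        ((Syn.id [Obj.r] ⊠ (Syn.symm (rword k) [Obj.r] ⊠ Syn.id (rword k)))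
          ⨟ Syn.castHom (mergeN_mid k) rfl (Syn.merge ⊠ mergeN M k))

/-- The `k`-wire generalisation `start_k : ε → ▶^k` of `start`. -/
def startN (M : ℕ) : (k : ℕ) → Syn M [] (rword k)
  | 0 => Syn.id []
  | k + 1 => Syn.start ⊠ startN M k

/-!
Wires of a compact closed category can be straightened and bent, so a diagram is acyclic up to PGA
as soon as its composites with bent wires are, and bending costs nothing but a trace. It is
therefore enough that the trace of an acyclic diagram is acyclic. Acyclic diagrams are homomorphisms
for `merge` and `start`, which makes them matrices determined by their columns `▶ → w`, and reduces
the trace to the feedback of a single column `▶ → w▶` into its own input.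

Columns form a distributive lattice, with join `player0` and meet `player1`, generated by the
columns whose last row is empty and by the columns `start_w ⊗ priority p`. Feedback is eliminated by
induction on the set of priorities that occur in the last row. If `x` is the generator of priority
`p`, distributivity turns the column into `c ⊔ a ⊓ x` with `a` and `c` free of `p`, and by the
parity axiom its feedback is that of `c ⊔ a` for `p` even and that of `c` for `p` odd. When no
priority is left, the last row is empty and the loop disappears.
-/

theorem exists_eq_sup_inf_of_mem_latticeClosure_insert {α : Type*} [DistribLattice α] {s : Set α}
    {b t x y : α} (hb : IsBot b) (ht : IsTop t) (hbs : b ∈ latticeClosure s)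
    (hts : t ∈ latticeClosure s) (hy : y ∈ latticeClosure (insert x s)) :
    ∃ c ∈ latticeClosure s, ∃ a ∈ latticeClosure s, y = c ⊔ a ⊓ x := by
  have sup_mem {a c : α} := (isSublattice_latticeClosure (s := s)).supClosed (a := a) (b := c)
  have inf_mem {a c : α} := (isSublattice_latticeClosure (s := s)).infClosed (a := a) (b := c)
  induction hy using latticeClosure_sup_inf_induction with
  | mem y hy =>
    obtain rfl | hy := hy
    · exact ⟨b, hbs, t, hts, by rw [inf_eq_right.2 (ht y), sup_eq_right.2 (hb y)]⟩
    · exact ⟨y, subset_latticeClosure hy, b, hbs,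
        by rw [inf_eq_left.2 (hb x), sup_eq_left.2 (hb y)]⟩
  | sup y _ z _ ihy ihz =>
    obtain ⟨c, hc, a, ha, rfl⟩ := ihy
    obtain ⟨c', hc', a', ha', rfl⟩ := ihz
    exact ⟨c ⊔ c', sup_mem hc hc', a ⊔ a', sup_mem ha ha', by rw [inf_sup_right]; ac_rfl⟩
  | inf y _ z _ ihy ihz =>
    obtain ⟨c, hc, a, ha, rfl⟩ := ihy
    obtain ⟨c', hc', a', ha', rfl⟩ := ihz
    refine ⟨c ⊓ c', inf_mem hc hc', c ⊓ a' ⊔ a ⊓ c' ⊔ a ⊓ a',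
      sup_mem (sup_mem (inf_mem hc ha') (inf_mem ha hc')) (inf_mem ha ha'), ?_⟩
    rw [inf_sup_right, inf_sup_left, inf_sup_left, inf_sup_right, inf_sup_right,
      ← inf_inf_distrib_right]
    ac_rfl

/-- PGA-equality on `Syn M u w`, as a setoid. -/
def synSetoid (M : ℕ) (u w : Word) : Setoid (Syn M u w) :=
  ⟨PGAeq, PGAeq.refl, PGAeq.symm_rel, PGAeq.trans⟩

/-- Diagrams modulo PGA whose type is data rather than an index, so that `comp` and `tensor` are
total and associativity needs no casts. The class `none` is an absorbing error value, produced by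
composing along distinct words. -/
structure Diag (M : ℕ) where
  dom : Word
  cod : Word
  cls : Option (Quotient (synSetoid M dom cod))

namespace Diag

variable {M : ℕ}

open Obj

local notation "▶" => Obj.r
local notation "◀" => Obj.l

/-- The class of a diagram. -/
def of {u w : Word} (d : Syn M u w) : Diag M := ⟨u, w, some (Quotient.mk _ d)⟩

/-- The error value of type `u → w`. -/
def undef (u w : Word) : Diag M := ⟨u, w, none⟩

/-- Sequential composition, in diagrammatic order. -/
def comp (f g : Diag M) : Diag M :=
  ⟨f.dom, g.cod, if e : f.cod = g.dom then
    f.cls.bind fun a => g.cls.map fun b =>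
      Quotient.map₂ Syn.comp (fun _ _ h _ _ h' => PGAeq.comp_congr h h') (e ▸ a) b
    else none⟩

/-- Parallel composition. -/
def tensor (f g : Diag M) : Diag M :=
  ⟨f.dom ++ g.dom, f.cod ++ g.cod, f.cls.bind fun a => g.cls.map fun b =>
    Quotient.map₂ Syn.tensor (fun _ _ h _ _ h' => PGAeq.tensor_congr h h') a b⟩

/-- The identity on a word. -/
def ident (w : Word) : Diag M := of (Syn.id w)

/-- The wire crossing of two words. -/
def swap (u v : Word) : Diag M := of (Syn.symm u v)

local infixr:60 " ⊳ " => comp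
local infixr:70 " ⊗ " => tensor
local prefix:max "𝟙" => ident

section Basic

variable {u u' v v' w w' : Word}

-- The parentheses in `(rfl)` keep these facts from `dsimp`, which cannot rewrite `dom` and `cod`
-- inside the type of `cls`.

@[simp] theorem of_dom (d : Syn M u w) : (of d).dom = u := (rfl)
@[simp] theorem of_cod (d : Syn M u w) : (of d).cod = w := (rfl)
@[simp] theorem undef_dom : (undef u w : Diag M).dom = u := (rfl)
@[simp] theorem undef_cod : (undef u w : Diag M).cod = w := (rfl)
@[simp] theorem comp_dom (f g : Diag M) : (f ⊳ g).dom = f.dom := (rfl)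
@[simp] theorem comp_cod (f g : Diag M) : (f ⊳ g).cod = g.cod := (rfl)
@[simp] theorem tensor_dom (f g : Diag M) : (f ⊗ g).dom = f.dom ++ g.dom := (rfl)
@[simp] theorem tensor_cod (f g : Diag M) : (f ⊗ g).cod = f.cod ++ g.cod := (rfl)
@[simp] theorem ident_dom : (𝟙 w : Diag M).dom = w := (rfl)
@[simp] theorem ident_cod : (𝟙 w : Diag M).cod = w := (rfl)
@[simp] theorem swap_dom : (swap u w : Diag M).dom = u ++ w := (rfl)
@[simp] theorem swap_cod : (swap u w : Diag M).cod = w ++ u := (rfl)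

theorem of_eq_of {d e : Syn M u w} : of d = of e ↔ PGAeq d e := by
  simp only [of, mk.injEq, heq_eq_eq, true_and, Option.some.injEq]
  exact Quotient.eq (r := synSetoid M u w)

theorem of_castHom (hu : u = u') (hw : w = w') (d : Syn M u w) :
    of (Syn.castHom hu hw d) = of d := by
  subst hu; subst hw; rfl

theorem of_or_undef (f : Diag M) :
    (∃ (u w : Word) (d : Syn M u w), f = of d) ∨ ∃ u w, f = undef u w := by
  rcases f with ⟨u, w, _ | d⟩
  · exact Or.inr ⟨u, w, rfl⟩
  · induction d using Quotient.inductionOn with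
    | h d => exact Or.inl ⟨u, w, d, rfl⟩

theorem of_comp_of (d : Syn M u v) (e : Syn M v w) : of d ⊳ of e = of (d ⨟ e) := by
  simp [comp, of]

theorem of_tensor_of (d : Syn M u v) (e : Syn M u' v') : of d ⊗ of e = of (d ⊠ e) := by
  simp [tensor, of]

theorem undef_comp (g : Diag M) : undef u v ⊳ g = undef u g.cod := by
  by_cases h : v = g.dom <;> simp [comp, undef, h]

theorem comp_undef (f : Diag M) : f ⊳ undef u v = undef f.dom v := by
  simp [comp, undef]

theorem comp_of_ne {f g : Diag M} (h : f.cod ≠ g.dom) : f ⊳ g = undef f.dom g.cod := by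
  simp [comp, undef, h]

theorem undef_tensor (g : Diag M) : undef u v ⊗ g = undef (u ++ g.dom) (v ++ g.cod) := by
  simp [tensor, undef]

theorem tensor_undef (f : Diag M) : f ⊗ undef u v = undef (f.dom ++ u) (f.cod ++ v) := by
  simp [tensor, undef]

end Basic

section Monoidal

@[simp] theorem comp_assoc (f g h : Diag M) : (f ⊳ g) ⊳ h = f ⊳ g ⊳ h := by
  by_cases hfg : f.cod = g.dom
  · by_cases hgh : g.cod = h.dom
    · obtain ⟨u, v, f, rfl⟩ | ⟨u, v, rfl⟩ := f.of_or_undef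
      · obtain ⟨v', w, g, rfl⟩ | ⟨v', w, rfl⟩ := g.of_or_undef
        · obtain ⟨w', x, h, rfl⟩ | ⟨w', x, rfl⟩ := h.of_or_undef
          · rw [of_cod, of_dom] at hfg hgh
            subst hfg; subst hgh
            simpa only [of_comp_of] using of_eq_of.2 (PGAeq.comp_assoc f g h)
          · simp [comp_undef]
        · simp [comp_undef, undef_comp]
      · simp [undef_comp]
    · rw [comp_of_ne (f := f ⊳ g) hgh, comp_of_ne hgh, comp_undef, comp_dom]
  · rw [comp_of_ne hfg, comp_of_ne (g := g ⊳ h) hfg, undef_comp, comp_cod]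

@[simp] theorem ident_comp {f : Diag M} {w : Word} (h : f.dom = w) : 𝟙 w ⊳ f = f := by
  subst h
  obtain ⟨u, v, f, rfl⟩ | ⟨u, v, rfl⟩ := f.of_or_undef
  · exact (of_comp_of _ _).trans (of_eq_of.2 (PGAeq.id_comp f))
  · simp [comp_undef]

@[simp] theorem comp_ident {f : Diag M} {w : Word} (h : f.cod = w) : f ⊳ 𝟙 w = f := by
  subst h
  obtain ⟨u, v, f, rfl⟩ | ⟨u, v, rfl⟩ := f.of_or_undef
  · exact (of_comp_of _ _).trans (of_eq_of.2 (PGAeq.comp_id f))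
  · simp [undef_comp]

@[simp] theorem tensor_assoc (f g h : Diag M) : (f ⊗ g) ⊗ h = f ⊗ g ⊗ h := by
  obtain ⟨u, v, f, rfl⟩ | ⟨u, v, rfl⟩ := f.of_or_undef
  · obtain ⟨u', v', g, rfl⟩ | ⟨u', v', rfl⟩ := g.of_or_undef
    · obtain ⟨u'', v'', h, rfl⟩ | ⟨u'', v'', rfl⟩ := h.of_or_undef
      · simp only [of_tensor_of]
        rw [← of_eq_of.2 (PGAeq.tensor_assoc f g h), of_castHom]
      · simp [tensor_undef]
    · simp [tensor_undef, undef_tensor]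
  · simp [undef_tensor]

@[simp] theorem tensor_ident_nil (f : Diag M) : f ⊗ 𝟙 [] = f := by
  obtain ⟨u, v, f, rfl⟩ | ⟨u, v, rfl⟩ := f.of_or_undef
  · rw [ident, of_tensor_of, ← of_castHom (List.append_nil u) (List.append_nil v),
      of_eq_of.2 (PGAeq.tensor_nil f)]
  · simp [undef_tensor]

@[simp] theorem ident_tensor_ident (u v : Word) : (𝟙 u ⊗ 𝟙 v : Diag M) = 𝟙 (u ++ v) :=
  (of_tensor_of _ _).trans (of_eq_of.2 (PGAeq.tensor_id _ _))

theorem comp_tensor_comp {f g f' g' : Diag M} (h : f.cod = g.dom) (h' : f'.cod = g'.dom) :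
    (f ⊳ g) ⊗ (f' ⊳ g') = f ⊗ f' ⊳ g ⊗ g' := by
  obtain ⟨u, v, f, rfl⟩ | ⟨u, v, rfl⟩ := f.of_or_undef
  · obtain ⟨v₁, w, g, rfl⟩ | ⟨v₁, w, rfl⟩ := g.of_or_undef
    · obtain ⟨u', v', f', rfl⟩ | ⟨u', v', rfl⟩ := f'.of_or_undef
      · obtain ⟨v₁', w', g', rfl⟩ | ⟨v₁', w', rfl⟩ := g'.of_or_undef
        · rw [of_cod, of_dom] at h h'
          subst h; subst h'
          simpa only [of_comp_of, of_tensor_of] using of_eq_of.2 (PGAeq.interchange f g f' g')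
        · simp [comp_undef, tensor_undef]
      · simp [tensor_undef, undef_comp]
    · simp [comp_undef, undef_tensor]
  · simp [undef_comp, undef_tensor]

theorem tensor_comp_swap (f g : Diag M) : f ⊗ g ⊳ swap f.cod g.cod = swap f.dom g.dom ⊳ g ⊗ f := by
  obtain ⟨u, v, f, rfl⟩ | ⟨u, v, rfl⟩ := f.of_or_undef
  · obtain ⟨u', v', g, rfl⟩ | ⟨u', v', rfl⟩ := g.of_or_undef
    · rw [of_dom, of_dom, of_cod, of_cod]
      simpa only [swap, of_tensor_of, of_comp_of] using of_eq_of.2 (PGAeq.swap_nat f g)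
    · simp [tensor_undef, undef_comp, undef_tensor, comp_undef]
  · simp [tensor_undef, undef_comp, undef_tensor, comp_undef]

@[simp] theorem swap_comp_swap (u v : Word) : (swap u v ⊳ swap v u : Diag M) = 𝟙 (u ++ v) :=
  (of_comp_of _ _).trans (of_eq_of.2 (PGAeq.swap_inv _ _))

theorem swap_append_right (u v w : Word) :
    (swap u (v ++ w) : Diag M) = swap u v ⊗ 𝟙 w ⊳ 𝟙 v ⊗ swap u w := by
  rw [swap, of_eq_of.2 (PGAeq.hexagon u v w), of_castHom]
  simp only [swap, ident, of_tensor_of]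
  rw [← of_castHom (List.append_assoc v u w).symm rfl (Syn.id v ⊠ Syn.symm u w), of_comp_of]

@[simp] theorem swap_nil (u : Word) : (swap u [] : Diag M) = 𝟙 u := by
  have unit : (𝟙 [] ⊗ swap u [] : Diag M) = swap u [] := by
    have nat := congrArg (· ⊳ swap u []) (tensor_comp_swap (M := M) (𝟙 []) (swap u []))
    simpa using nat
  have idem := swap_append_right (M := M) u [] []
  rw [List.append_nil, tensor_ident_nil, unit] at idem
  have cancel := congrArg (swap [] u ⊳ ·) idem
  simpa [← comp_assoc] using cancel.symm

@[simp] theorem nil_swap (u : Word) : (swap [] u : Diag M) = 𝟙 u := by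
  simpa using swap_comp_swap (M := M) [] u

@[simp] theorem ident_nil_tensor (f : Diag M) : 𝟙 [] ⊗ f = f := by
  simpa using tensor_comp_swap (𝟙 []) f

@[simp] theorem ident_tensor_ident_tensor (u v : Word) (f : Diag M) :
    𝟙 u ⊗ 𝟙 v ⊗ f = 𝟙 (u ++ v) ⊗ f := by
  rw [← tensor_assoc, ident_tensor_ident]

@[simp] theorem ident_tensor_comp (x : Word) (f g : Diag M) :
    𝟙 x ⊗ (f ⊳ g) = 𝟙 x ⊗ f ⊳ 𝟙 x ⊗ g := by
  by_cases h : f.cod = g.dom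
  · rw [← comp_tensor_comp (by simp) h, ident_comp ident_dom]
  · rw [comp_of_ne h, comp_of_ne (by simpa using h), tensor_undef]; rfl

@[simp] theorem comp_tensor_ident (f g : Diag M) (x : Word) :
    (f ⊳ g) ⊗ 𝟙 x = f ⊗ 𝟙 x ⊳ g ⊗ 𝟙 x := by
  by_cases h : f.cod = g.dom
  · rw [← comp_tensor_comp h (by simp), ident_comp ident_dom]
  · rw [comp_of_ne h, comp_of_ne (by simpa using h), undef_tensor]; rfl

theorem tensor_eq_left_comp_right (f g : Diag M) : f ⊗ g = f ⊗ 𝟙 g.dom ⊳ 𝟙 f.cod ⊗ g := by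
  rw [← comp_tensor_comp (by simp) (by simp), ident_comp rfl, comp_ident rfl]

theorem tensor_eq_right_comp_left (f g : Diag M) : f ⊗ g = 𝟙 f.dom ⊗ g ⊳ f ⊗ 𝟙 g.cod := by
  rw [← comp_tensor_comp (by simp) (by simp), ident_comp rfl, comp_ident rfl]

theorem comp_tensor {f g : Diag M} (f' : Diag M) (h : f.cod = g.dom) :
    (f ⊳ g) ⊗ f' = f ⊗ 𝟙 f'.dom ⊳ g ⊗ f' := by
  rw [← comp_tensor_comp h (by simp), ident_comp rfl]

theorem tensor_comp (f : Diag M) {g g' : Diag M} (h : g.cod = g'.dom) :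
    f ⊗ (g ⊳ g') = 𝟙 f.dom ⊗ g ⊳ f ⊗ g' := by
  rw [← comp_tensor_comp (by simp) h, ident_comp rfl]

theorem tensor_comp_right (f : Diag M) {g g' : Diag M} (h : g.cod = g'.dom) :
    f ⊗ (g ⊳ g') = f ⊗ g ⊳ 𝟙 f.cod ⊗ g' := by
  rw [← comp_tensor_comp (by simp) h, comp_ident rfl]

theorem comp_tensor_right {f g : Diag M} (f' : Diag M) (h : f.cod = g.dom) :
    (f ⊳ g) ⊗ f' = f ⊗ f' ⊳ g ⊗ 𝟙 f'.cod := by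
  rw [← comp_tensor_comp h (by simp), comp_ident rfl]

theorem swap_append_left (u v w : Word) :
    (swap (u ++ v) w : Diag M) = 𝟙 u ⊗ swap v w ⊳ swap u w ⊗ 𝟙 v := by
  have cancel_v : (𝟙 u ⊗ swap w v ⊳ 𝟙 u ⊗ swap v w : Diag M) = 𝟙 (u ++ w ++ v) := by
    rw [← ident_tensor_comp, swap_comp_swap]; simp
  have cancel_u : (swap w u ⊗ 𝟙 v ⊳ swap u w ⊗ 𝟙 v : Diag M) = 𝟙 (w ++ u ++ v) := by
    rw [← comp_tensor_ident, swap_comp_swap]; simp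
  have inverse : (swap w (u ++ v) ⊳ 𝟙 u ⊗ swap v w ⊳ swap u w ⊗ 𝟙 v : Diag M)
      = 𝟙 (w ++ (u ++ v)) := by
    rw [swap_append_right, comp_assoc, ← comp_assoc (𝟙 u ⊗ _), cancel_v, ident_comp (by simp),
      cancel_u, List.append_assoc]
  simpa [← comp_assoc] using (congrArg (swap (u ++ v) w ⊳ ·) inverse).symm

end Monoidal

section Swap

theorem whisker_exchange (f g : Diag M) :
    f ⊗ 𝟙 g.dom ⊳ 𝟙 f.cod ⊗ g = 𝟙 f.dom ⊗ g ⊳ f ⊗ 𝟙 g.cod :=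
  (tensor_eq_left_comp_right f g).symm.trans (tensor_eq_right_comp_left f g)

theorem tensor_ident_comp_swap (f : Diag M) (u : Word) :
    f ⊗ 𝟙 u ⊳ swap f.cod u = swap f.dom u ⊳ 𝟙 u ⊗ f := by
  simpa using tensor_comp_swap f (𝟙 u)

theorem ident_tensor_comp_swap (f : Diag M) (u : Word) :
    𝟙 u ⊗ f ⊳ swap u f.cod = swap u f.dom ⊳ f ⊗ 𝟙 u := by
  simpa using tensor_comp_swap (𝟙 u) f

theorem tensor_tensor_ident_comp_swap (f g : Diag M) (u : Word) :
    f ⊗ g ⊗ 𝟙 u ⊳ 𝟙 f.cod ⊗ swap g.cod u = 𝟙 f.dom ⊗ swap g.dom u ⊳ f ⊗ 𝟙 u ⊗ g := by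
  rw [← tensor_comp_right f (by simp), tensor_ident_comp_swap, tensor_comp f (by simp)]

@[simp] theorem swap_comp_swap_comp {u v : Word} {f : Diag M} (h : f.dom = u ++ v) :
    swap u v ⊳ swap v u ⊳ f = f := by
  rw [← comp_assoc, swap_comp_swap, ident_comp h]

@[simp] theorem ident_tensor_swap_comp_swap (x u v : Word) :
    (𝟙 x ⊗ swap u v ⊳ 𝟙 x ⊗ swap v u : Diag M) = 𝟙 (x ++ (u ++ v)) := by
  rw [← ident_tensor_comp, swap_comp_swap, ident_tensor_ident]

@[simp] theorem ident_tensor_swap_comp_swap_comp {x u v : Word} {f : Diag M}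
    (h : f.dom = x ++ (u ++ v)) : 𝟙 x ⊗ swap u v ⊳ 𝟙 x ⊗ swap v u ⊳ f = f := by
  rw [← comp_assoc, ident_tensor_swap_comp_swap, ident_comp h]

@[simp] theorem swap_tensor_ident_comp_swap (u v y : Word) :
    (swap u v ⊗ 𝟙 y ⊳ swap v u ⊗ 𝟙 y : Diag M) = 𝟙 (u ++ (v ++ y)) := by
  rw [← comp_tensor_ident, swap_comp_swap, ident_tensor_ident, List.append_assoc]

@[simp] theorem whiskered_swap_comp_swap (x u v y : Word) :
    (𝟙 x ⊗ swap u v ⊗ 𝟙 y ⊳ 𝟙 x ⊗ swap v u ⊗ 𝟙 y : Diag M) = 𝟙 (x ++ (u ++ (v ++ y))) := by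
  rw [← ident_tensor_comp, swap_tensor_ident_comp_swap, ident_tensor_ident]

@[simp] theorem whiskered_swap_comp_swap_comp {x u v y : Word} {f : Diag M}
    (h : f.dom = x ++ (u ++ (v ++ y))) :
    𝟙 x ⊗ swap u v ⊗ 𝟙 y ⊳ 𝟙 x ⊗ swap v u ⊗ 𝟙 y ⊳ f = f := by
  rw [← comp_assoc, whiskered_swap_comp_swap, ident_comp h]

theorem swap_cons_right (u : Word) (o : Obj) (w : Word) :
    (swap u (o :: w) : Diag M) = swap u [o] ⊗ 𝟙 w ⊳ 𝟙 [o] ⊗ swap u w :=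
  swap_append_right u [o] w

theorem swap_cons_left (o : Obj) (v w : Word) :
    (swap (o :: v) w : Diag M) = 𝟙 [o] ⊗ swap v w ⊳ swap [o] w ⊗ 𝟙 v :=
  swap_append_left [o] v w

theorem swap_middle (a b c d : Word) :
    (𝟙 a ⊗ swap c b ⊗ 𝟙 d ⊳ swap (a ++ b) (c ++ d) : Diag M) =
      swap a c ⊗ swap b d ⊳ 𝟙 c ⊗ swap a d ⊗ 𝟙 b := by
  rw [tensor_eq_left_comp_right (swap a c) (swap b d), swap_append_right (a ++ b),
    swap_append_left, swap_append_left]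
  simp

theorem ident_tensor_swap_comp_swap_tensor_ident (y a b k : Word) :
    𝟙 (y ++ a) ⊗ swap k b ⊳ swap y a ⊗ 𝟙 (b ++ k) ⊳ 𝟙 a ⊗ swap (y ++ b) k =
      (swap y (a ++ k) ⊗ 𝟙 b : Diag M) := by
  have slide := whisker_exchange (M := M) (swap y a) (swap k b)
  simpa [swap_append_left y, swap_append_right y] using
    congrArg (· ⊳ 𝟙 a ⊗ swap (y ++ b) k) slide.symm

end Swap

section Generators

/-- The generator `Syn.player0`. -/
abbrev player0 : Diag M := of Syn.player0

/-- The generator `Syn.lose0`. -/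
abbrev lose0 : Diag M := of Syn.lose0

/-- The generator `Syn.player1`. -/
abbrev player1 : Diag M := of Syn.player1

/-- The generator `Syn.lose1`. -/
abbrev lose1 : Diag M := of Syn.lose1

/-- The generator `Syn.merge`. -/
abbrev merge : Diag M := of Syn.merge

/-- The generator `Syn.start`. -/
abbrev start : Diag M := of Syn.start

/-- The generator `Syn.priority p`. -/
abbrev priority (p : Fin (M + 1)) : Diag M := of (Syn.priority p)

/-- The generator `Syn.cup`. -/
abbrev cup : Diag M := of Syn.cup

/-- The generator `Syn.cap`. -/
abbrev cap : Diag M := of Syn.cap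

theorem eq_of_pgaEq {u w : Word} {d e : Syn M u w} {f g : Diag M} (h : PGAeq d e)
    (hf : f = of d := by rfl) (hg : g = of e := by rfl) : f = g := by
  rw [hf, hg, of_eq_of]; exact h

theorem merge_assoc : merge ⊗ 𝟙 [▶] ⊳ merge = (𝟙 [▶] ⊗ merge ⊳ merge : Diag M) :=
  eq_of_pgaEq .B1

theorem swap_comp_merge : swap [▶] [▶] ⊳ merge = (merge : Diag M) := eq_of_pgaEq .B2

theorem start_tensor_comp_merge : start ⊗ 𝟙 [▶] ⊳ merge = (𝟙 [▶] : Diag M) := eq_of_pgaEq .B3l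

theorem tensor_start_comp_merge : 𝟙 [▶] ⊗ start ⊳ merge = (𝟙 [▶] : Diag M) := eq_of_pgaEq .B3r

end Generators

section IsRight

/-- Words in the single letter `▶`. -/
def IsRight (w : Word) : Prop := ∀ o ∈ w, o = ▶

@[simp] theorem isRight_nil : IsRight [] := by simp [IsRight]

@[simp] theorem isRight_cons {o : Obj} {w : Word} : IsRight (o :: w) ↔ o = ▶ ∧ IsRight w :=
  List.forall_mem_cons

@[simp] theorem isRight_append {u v : Word} : IsRight (u ++ v) ↔ IsRight u ∧ IsRight v :=
  List.forall_mem_append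

@[simp] theorem isRight_rword (k : ℕ) : IsRight (rword k) := fun _ => List.eq_of_mem_replicate

theorem IsRight.eq_rword {w : Word} (h : IsRight w) : w = rword w.length :=
  List.eq_replicate_of_mem h

end IsRight

section IsAcyclic

/-- Classes of acyclic diagrams. -/
def IsAcyclic (f : Diag M) : Prop := ∃ (u w : Word) (d : Syn M u w), Acyclic d ∧ f = of d

namespace IsAcyclic

variable {f g : Diag M} {u w : Word}

theorem of {d : Syn M u w} (h : Acyclic d) : IsAcyclic (of d) := ⟨u, w, d, h, rfl⟩

theorem comp (hf : IsAcyclic f) (hg : IsAcyclic g) (h : f.cod = g.dom) : IsAcyclic (f ⊳ g) := by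
  obtain ⟨u, v, d, hd, rfl⟩ := hf
  obtain ⟨v', w, e, he, rfl⟩ := hg
  rw [of_cod, of_dom] at h
  subst h
  exact of_comp_of d e ▸ .of (hd.comp he)

theorem tensor (hf : IsAcyclic f) (hg : IsAcyclic g) : IsAcyclic (f ⊗ g) := by
  obtain ⟨u, v, d, hd, rfl⟩ := hf
  obtain ⟨u', v', e, he, rfl⟩ := hg
  exact of_tensor_of d e ▸ .of (hd.tensor he)

theorem ident (h : IsRight w) : IsAcyclic (𝟙 w : Diag M) := by
  rw [h.eq_rword]; exact .of (.id _)

theorem swap (hu : IsRight u) (hw : IsRight w) : IsAcyclic (swap u w : Diag M) := by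
  rw [hu.eq_rword, hw.eq_rword]; exact .of (.symm _ _)

theorem isRight (hf : IsAcyclic f) : IsRight f.dom ∧ IsRight f.cod := by
  obtain ⟨u, w, d, hd, rfl⟩ := hf
  rw [of_dom, of_cod]
  induction hd with
  | id | symm => simp
  | comp _ _ ihf ihg => exact ⟨ihf.1, ihg.2⟩
  | tensor _ _ ihf ihg => simp [ihf, ihg]
  | _ => simp

theorem whisker (hf : IsAcyclic f) (hu : IsRight u) (hw : IsRight w) :
    IsAcyclic (𝟙 u ⊗ f ⊗ 𝟙 w) :=
  (ident hu).tensor (hf.tensor (ident hw))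

@[elab_as_elim]
theorem induction {P : (f : Diag M) → IsAcyclic f → Prop}
    (ident : ∀ u (hu : IsRight u), P (𝟙 u) (.ident hu))
    (swap : ∀ u v (hu : IsRight u) (hv : IsRight v), P (Diag.swap u v) (.swap hu hv))
    (comp : ∀ f g (hf : IsAcyclic f) (hg : IsAcyclic g) (h : f.cod = g.dom),
      P f hf → P g hg → P (f ⊳ g) (hf.comp hg h))
    (tensor : ∀ f g (hf : IsAcyclic f) (hg : IsAcyclic g),
      P f hf → P g hg → P (f ⊗ g) (hf.tensor hg))
    (player0 : P player0 (.of .player0)) (lose0 : P lose0 (.of .lose0))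
    (player1 : P player1 (.of .player1)) (lose1 : P lose1 (.of .lose1))
    (merge : P merge (.of .merge)) (start : P start (.of .start))
    (priority : ∀ p, P (priority p) (.of (.priority p)))
    (f : Diag M) (hf : IsAcyclic f) : P f hf := by
  suffices ∃ h, P f h from this.choose_spec
  obtain ⟨u, w, d, hd, rfl⟩ := hf
  induction hd with
  | id k => exact ⟨_, ident _ (isRight_rword k)⟩
  | symm k j => exact ⟨_, swap _ _ (isRight_rword k) (isRight_rword j)⟩
  | comp _ _ ihf ihg =>
    obtain ⟨hf, ihf⟩ := ihf
    obtain ⟨hg, ihg⟩ := ihg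
    exact of_comp_of (M := M) _ _ ▸ ⟨_, comp _ _ hf hg rfl ihf ihg⟩
  | tensor _ _ ihf ihg =>
    obtain ⟨hf, ihf⟩ := ihf
    obtain ⟨hg, ihg⟩ := ihg
    exact of_tensor_of (M := M) _ _ ▸ ⟨_, tensor _ _ hf hg ihf ihg⟩
  | player0 => exact ⟨_, player0⟩
  | lose0 => exact ⟨_, lose0⟩
  | player1 => exact ⟨_, player1⟩
  | lose1 => exact ⟨_, lose1⟩
  | merge => exact ⟨_, merge⟩
  | start => exact ⟨_, start⟩
  | priority p => exact ⟨_, priority p⟩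

end IsAcyclic

end IsAcyclic

section Trace

/-- The cap `▶◀ → ε`, which closes a loop opened by `cup`. -/
def capSwap : Diag M := swap [▶] [◀] ⊳ cap

@[simp] theorem capSwap_dom : (capSwap : Diag M).dom = [▶, ◀] := (rfl)
@[simp] theorem capSwap_cod : (capSwap : Diag M).cod = [] := (rfl)

/-- The trace `u → w` of `F : u▶ → w▶`: its last output is fed back to its last input. -/
def trace (u w : Word) (F : Diag M) : Diag M :=
  𝟙 u ⊗ cup ⊳ F ⊗ 𝟙 [◀] ⊳ 𝟙 w ⊗ capSwap

variable {u w : Word} {F g : Diag M}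

@[simp] theorem trace_dom : (trace u w F).dom = u := by simp [trace]
@[simp] theorem trace_cod : (trace u w F).cod = w := by simp [trace]

theorem trace_comp_right (h : g.dom = w) : trace u g.cod (F ⊳ g ⊗ 𝟙 [▶]) = trace u w F ⊳ g := by
  subst h
  simpa [trace] using congrArg (fun t => 𝟙 u ⊗ cup ⊳ F ⊗ 𝟙 [◀] ⊳ t) (whisker_exchange g capSwap)

theorem trace_comp_left (h : g.cod = u) : trace g.dom w (g ⊗ 𝟙 [▶] ⊳ F) = g ⊳ trace u w F := by
  subst h
  simpa [trace] using
    congrArg (fun t => t ⊳ F ⊗ 𝟙 [◀] ⊳ 𝟙 w ⊗ capSwap) (whisker_exchange g cup).symm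

theorem ident_tensor_trace (x : Word) : 𝟙 x ⊗ trace u w F = trace (x ++ u) (x ++ w) (𝟙 x ⊗ F) := by
  simp [trace]

theorem cup_zigzag : cup ⊗ 𝟙 [▶] ⊳ 𝟙 [▶] ⊗ cap = (𝟙 [▶] : Diag M) := eq_of_pgaEq .yank_r

theorem trace_swap : trace [▶] [▶] (swap [▶] [▶]) = (𝟙 [▶] : Diag M) :=
  calc 𝟙 [▶] ⊗ cup ⊳ swap [▶] [▶] ⊗ 𝟙 [◀] ⊳ 𝟙 [▶] ⊗ capSwap
      = cup ⊗ 𝟙 [▶] ⊳ swap [▶, ◀] [▶] ⊳ swap [▶] [▶] ⊗ 𝟙 [◀] ⊳ 𝟙 [▶] ⊗ capSwap := by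
        simpa using congrArg (fun t => t ⊳ swap [▶] [▶] ⊗ 𝟙 [◀] ⊳ 𝟙 [▶] ⊗ capSwap)
          (tensor_ident_comp_swap cup [▶]).symm
    _ = cup ⊗ 𝟙 [▶] ⊳ swap [▶, ◀] [▶] ⊳ swap [▶] [▶, ◀] ⊳ 𝟙 [▶] ⊗ cap := by
        simpa [capSwap] using congrArg (fun t => cup ⊗ 𝟙 [▶] ⊳ swap [▶, ◀] [▶] ⊳ t ⊳ 𝟙 [▶] ⊗ cap)
          (swap_append_right [▶] [▶] [◀]).symm
    _ = cup ⊗ 𝟙 [▶] ⊳ 𝟙 [▶] ⊗ cap := by simp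
    _ = 𝟙 [▶] := cup_zigzag

theorem trace_tensor_ident {u w : Word} {F : Diag M} (y : Word) (hd : F.dom = u ++ [▶])
    (hc : F.cod = w ++ [▶]) :
    trace (u ++ y) (w ++ y) (𝟙 u ⊗ swap y [▶] ⊳ F ⊗ 𝟙 y ⊳ 𝟙 w ⊗ swap [▶] y) =
      trace u w F ⊗ 𝟙 y := by
  have open_loop : 𝟙 y ⊗ cup ⊳ swap y [▶] ⊗ 𝟙 [◀] =
      (cup ⊗ 𝟙 y ⊳ 𝟙 [▶] ⊗ swap [◀] y : Diag M) := by
    have slide := congrArg (· ⊳ 𝟙 [▶] ⊗ swap [◀] y) (ident_tensor_comp_swap (M := M) cup y)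
    simpa [swap_cons_right y ▶ [◀]] using slide
  have close_loop : 𝟙 [▶] ⊗ swap [◀] y ⊳ swap [▶] y ⊗ 𝟙 [◀] ⊳ 𝟙 y ⊗ capSwap =
      (capSwap ⊗ 𝟙 y : Diag M) := by
    simpa [swap_cons_left ▶ [◀] y] using (tensor_ident_comp_swap (M := M) capSwap y).symm
  calc 𝟙 (u ++ y) ⊗ cup ⊳ (𝟙 u ⊗ swap y [▶] ⊳ F ⊗ 𝟙 y ⊳ 𝟙 w ⊗ swap [▶] y) ⊗ 𝟙 [◀] ⊳
        𝟙 (w ++ y) ⊗ capSwap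
      = 𝟙 u ⊗ cup ⊗ 𝟙 y ⊳ 𝟙 (u ++ [▶]) ⊗ swap [◀] y ⊳ F ⊗ 𝟙 (y ++ [◀]) ⊳
          𝟙 w ⊗ swap [▶] y ⊗ 𝟙 [◀] ⊳ 𝟙 (w ++ y) ⊗ capSwap := by
        simpa using congrArg (fun t => 𝟙 u ⊗ t ⊳ F ⊗ 𝟙 (y ++ [◀]) ⊳
          𝟙 w ⊗ swap [▶] y ⊗ 𝟙 [◀] ⊳ 𝟙 (w ++ y) ⊗ capSwap) open_loop
    _ = 𝟙 u ⊗ cup ⊗ 𝟙 y ⊳ F ⊗ 𝟙 (◀ :: y) ⊳ 𝟙 (w ++ [▶]) ⊗ swap [◀] y ⊳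
          𝟙 w ⊗ swap [▶] y ⊗ 𝟙 [◀] ⊳ 𝟙 (w ++ y) ⊗ capSwap := by
        simpa [hd, hc] using congrArg (fun t => 𝟙 u ⊗ cup ⊗ 𝟙 y ⊳ t ⊳
          𝟙 w ⊗ swap [▶] y ⊗ 𝟙 [◀] ⊳ 𝟙 (w ++ y) ⊗ capSwap)
          (whisker_exchange F (swap [◀] y)).symm
    _ = 𝟙 u ⊗ cup ⊗ 𝟙 y ⊳ F ⊗ 𝟙 (◀ :: y) ⊳ 𝟙 w ⊗ capSwap ⊗ 𝟙 y := by
        simpa using congrArg (fun t => 𝟙 u ⊗ cup ⊗ 𝟙 y ⊳ F ⊗ 𝟙 (◀ :: y) ⊳ 𝟙 w ⊗ t) close_loop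
    _ = trace u w F ⊗ 𝟙 y := by simp [trace]

theorem trace_swap_append (z : Word) :
    trace (▶ :: z) (▶ :: z) (swap (▶ :: z) [▶] ⊳ 𝟙 [▶] ⊗ swap [▶] z) = (𝟙 (▶ :: z) : Diag M) := by
  have superpose := trace_tensor_ident (M := M) (u := [▶]) (w := [▶]) (F := swap [▶] [▶]) z rfl rfl
  rw [trace_swap] at superpose
  simpa [swap_cons_left ▶ z] using superpose

/-- The class of acyclic diagrams is closed under `trace`. -/
def AcyclicTraces (M : ℕ) : Prop :=
  ∀ (u w : Word) (F : Diag M), IsAcyclic F → F.dom = u ++ [▶] → F.cod = w ++ [▶] →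
    IsAcyclic (trace u w F)

end Trace

section Straighten

/-- The word obtained from `w` by erasing every `◀`. -/
def posPart : Word → Word
  | [] => []
  | ▶ :: w => ▶ :: posPart w
  | ◀ :: w => posPart w

/-- The word obtained from `w` by erasing every `▶` and turning every `◀` into `▶`. -/
def negPart : Word → Word
  | [] => []
  | ▶ :: w => negPart w
  | ◀ :: w => ▶ :: negPart w

/-- The diagram `w ++ negPart w → posPart w` that caps each `◀` of `w` with the matching wire of
`negPart w`. -/
def straighten : Word → Diag M
  | [] => 𝟙 []
  | ▶ :: w => 𝟙 [▶] ⊗ straighten w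
  | ◀ :: w =>
    𝟙 [◀] ⊗ swap w [▶] ⊗ 𝟙 (negPart w) ⊳ cap ⊗ 𝟙 (w ++ negPart w) ⊳ straighten w

@[simp] theorem posPart_append (x y : Word) : posPart (x ++ y) = posPart x ++ posPart y := by
  induction x using posPart.induct <;> simp_all [posPart]

@[simp] theorem negPart_append (x y : Word) : negPart (x ++ y) = negPart x ++ negPart y := by
  induction x using negPart.induct <;> simp_all [negPart]

@[simp] theorem isRight_posPart (w : Word) : IsRight (posPart w) := by
  induction w using posPart.induct <;> simp_all [posPart]

@[simp] theorem isRight_negPart (w : Word) : IsRight (negPart w) := by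
  induction w using negPart.induct <;> simp_all [negPart]

@[simp] theorem straighten_dom (w : Word) : (straighten w : Diag M).dom = w ++ negPart w := by
  induction w using negPart.induct <;> simp_all [straighten, negPart]

@[simp] theorem straighten_cod (w : Word) : (straighten w : Diag M).cod = posPart w := by
  induction w using posPart.induct <;> simp_all [straighten, posPart]

theorem straighten_append (x y : Word) :
    (straighten (x ++ y) : Diag M) =
      𝟙 x ⊗ swap y (negPart x) ⊗ 𝟙 (negPart y) ⊳ straighten x ⊗ straighten y := by
  induction x using negPart.induct with
  | case1 => simp [straighten, negPart]
  | case2 x ih => simp [straighten, negPart, ih]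
  | case3 x ih =>
    have slide := whisker_exchange (M := M) (𝟙 [◀] ⊗ swap x [▶] ⊳ cap ⊗ 𝟙 x)
      (swap y (negPart x) ⊗ 𝟙 (negPart y))
    have split : straighten (◀ :: x) ⊗ straighten y =
        (𝟙 [◀] ⊗ swap x [▶] ⊗ 𝟙 (negPart x ++ (y ++ negPart y)) ⊳
          cap ⊗ 𝟙 (x ++ (negPart x ++ (y ++ negPart y))) ⊳
          straighten x ⊗ straighten y : Diag M) := by
      simpa [straighten] using comp_tensor (M := M)
        (f := 𝟙 [◀] ⊗ swap x [▶] ⊗ 𝟙 (negPart x) ⊳ cap ⊗ 𝟙 (x ++ negPart x))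
        (g := straighten x) (straighten y) (by simp)
    rw [split]
    simpa [straighten, negPart, ih, swap_append_left x y, swap_cons_right y ▶ (negPart x)] using
      congrArg (fun t => 𝟙 (◀ :: x) ⊗ swap y [▶] ⊗ 𝟙 (negPart x ++ negPart y) ⊳ t ⊳
        straighten x ⊗ straighten y) slide

variable {w : Word}

theorem IsRight.posPart_eq (h : IsRight w) : posPart w = w := by
  induction w using posPart.induct <;> simp_all [posPart]

theorem IsRight.negPart_eq (h : IsRight w) : negPart w = [] := by
  induction w using negPart.induct <;> simp_all [negPart]

theorem IsRight.straighten_eq (h : IsRight w) : (straighten w : Diag M) = 𝟙 w := by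
  induction w using posPart.induct <;> simp_all [straighten]

end Straighten

section Bend

variable {g : Diag M}

/-- `f` with each output `◀` bent around into an input `▶`. -/
def bend (f : Diag M) : Diag M := f ⊗ 𝟙 (negPart f.cod) ⊳ straighten f.cod

@[simp] theorem bend_dom : (bend g).dom = g.dom ++ negPart g.cod := by simp [bend]
@[simp] theorem bend_cod : (bend g).cod = posPart g.cod := by simp [bend]

theorem bend_ident_tensor (x : Word) : bend (𝟙 x ⊗ g) =
    𝟙 x ⊗ swap g.dom (negPart x) ⊗ 𝟙 (negPart g.cod) ⊳ straighten x ⊗ bend g := by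
  have slide := tensor_ident_comp_swap g (negPart x)
  have split := tensor_comp (straighten x) (g := g ⊗ 𝟙 (negPart g.cod)) (g' := straighten g.cod)
    (by simp)
  rw [bend, bend, split]
  simpa [straighten_append] using congrArg
    (fun t => 𝟙 x ⊗ t ⊗ 𝟙 (negPart g.cod) ⊳ straighten x ⊗ straighten g.cod) slide

theorem bend_tensor_ident (y : Word) : bend (g ⊗ 𝟙 y) =
    𝟙 g.dom ⊗ swap y (negPart g.cod) ⊗ 𝟙 (negPart y) ⊳ bend g ⊗ straighten y := by
  have slide := whisker_exchange g (swap y (negPart g.cod) ⊗ 𝟙 (negPart y))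
  have split := comp_tensor (f := g ⊗ 𝟙 (negPart g.cod)) (g := straighten g.cod)
    (straighten y) (by simp)
  rw [bend, bend, split]
  simpa [straighten_append] using
    congrArg (fun t => t ⊳ straighten g.cod ⊗ straighten y) slide

theorem bend_comp (f : Diag M) : bend (f ⊳ g) = f ⊗ 𝟙 (negPart g.cod) ⊳ bend g := by
  simp [bend]

/-- `bend g` is `straighten g.dom`, with `k` further wires passing by, composed on either side with
acyclic diagrams. -/
structure BendFactorization (g : Diag M) (k : Word) (A B : Diag M) : Prop where
  isRight : IsRight k
  isAcyclic_left : IsAcyclic A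
  isAcyclic_right : IsAcyclic B
  left_dom : A.dom = negPart g.cod
  left_cod : A.cod = negPart g.dom ++ k
  right_dom : B.dom = posPart g.dom ++ k
  bend_eq : bend g = 𝟙 g.dom ⊗ A ⊳ straighten g.dom ⊗ 𝟙 k ⊳ B

namespace BendFactorization

variable {k : Word} {A B : Diag M}

theorem ident_tensor (h : BendFactorization g k A B) (x : Word) :
    BendFactorization (𝟙 x ⊗ g) k (𝟙 (negPart x) ⊗ A) (𝟙 (posPart x) ⊗ B) where
  isRight := h.isRight
  isAcyclic_left := (IsAcyclic.ident (isRight_negPart x)).tensor h.isAcyclic_left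
  isAcyclic_right := (IsAcyclic.ident (isRight_posPart x)).tensor h.isAcyclic_right
  left_dom := by simp [h.left_dom]
  left_cod := by simp [h.left_cod]
  right_dom := by simp [h.right_dom]
  bend_eq := by
    have slide := whisker_exchange (swap g.dom (negPart x)) A
    have split : straighten x ⊗ bend g = 𝟙 (x ++ (negPart x ++ g.dom)) ⊗ A ⊳
        straighten x ⊗ straighten g.dom ⊗ 𝟙 k ⊳ 𝟙 (posPart x) ⊗ B := by
      rw [h.bend_eq, tensor_comp _ (by simp [h.left_cod]),
        tensor_comp_right _ (by simp [h.right_dom])]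
      simp
    rw [bend_ident_tensor, split]
    simpa [straighten_append, h.left_dom, h.left_cod] using congrArg
      (fun t => 𝟙 x ⊗ t ⊳ straighten x ⊗ straighten g.dom ⊗ 𝟙 k ⊳ 𝟙 (posPart x) ⊗ B) slide

theorem bend_tensor_ident_eq (h : BendFactorization g k A B) (y : Word) : bend (g ⊗ 𝟙 y) =
    𝟙 (g.dom ++ y) ⊗ A ⊗ 𝟙 (negPart y) ⊳
      𝟙 g.dom ⊗ swap y (negPart g.dom ++ k) ⊗ 𝟙 (negPart y) ⊳
      straighten g.dom ⊗ 𝟙 k ⊗ straighten y ⊳ B ⊗ 𝟙 (posPart y) := by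
  have split : bend g ⊗ straighten y = 𝟙 g.dom ⊗ A ⊗ 𝟙 (y ++ negPart y) ⊳
      straighten g.dom ⊗ 𝟙 k ⊗ straighten y ⊳ B ⊗ 𝟙 (posPart y) := by
    rw [h.bend_eq, comp_tensor _ (by simp [h.left_cod]), ← comp_ident (straighten_cod y),
      comp_tensor_comp (by simp [h.right_dom]) (by simp)]
    simp
  have slide : 𝟙 y ⊗ A ⊳ swap y (negPart g.dom) ⊗ 𝟙 k ⊳ 𝟙 (negPart g.dom) ⊗ swap y k =
      swap y (negPart g.cod) ⊳ A ⊗ 𝟙 y := by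
    simpa [h.left_dom, h.left_cod, swap_append_right] using ident_tensor_comp_swap A y
  calc bend (g ⊗ 𝟙 y)
      = 𝟙 g.dom ⊗ (swap y (negPart g.cod) ⊳ A ⊗ 𝟙 y) ⊗ 𝟙 (negPart y) ⊳
          straighten g.dom ⊗ 𝟙 k ⊗ straighten y ⊳ B ⊗ 𝟙 (posPart y) := by
        simp [bend_tensor_ident, split]
    _ = _ := by simp [← slide, swap_append_right y]

theorem tensor_ident (h : BendFactorization g k A B) (y : Word) :
    BendFactorization (g ⊗ 𝟙 y) k (A ⊗ 𝟙 (negPart y) ⊳ 𝟙 (negPart g.dom) ⊗ swap k (negPart y))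
      (𝟙 (posPart g.dom) ⊗ swap (posPart y) k ⊳ B ⊗ 𝟙 (posPart y)) where
  isRight := h.isRight
  isAcyclic_left := by
    refine .comp (.tensor h.isAcyclic_left (.ident (by simp))) (.tensor (.ident (by simp)) ?_) ?_
    · exact .swap h.isRight (by simp)
    · simp [h.left_cod]
  isAcyclic_right := by
    refine .comp (.tensor (.ident (by simp)) (.swap (by simp) h.isRight))
      (.tensor h.isAcyclic_right (.ident (by simp))) ?_
    simp [h.right_dom]
  left_dom := by simp [h.left_dom]
  left_cod := by simp
  right_dom := by simp
  bend_eq := by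
    rw [h.bend_tensor_ident_eq, ← ident_tensor_swap_comp_swap_tensor_ident]
    simpa [straighten_append] using congrArg (fun t => 𝟙 (g.dom ++ y) ⊗ A ⊗ 𝟙 (negPart y) ⊳
        𝟙 (g.dom ++ (y ++ negPart g.dom)) ⊗ swap k (negPart y) ⊳
        𝟙 g.dom ⊗ swap y (negPart g.dom) ⊗ 𝟙 (negPart y ++ k) ⊳ t ⊳ B ⊗ 𝟙 (posPart y))
      (tensor_tensor_ident_comp_swap (M := M) (straighten g.dom) (straighten y) k).symm

end BendFactorization

end Bend

section BendFactorizations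

variable {f g : Diag M} {k y : Word} {A B : Diag M}

/-- Composition with `g` preserves acyclicity of the bent diagram. -/
def PreservesAcyclicBend (g : Diag M) : Prop :=
  ∀ f : Diag M, IsRight f.dom → f.cod = g.dom → IsAcyclic (bend f) → IsAcyclic (bend (f ⊳ g))

theorem PreservesAcyclicBend.comp (hf : PreservesAcyclicBend f) (hg : PreservesAcyclicBend g)
    (h : f.cod = g.dom) : PreservesAcyclicBend (f ⊳ g) := fun e he hef hb =>
  comp_assoc e f g ▸ hg (e ⊳ f) he h (hf e he hef hb)

theorem bend_eq_self (h : IsRight g.cod) : bend g = g := by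
  simp [bend, h.negPart_eq, h.straighten_eq]

namespace BendFactorization

theorem preservesAcyclicBend (h : BendFactorization g k A B) : PreservesAcyclicBend g := by
  intro f hf hfg hb
  have factor : bend (f ⊳ g) = 𝟙 f.dom ⊗ A ⊳ bend f ⊗ 𝟙 k ⊳ B := by
    have slide := congrArg (· ⊳ straighten g.dom ⊗ 𝟙 k ⊳ B) (whisker_exchange f A)
    rw [bend_comp, h.bend_eq, bend]
    simpa [hfg, h.left_dom, h.left_cod] using slide
  rw [factor]
  refine (IsAcyclic.ident hf).tensor h.isAcyclic_left |>.comp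
    ((hb.tensor (.ident h.isRight)).comp h.isAcyclic_right ?_) ?_
  · simp [hfg, h.right_dom]
  · simp [hfg, h.left_cod]

theorem of_isAcyclic (h : IsAcyclic g) : BendFactorization g [] (𝟙 []) g where
  isRight := isRight_nil
  isAcyclic_left := .ident isRight_nil
  isAcyclic_right := h
  left_dom := by simp [h.isRight.2.negPart_eq]
  left_cod := by simp [h.isRight.1.negPart_eq]
  right_dom := by simp [h.isRight.1.posPart_eq]
  bend_eq := by simp [bend_eq_self h.isRight.2, h.isRight.1.straighten_eq]

theorem cup : BendFactorization (cup : Diag M) [▶] (𝟙 [▶]) (𝟙 [▶]) where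
  isRight := by simp
  isAcyclic_left := .ident (by simp)
  isAcyclic_right := .ident (by simp)
  left_dom := by simp [negPart]
  left_cod := by simp [negPart]
  right_dom := by simp [posPart]
  bend_eq := by simp [bend, straighten, negPart, cup_zigzag]

theorem swap (x y : Word) : BendFactorization (swap x y : Diag M) []
    (swap (negPart y) (negPart x)) (swap (posPart x) (posPart y)) where
  isRight := isRight_nil
  isAcyclic_left := .swap (by simp) (by simp)
  isAcyclic_right := .swap (by simp) (by simp)
  left_dom := by simp
  left_cod := by simp
  right_dom := by simp
  bend_eq := by
    have slide := tensor_comp_swap (M := M) (straighten x) (straighten y)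
    have middle := swap_middle (M := M) x (negPart x) y (negPart y)
    rw [tensor_eq_right_comp_left (Diag.swap x y)] at middle
    have crossing := congrArg
      (fun t => 𝟙 (x ++ y) ⊗ Diag.swap (negPart y) (negPart x) ⊳ t ⊳ straighten y ⊗ straighten x)
      middle
    simp only [straighten_dom, straighten_cod] at slide
    simpa [bend, straighten_append, slide] using crossing.symm

end BendFactorization

theorem swap_comp_bend_comp_swap (h : f.cod = ◀ :: ▶ :: y) :
    𝟙 f.dom ⊗ swap (negPart y) [▶] ⊳ bend f ⊳ swap [▶] (posPart y) =
      (f ⊗ 𝟙 (negPart y)) ⊗ 𝟙 [▶] ⊳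
        𝟙 [◀] ⊗ (swap (▶ :: (y ++ negPart y)) [▶] ⊳ 𝟙 [▶] ⊗ swap [▶] (y ++ negPart y)) ⊳
        (cap ⊗ 𝟙 (y ++ negPart y) ⊳ straighten y) ⊗ 𝟙 [▶] := by
  let z := y ++ negPart y
  have slide_f := whisker_exchange f (swap (negPart y) [▶])
  have slide_cap := whisker_exchange (M := M) cap (swap [▶] z)
  have slide_straighten := ident_tensor_comp_swap (M := M) (straighten y) [▶]
  simp only [straighten_dom, straighten_cod] at slide_straighten
  have split_swap : swap (▶ :: z) [▶] = 𝟙 (▶ :: y) ⊗ swap (negPart y) [▶] ⊳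
      (swap (▶ :: y) [▶] ⊗ 𝟙 (negPart y) : Diag M) := swap_append_left (▶ :: y) (negPart y) [▶]
  calc 𝟙 f.dom ⊗ swap (negPart y) [▶] ⊳ bend f ⊳ swap [▶] (posPart y)
      = (𝟙 f.dom ⊗ swap (negPart y) [▶] ⊳ f ⊗ 𝟙 (▶ :: negPart y)) ⊳
          𝟙 [◀] ⊗ swap (▶ :: y) [▶] ⊗ 𝟙 (negPart y) ⊳ cap ⊗ 𝟙 (▶ :: z) ⊳
          𝟙 [▶] ⊗ straighten y ⊳ swap [▶] (posPart y) := by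
        simp [bend, h, straighten, negPart, z]
    _ = f ⊗ 𝟙 (negPart y ++ [▶]) ⊳ 𝟙 [◀] ⊗ swap (▶ :: z) [▶] ⊳ (cap ⊗ 𝟙 (▶ :: z) ⊳
          swap [▶] z) ⊳ straighten y ⊗ 𝟙 [▶] := by
        rw [slide_straighten, split_swap]
        simpa [h, z] using congrArg
          (fun t => t ⊳ 𝟙 [◀] ⊗ swap (▶ :: y) [▶] ⊗ 𝟙 (negPart y) ⊳ cap ⊗ 𝟙 (▶ :: z) ⊳
            swap [▶] z ⊳ straighten y ⊗ 𝟙 [▶]) slide_f.symm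
    _ = _ := by
        simpa [z] using congrArg (fun t => f ⊗ 𝟙 (negPart y ++ [▶]) ⊳
          𝟙 [◀] ⊗ swap (▶ :: z) [▶] ⊳ t ⊳ straighten y ⊗ 𝟙 [▶]) slide_cap

theorem bend_comp_cap_tensor_ident (h : f.cod = ◀ :: ▶ :: y) :
    bend (f ⊳ cap ⊗ 𝟙 y) = trace (f.dom ++ negPart y) (posPart y)
      (𝟙 f.dom ⊗ swap (negPart y) [▶] ⊳ bend f ⊳ swap [▶] (posPart y)) := by
  let z := y ++ negPart y
  let loop : Diag M := swap (▶ :: z) [▶] ⊳ 𝟙 [▶] ⊗ swap [▶] z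
  have outer := trace_comp_left (F := 𝟙 [◀] ⊗ loop ⊳ (cap ⊗ 𝟙 z ⊳ straighten y) ⊗ 𝟙 [▶])
    (g := f ⊗ 𝟙 (negPart y)) (u := ◀ :: ▶ :: z) (w := posPart y) (by simp [h, z])
  have inner := trace_comp_right (M := M) (F := 𝟙 [◀] ⊗ loop)
    (g := cap ⊗ 𝟙 z ⊳ straighten y) (u := ◀ :: ▶ :: z) (w := ◀ :: ▶ :: z) (by simp)
  simp only [comp_cod, straighten_cod] at inner
  rw [inner] at outer
  calc bend (f ⊳ cap ⊗ 𝟙 y)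
      = f ⊗ 𝟙 (negPart y) ⊳ 𝟙 [◀] ⊗ trace (▶ :: z) (▶ :: z) loop ⊳
          cap ⊗ 𝟙 z ⊳ straighten y := by simp [bend, z, loop, trace_swap_append]
    _ = trace (f.dom ++ negPart y) (posPart y) ((f ⊗ 𝟙 (negPart y)) ⊗ 𝟙 [▶] ⊳ 𝟙 [◀] ⊗ loop ⊳
          (cap ⊗ 𝟙 z ⊳ straighten y) ⊗ 𝟙 [▶]) := by
        simpa [ident_tensor_trace] using outer.symm
    _ = _ := by rw [swap_comp_bend_comp_swap h]

theorem preservesAcyclicBend_cap (htr : AcyclicTraces M) (y : Word) :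
    PreservesAcyclicBend (cap ⊗ 𝟙 y : Diag M) := by
  intro f hf hfg hb
  change f.cod = ◀ :: ▶ :: y at hfg
  rw [bend_comp_cap_tensor_ident hfg]
  refine htr _ _ _ (.comp (.tensor (.ident hf) (.swap (by simp) (by simp)))
    (hb.comp (.swap (by simp) (by simp)) ?_) ?_) ?_ ?_
  all_goals simp [hfg, posPart, negPart]

theorem preservesAcyclicBend_whisker (htr : AcyclicTraces M) {u w : Word} (d : Syn M u w)
    (x y : Word) : PreservesAcyclicBend (𝟙 x ⊗ of d ⊗ 𝟙 y) := by
  have generator {u w : Word} {d : Syn M u w} (h : Acyclic d) (x y : Word) :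
      PreservesAcyclicBend (𝟙 x ⊗ of d ⊗ 𝟙 y) :=
    ((BendFactorization.of_isAcyclic (.of h)).tensor_ident y).ident_tensor x
      |>.preservesAcyclicBend
  induction d generalizing x y with
  | id v =>
    intro f _ hfv hb
    rwa [show (of (.id v) : Diag M) = 𝟙 v from rfl, ident_tensor_ident, ident_tensor_ident,
      comp_ident (by simpa using hfv)]
  | comp f g ihf ihg =>
    rw [← of_comp_of, comp_tensor_ident, ident_tensor_comp]
    exact (ihf x y).comp (ihg x y) (by simp)
  | @tensor u w u' w' f g ihf ihg =>
    have split : 𝟙 x ⊗ of (f ⊠ g) ⊗ 𝟙 y =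
        𝟙 x ⊗ of f ⊗ 𝟙 (u' ++ y) ⊳ 𝟙 (x ++ w) ⊗ of g ⊗ 𝟙 y := by
      simp [← of_tensor_of, tensor_eq_left_comp_right (of f) (of g)]
    rw [split]
    exact (ihf x (u' ++ y)).comp (ihg (x ++ w) y) (by simp)
  | symm v w =>
    exact ((BendFactorization.swap v w).tensor_ident y).ident_tensor x |>.preservesAcyclicBend
  | cup => exact (BendFactorization.cup.tensor_ident y).ident_tensor x |>.preservesAcyclicBend
  | cap =>
    have split : 𝟙 x ⊗ of .cap ⊗ 𝟙 y =
        (swap x [◀, ▶] ⊗ 𝟙 y ⊳ cap ⊗ 𝟙 (x ++ y) : Diag M) := by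
      simpa using congrArg (· ⊗ 𝟙 y) (ident_tensor_comp_swap (M := M) cap x)
    rw [split]
    exact ((BendFactorization.swap x [◀, ▶]).tensor_ident y).preservesAcyclicBend.comp
      (preservesAcyclicBend_cap htr (x ++ y)) (by simp)
  | player0 => exact generator .player0 x y
  | lose0 => exact generator .lose0 x y
  | player1 => exact generator .player1 x y
  | lose1 => exact generator .lose1 x y
  | merge => exact generator .merge x y
  | start => exact generator .start x y
  | priority p => exact generator (.priority p) x y

theorem isAcyclic_of_acyclicTraces (htr : AcyclicTraces M) {u w : Word} (hu : IsRight u)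
    (hw : IsRight w) (d : Syn M u w) : IsAcyclic (of d) := by
  have preserves := preservesAcyclicBend_whisker htr d [] []
  have bend_ident : IsAcyclic (bend (𝟙 u) : Diag M) := by
    rw [bend_eq_self hu]; exact .ident hu
  simpa [bend_eq_self (g := of d) hw] using preserves (𝟙 u) hu (by simp) bend_ident

end BendFactorizations

section MergeWord

theorem middle_swap_natural (f g f' g' : Diag M) :
    f ⊗ g ⊗ f' ⊗ g' ⊳ 𝟙 f.cod ⊗ swap g.cod f'.cod ⊗ 𝟙 g'.cod =
      𝟙 f.dom ⊗ swap g.dom f'.dom ⊗ 𝟙 g'.dom ⊳ f ⊗ f' ⊗ g ⊗ g' := by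
  have nat : (g ⊗ f' ⊳ swap g.cod f'.cod) ⊗ g' = (swap g.dom f'.dom ⊳ f' ⊗ g) ⊗ g' :=
    congrArg (· ⊗ g') (tensor_comp_swap g f')
  rw [comp_tensor_right _ (by simp), comp_tensor _ (by simp)] at nat
  rw [← tensor_assoc g, ← tensor_comp_right f (by simp), nat, tensor_comp f (by simp)]
  simp

/-- The merging `oo → o` of two parallel wires, undefined for `◀`. -/
def mergeObj : Obj → Diag M
  | ▶ => merge
  | ◀ => undef [◀, ◀] [◀]

/-- The unit `ε → o` of `mergeObj`, undefined for `◀`. -/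
def startObj : Obj → Diag M
  | ▶ => start
  | ◀ => undef [] [◀]

/-- The wirewise merging `ww → w` of two parallel copies of `w`. -/
def mergeWord : Word → Diag M
  | [] => 𝟙 []
  | o :: w => 𝟙 [o] ⊗ swap w [o] ⊗ 𝟙 w ⊳ mergeObj o ⊗ mergeWord w

/-- The unit `ε → w` of `mergeWord`. -/
def startWord : Word → Diag M
  | [] => 𝟙 []
  | o :: w => startObj o ⊗ startWord w

@[simp] theorem mergeObj_dom (o : Obj) : (mergeObj o : Diag M).dom = [o, o] := by cases o <;> rfl
@[simp] theorem mergeObj_cod (o : Obj) : (mergeObj o : Diag M).cod = [o] := by cases o <;> rfl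
@[simp] theorem startObj_dom (o : Obj) : (startObj o : Diag M).dom = [] := by cases o <;> rfl
@[simp] theorem startObj_cod (o : Obj) : (startObj o : Diag M).cod = [o] := by cases o <;> rfl

@[simp] theorem mergeWord_dom (w : Word) : (mergeWord w : Diag M).dom = w ++ w := by
  cases w <;> simp [mergeWord]

@[simp] theorem mergeWord_cod (w : Word) : (mergeWord w : Diag M).cod = w := by
  induction w <;> simp_all [mergeWord]

@[simp] theorem startWord_dom (w : Word) : (startWord w : Diag M).dom = [] := by
  induction w <;> simp_all [startWord]

@[simp] theorem startWord_cod (w : Word) : (startWord w : Diag M).cod = w := by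
  induction w <;> simp_all [startWord]

@[simp] theorem mergeWord_nil : (mergeWord [] : Diag M) = 𝟙 [] := rfl
@[simp] theorem startWord_nil : (startWord [] : Diag M) = 𝟙 [] := rfl

@[simp] theorem mergeWord_singleton : (mergeWord [▶] : Diag M) = merge := by
  simp [mergeWord, mergeObj]

@[simp] theorem startWord_singleton : (startWord [▶] : Diag M) = start := by
  simp [startWord, startObj]

theorem mergeWord_append (u v : Word) : (mergeWord (u ++ v) : Diag M) =
    𝟙 u ⊗ swap v u ⊗ 𝟙 v ⊳ mergeWord u ⊗ mergeWord v := by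
  induction u with
  | nil => simp
  | cons o u ih =>
    have slide := whisker_exchange (M := M) (swap u [o]) (swap v u ⊗ 𝟙 v)
    have split_left := tensor_comp (M := M) (mergeObj o) (g := 𝟙 u ⊗ swap v u ⊗ 𝟙 v)
      (g' := mergeWord u ⊗ mergeWord v) (by simp)
    have split_right := comp_tensor (M := M) (f := 𝟙 [o] ⊗ swap u [o] ⊗ 𝟙 u)
      (g := mergeObj o ⊗ mergeWord u) (mergeWord v) (by simp)
    rw [List.cons_append, mergeWord, mergeWord, ih, split_left, split_right]
    simpa [swap_append_left u v, swap_cons_right v o u] using congrArg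
      (fun t => 𝟙 (o :: u) ⊗ swap v [o] ⊗ 𝟙 (u ++ v) ⊳ 𝟙 [o] ⊗ t ⊳
        mergeObj o ⊗ mergeWord u ⊗ mergeWord v) slide

theorem startWord_append (u v : Word) :
    (startWord (u ++ v) : Diag M) = startWord u ⊗ startWord v := by
  induction u <;> simp_all [startWord]

variable {f F : Diag M} {w u v : Word}

namespace IsAcyclic

theorem startWord_comp (h : IsAcyclic f) : startWord f.dom ⊳ f = startWord f.cod := by
  induction f, h using IsAcyclic.induction with
  | ident u _ => simp
  | swap u v _ _ =>
    simpa [startWord_append] using tensor_comp_swap (M := M) (startWord u) (startWord v)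
  | comp f g _ _ h ihf ihg => rw [comp_dom, ← comp_assoc, ihf, h, ihg, comp_cod]
  | tensor f g _ _ ihf ihg =>
    rw [tensor_dom, startWord_append, ← comp_tensor_comp (by simp) (by simp), ihf, ihg,
      ← startWord_append, tensor_cod]
  | player0 => simpa [startWord, startObj] using eq_of_pgaEq (M := M) .B12
  | lose0 => simpa using eq_of_pgaEq (M := M) .B14
  | player1 => simpa [startWord, startObj] using eq_of_pgaEq (M := M) .B13
  | lose1 => simpa using eq_of_pgaEq (M := M) .B15
  | merge =>
    have split := tensor_eq_right_comp_left (M := M) start start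
    simpa [startWord, startObj, start_tensor_comp_merge] using congrArg (· ⊳ merge) split
  | start => simp
  | priority p => simpa using eq_of_pgaEq (.C2 p)

end IsAcyclic

theorem merge_comp_player0 : merge ⊳ player0 =
    (player0 ⊗ player0 ⊳ 𝟙 [▶] ⊗ swap [▶] [▶] ⊗ 𝟙 [▶] ⊳ merge ⊗ merge : Diag M) := by
  have distrib : merge ⊳ player0 = ((player0 ⊗ player0 ⊳ (𝟙 [▶] ⊗ swap [▶] [▶]) ⊗ 𝟙 [▶]) ⊳
      merge ⊗ merge : Diag M) := eq_of_pgaEq .B10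
  simpa using distrib

theorem merge_comp_player1 : merge ⊳ player1 =
    (player1 ⊗ player1 ⊳ 𝟙 [▶] ⊗ swap [▶] [▶] ⊗ 𝟙 [▶] ⊳ merge ⊗ merge : Diag M) := by
  have distrib : merge ⊳ player1 = ((player1 ⊗ player1 ⊳ (𝟙 [▶] ⊗ swap [▶] [▶]) ⊗ 𝟙 [▶]) ⊳
      merge ⊗ merge : Diag M) := eq_of_pgaEq .B18
  simpa using distrib

theorem mergeWord_pair : (mergeWord [▶, ▶] : Diag M) =
    𝟙 [▶] ⊗ swap [▶] [▶] ⊗ 𝟙 [▶] ⊳ merge ⊗ merge := by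
  simpa using mergeWord_append (M := M) [▶] [▶]

theorem middle_swap_comp_merge : 𝟙 [▶] ⊗ swap [▶] [▶] ⊗ 𝟙 [▶] ⊳ merge ⊗ merge ⊳ merge =
    (merge ⊗ merge ⊳ merge : Diag M) := by
  have reassoc : merge ⊗ merge ⊳ merge =
      (𝟙 [▶] ⊗ merge ⊗ 𝟙 [▶] ⊳ 𝟙 [▶] ⊗ merge ⊳ merge : Diag M) := by
    have split : merge ⊗ merge ⊳ merge = (𝟙 [▶, ▶] ⊗ merge ⊳ merge ⊗ 𝟙 [▶] ⊳ merge : Diag M) := by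
      simpa using congrArg (· ⊳ merge) (tensor_eq_right_comp_left (M := M) merge merge)
    have inner := congrArg (𝟙 [▶] ⊗ · ⊳ merge) (merge_assoc (M := M))
    rw [split, merge_assoc]
    simpa using inner.symm
  rw [reassoc]
  simpa using congrArg (fun t => 𝟙 [▶] ⊗ t ⊗ 𝟙 [▶] ⊳ 𝟙 [▶] ⊗ merge ⊳ merge)
    (swap_comp_merge (M := M))

theorem startWord_tensor_comp_mergeWord (h : IsRight w) :
    startWord w ⊗ 𝟙 w ⊳ mergeWord w = (𝟙 w : Diag M) := by
  induction w with
  | nil => simp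
  | cons o w ih =>
    obtain ⟨rfl, hw⟩ := isRight_cons.1 h
    have slide := tensor_tensor_ident_comp_swap (M := M) start (startWord w) [▶]
    have unit := comp_tensor_comp (M := M) (f := start ⊗ 𝟙 [▶]) (g := merge)
      (f' := startWord w ⊗ 𝟙 w) (g' := mergeWord w) rfl (by simp)
    rw [start_tensor_comp_merge, ih hw] at unit
    refine Eq.trans ?_ (unit.symm.trans (ident_tensor_ident _ _))
    simpa [mergeWord, startWord, mergeObj, startObj] using
      congrArg (fun t => t ⊗ 𝟙 w ⊳ merge ⊗ mergeWord w) slide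

theorem tensor_startWord_comp_mergeWord (h : IsRight w) :
    𝟙 w ⊗ startWord w ⊳ mergeWord w = (𝟙 w : Diag M) := by
  induction w with
  | nil => simp
  | cons o w ih =>
    obtain ⟨rfl, hw⟩ := isRight_cons.1 h
    have slide := congrArg (· ⊗ startWord w) (ident_tensor_comp_swap (M := M) start w)
    have unit := comp_tensor_comp (M := M) (f := 𝟙 [▶] ⊗ start) (g := merge)
      (f' := 𝟙 w ⊗ startWord w) (g' := mergeWord w) rfl (by simp)
    rw [tensor_start_comp_merge, ih hw] at unit
    simp only [of_cod, comp_tensor_right (startWord w) (f := 𝟙 w ⊗ start) (g := swap w [▶])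
      (by simp)] at slide
    refine Eq.trans ?_ (unit.symm.trans (ident_tensor_ident _ _))
    simpa [mergeWord, startWord, mergeObj, startObj] using
      congrArg (fun t => 𝟙 [▶] ⊗ t ⊳ merge ⊗ mergeWord w) slide

theorem isAcyclic_mergeWord (h : IsRight w) : IsAcyclic (mergeWord w : Diag M) := by
  induction w with
  | nil => exact .ident h
  | cons o w ih =>
    obtain ⟨rfl, hw⟩ := isRight_cons.1 h
    exact (IsAcyclic.whisker (.swap hw (by simp)) (by simp) hw).comp
      ((IsAcyclic.of .merge).tensor (ih hw)) (by simp [mergeObj])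

theorem isAcyclic_startWord (h : IsRight w) : IsAcyclic (startWord w : Diag M) := by
  induction w with
  | nil => exact .ident h
  | cons o w ih =>
    obtain ⟨rfl, hw⟩ := isRight_cons.1 h
    exact (IsAcyclic.of .start).tensor (ih hw)

namespace IsAcyclic

theorem mergeWord_comp (h : IsAcyclic f) :
    mergeWord f.dom ⊳ f = f ⊗ f ⊳ mergeWord f.cod := by
  induction f, h using IsAcyclic.induction with
  | ident u _ => simp
  | swap u v _ _ =>
    have slide := tensor_comp_swap (M := M) (mergeWord u) (mergeWord v)
    have perm := congrArg (· ⊳ mergeWord v ⊗ mergeWord u) (swap_middle (M := M) u u v v)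
    simp only [mergeWord_dom, mergeWord_cod] at slide
    simp only [swap_dom, swap_cod, mergeWord_append, comp_assoc, slide]
    simpa using perm
  | comp f g _ _ h ihf ihg =>
    rw [comp_dom, ← comp_assoc, ihf, comp_assoc, h, ihg, comp_cod, ← comp_assoc,
      comp_tensor_comp h h]
  | tensor f g _ _ ihf ihg =>
    have middle := congrArg (· ⊳ mergeWord f.cod ⊗ mergeWord g.cod)
      (middle_swap_natural f g f g)
    have split := comp_tensor_comp (f := f ⊗ f) (g := mergeWord f.cod) (f' := g ⊗ g)
      (g' := mergeWord g.cod) (by simp) (by simp)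
    rw [tensor_dom, tensor_cod, mergeWord_append, mergeWord_append, comp_assoc,
      ← comp_tensor_comp (by simp) (by simp), ihf, ihg, split]
    simpa using middle.symm
  | player0 => simpa [mergeWord_pair] using merge_comp_player0 (M := M)
  | player1 => simpa [mergeWord_pair] using merge_comp_player1 (M := M)
  | lose0 => simpa using eq_of_pgaEq (M := M) .B11
  | lose1 => simpa using eq_of_pgaEq (M := M) .B19
  | merge => simpa [mergeWord_pair] using middle_swap_comp_merge (M := M)
  | start =>
    have split := tensor_eq_right_comp_left (M := M) start start
    simpa [start_tensor_comp_merge] using (congrArg (· ⊳ merge) split).symm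
  | priority p => simpa using (eq_of_pgaEq (.C1 p)).symm

end IsAcyclic

theorem middle_swap_comp_mergeWord (h : IsRight w) :
    𝟙 w ⊗ swap w w ⊗ 𝟙 w ⊳ mergeWord w ⊗ mergeWord w ⊳ mergeWord w =
      (mergeWord w ⊗ mergeWord w ⊳ mergeWord w : Diag M) := by
  simpa [mergeWord_append] using (isAcyclic_mergeWord (M := M) h).mergeWord_comp

-- The Eckmann–Hilton argument: a homomorphism `w ⊗ w → w` with two-sided unit is associative and,
-- below, commutative.
theorem mergeWord_assoc (h : IsRight w) :
    mergeWord w ⊗ 𝟙 w ⊳ mergeWord w = (𝟙 w ⊗ mergeWord w ⊳ mergeWord w : Diag M) := by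
  have unit_left := comp_tensor_comp (M := M) (f := 𝟙 (w ++ w)) (g := mergeWord w)
    (f' := startWord w ⊗ 𝟙 w) (g' := mergeWord w) (by simp) (by simp)
  have unit_right := comp_tensor_comp (M := M) (f := 𝟙 w ⊗ startWord w) (g := mergeWord w)
    (f' := 𝟙 (w ++ w)) (g' := mergeWord w) (by simp) (by simp)
  rw [startWord_tensor_comp_mergeWord h, ident_comp (by simp)] at unit_left
  rw [tensor_startWord_comp_mergeWord h, ident_comp (by simp)] at unit_right
  have slide : 𝟙 w ⊗ startWord w ⊳ swap w w = (startWord w ⊗ 𝟙 w : Diag M) := by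
    simpa using ident_tensor_comp_swap (M := M) (startWord w) w
  calc mergeWord w ⊗ 𝟙 w ⊳ mergeWord w
      = 𝟙 (w ++ w) ⊗ startWord w ⊗ 𝟙 w ⊳ mergeWord w ⊗ mergeWord w ⊳ mergeWord w := by
        rw [unit_left, comp_assoc]
    _ = 𝟙 (w ++ w) ⊗ startWord w ⊗ 𝟙 w ⊳ 𝟙 w ⊗ swap w w ⊗ 𝟙 w ⊳
          mergeWord w ⊗ mergeWord w ⊳ mergeWord w := by
        rw [middle_swap_comp_mergeWord h]
    _ = 𝟙 w ⊗ startWord w ⊗ 𝟙 (w ++ w) ⊳ mergeWord w ⊗ mergeWord w ⊳ mergeWord w := by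
        simpa using congrArg
          (fun t => 𝟙 w ⊗ t ⊗ 𝟙 w ⊳ mergeWord w ⊗ mergeWord w ⊳ mergeWord w) slide
    _ = 𝟙 w ⊗ mergeWord w ⊳ mergeWord w := by
        rw [← comp_assoc]; simpa using congrArg (· ⊳ mergeWord w) unit_right.symm

theorem swap_comp_mergeWord (h : IsRight w) : swap w w ⊳ mergeWord w = (mergeWord w : Diag M) := by
  have unit := comp_tensor_comp (M := M) (f := startWord w ⊗ 𝟙 w) (g := mergeWord w)
    (f' := 𝟙 w ⊗ startWord w) (g' := mergeWord w) (by simp) (by simp)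
  rw [startWord_tensor_comp_mergeWord h, tensor_startWord_comp_mergeWord h] at unit
  have slide : startWord w ⊗ 𝟙 (w ++ w) ⊗ startWord w ⊳ 𝟙 w ⊗ swap w w ⊗ 𝟙 w =
      (swap w w ⊳ startWord w ⊗ 𝟙 (w ++ w) ⊗ startWord w : Diag M) := by
    have slide := congrArg (startWord w ⊗ ·) (whisker_exchange (M := M) (swap w w) (startWord w))
    rw [tensor_comp _ (by simp), tensor_comp_right _ (by simp)] at slide
    simpa using slide.symm
  calc swap w w ⊳ mergeWord w
      = swap w w ⊳ startWord w ⊗ 𝟙 (w ++ w) ⊗ startWord w ⊳ mergeWord w ⊗ mergeWord w ⊳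
          mergeWord w := by
        simpa using congrArg (swap w w ⊳ · ⊳ mergeWord w) unit
    _ = startWord w ⊗ 𝟙 (w ++ w) ⊗ startWord w ⊳ 𝟙 w ⊗ swap w w ⊗ 𝟙 w ⊳
          mergeWord w ⊗ mergeWord w ⊳ mergeWord w := by
        simpa using congrArg (· ⊳ mergeWord w ⊗ mergeWord w ⊳ mergeWord w) slide.symm
    _ = startWord w ⊗ 𝟙 (w ++ w) ⊗ startWord w ⊳ mergeWord w ⊗ mergeWord w ⊳ mergeWord w := by
        rw [middle_swap_comp_mergeWord h]
    _ = mergeWord w := by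
        simpa using congrArg (· ⊳ mergeWord w) unit.symm

theorem IsAcyclic.eq_tensor_comp_mergeWord (h : IsAcyclic F) (hd : F.dom = u ++ v) :
    F = (𝟙 u ⊗ startWord v ⊳ F) ⊗ (startWord u ⊗ 𝟙 v ⊳ F) ⊳ mergeWord F.cod := by
  obtain ⟨hu, hv⟩ := isRight_append.1 (hd ▸ h.isRight.1)
  have units := comp_tensor_comp (M := M) (f := 𝟙 u ⊗ startWord u) (g := mergeWord u)
    (f' := startWord v ⊗ 𝟙 v) (g' := mergeWord v) (by simp) (by simp)
  rw [tensor_startWord_comp_mergeWord hu, startWord_tensor_comp_mergeWord hv] at units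
  have slide := tensor_comp_swap (M := M) (startWord v) (startWord u)
  calc F = (𝟙 u ⊗ startWord u) ⊗ (startWord v ⊗ 𝟙 v) ⊳ mergeWord u ⊗ mergeWord v ⊳ F := by
        simpa [hd] using congrArg (· ⊳ F) units
    _ = (𝟙 u ⊗ startWord v) ⊗ (startWord u ⊗ 𝟙 v) ⊳ mergeWord F.dom ⊳ F := by
        simpa [hd, mergeWord_append] using
          (congrArg (𝟙 u ⊗ · ⊗ 𝟙 v ⊳ mergeWord u ⊗ mergeWord v ⊳ F) slide).symm
    _ = (𝟙 u ⊗ startWord v ⊳ F) ⊗ (startWord u ⊗ 𝟙 v ⊳ F) ⊳ mergeWord F.cod := by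
        rw [h.mergeWord_comp, comp_tensor_comp (by simp [hd]) (by simp [hd]), comp_assoc]

end MergeWord

section Players

/-- The branching generator of a player, where `false` stands for player 0 and `true` for
player 1, so that `!i` is the opponent of `i`. -/
def player : Bool → Diag M
  | false => player0
  | true => player1

/-- The losing generator of a player, encoded as for `player`. -/
def lose : Bool → Diag M
  | false => lose0
  | true => lose1

@[simp] theorem player_dom (i : Bool) : (player i : Diag M).dom = [▶] := by cases i <;> rfl
@[simp] theorem player_cod (i : Bool) : (player i : Diag M).cod = [▶, ▶] := by cases i <;> rfl
@[simp] theorem lose_dom (i : Bool) : (lose i : Diag M).dom = [▶] := by cases i <;> rfl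
@[simp] theorem lose_cod (i : Bool) : (lose i : Diag M).cod = [] := by cases i <;> rfl

theorem isAcyclic_player : ∀ i, IsAcyclic (player i : Diag M)
  | false => .of .player0
  | true => .of .player1

theorem isAcyclic_lose : ∀ i, IsAcyclic (lose i : Diag M)
  | false => .of .lose0
  | true => .of .lose1

theorem player_assoc :
    ∀ i, player i ⊳ player i ⊗ 𝟙 [▶] = (player i ⊳ 𝟙 [▶] ⊗ player i : Diag M)
  | false => eq_of_pgaEq .B4
  | true => eq_of_pgaEq .B7

theorem player_comp_swap : ∀ i, player i ⊳ swap [▶] [▶] = (player i : Diag M)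
  | false => eq_of_pgaEq .B5
  | true => eq_of_pgaEq .B8

theorem player_comp_lose : ∀ i, player i ⊳ lose i ⊗ 𝟙 [▶] = (𝟙 [▶] : Diag M)
  | false => eq_of_pgaEq .B6r
  | true => eq_of_pgaEq .B9r

theorem priority_comp_player (p : Fin (M + 1)) :
    ∀ i, priority p ⊳ player i = player i ⊳ priority p ⊗ priority p
  | false => eq_of_pgaEq (.D1 p)
  | true => eq_of_pgaEq (.D3 p)

theorem player_comp_lose_not :
    ∀ i, player i ⊳ lose (!i) ⊗ 𝟙 [▶] = (lose (!i) ⊳ start : Diag M)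
  | false => eq_of_pgaEq .B21
  | true => eq_of_pgaEq .B23

theorem player_comp_player_not (i : Bool) : player i ⊳ player (!i) ⊗ 𝟙 [▶] =
    (player (!i) ⊳ player i ⊗ player i ⊳ 𝟙 [▶] ⊗ swap [▶] [▶] ⊗ 𝟙 [▶] ⊳
      𝟙 [▶, ▶] ⊗ merge : Diag M) := by
  have distrib : player i ⊳ player (!i) ⊗ 𝟙 [▶] = (((player (!i) ⊳ player i ⊗ player i) ⊳
      (𝟙 [▶] ⊗ swap [▶] [▶]) ⊗ 𝟙 [▶]) ⊳ (𝟙 [▶] ⊗ 𝟙 [▶]) ⊗ merge : Diag M) := by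
    cases i
    · exact eq_of_pgaEq .B20
    · exact eq_of_pgaEq .B22
  simpa using distrib

end Players

/-- Classes of acyclic diagrams `▶ → w`, the columns of matrices with rows indexed by `w`. -/
@[ext] structure Column (M : ℕ) (w : Word) where
  diag : Diag M
  isAcyclic : IsAcyclic diag
  dom_eq : diag.dom = [▶]
  cod_eq : diag.cod = w

namespace Column

attribute [simp] dom_eq cod_eq

section Choice

variable {w : Word} (i : Bool) (f g h : Column M w)

include f in
theorem isRight : IsRight w := f.cod_eq ▸ f.isAcyclic.isRight.2

theorem merge_comp : merge ⊳ f.diag = f.diag ⊗ f.diag ⊳ mergeWord w := by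
  simpa using f.isAcyclic.mergeWord_comp

theorem start_comp : start ⊳ f.diag = startWord w := by
  simpa using f.isAcyclic.startWord_comp

/-- Player `i` chooses between `f` and `g`. -/
def choice : Column M w where
  diag := player i ⊳ f.diag ⊗ g.diag ⊳ mergeWord w
  isAcyclic := (isAcyclic_player i).comp
    ((f.isAcyclic.tensor g.isAcyclic).comp (isAcyclic_mergeWord f.isRight) (by simp)) (by simp)
  dom_eq := by simp
  cod_eq := by simp

/-- The column in which player `i` loses at once. -/
def loss (hw : IsRight w) : Column M w where
  diag := lose i ⊳ startWord w
  isAcyclic := (isAcyclic_lose i).comp (isAcyclic_startWord hw) (by simp)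
  dom_eq := by simp
  cod_eq := by simp

@[simp] theorem choice_diag :
    (choice i f g).diag = player i ⊳ f.diag ⊗ g.diag ⊳ mergeWord w := rfl

@[simp] theorem loss_diag (hw : IsRight w) :
    (loss i hw : Column M w).diag = lose i ⊳ startWord w := rfl

theorem choice_comm : choice i f g = choice i g f := by
  have swap_fg := tensor_comp_swap f.diag g.diag
  simp only [dom_eq, cod_eq] at swap_fg
  ext1
  rw [choice_diag, choice_diag, ← swap_comp_mergeWord f.isRight,
    ← comp_assoc (f.diag ⊗ g.diag), swap_fg,
    comp_assoc, ← comp_assoc (player i), player_comp_swap, swap_comp_mergeWord f.isRight]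

theorem choice_assoc : choice i (choice i f g) h = choice i f (choice i g h) := by
  have split_left : (player i ⊳ f.diag ⊗ g.diag ⊳ mergeWord w) ⊗ h.diag =
      player i ⊗ 𝟙 [▶] ⊳ f.diag ⊗ g.diag ⊗ h.diag ⊳ mergeWord w ⊗ 𝟙 w := by
    rw [comp_tensor _ (by simp), comp_tensor_right _ (by simp), tensor_assoc, h.dom_eq, h.cod_eq]
  have split_right : f.diag ⊗ (player i ⊳ g.diag ⊗ h.diag ⊳ mergeWord w) =
      𝟙 [▶] ⊗ player i ⊳ f.diag ⊗ g.diag ⊗ h.diag ⊳ 𝟙 w ⊗ mergeWord w := by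
    rw [tensor_comp _ (by simp), tensor_comp_right _ (by simp), f.dom_eq, f.cod_eq]
  ext1
  simp only [choice_diag, split_left, split_right, comp_assoc, mergeWord_assoc f.isRight]
  rw [← comp_assoc, player_assoc, comp_assoc]

theorem lose_comp_startWord_tensor :
    (lose i ⊳ startWord w) ⊗ f.diag ⊳ mergeWord w = lose i ⊗ 𝟙 [▶] ⊳ f.diag := by
  rw [comp_tensor _ (by simp), tensor_eq_right_comp_left (startWord w)]
  simp [startWord_tensor_comp_mergeWord f.isRight]

theorem loss_choice : choice i (loss i f.isRight) f = f := by
  ext1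
  rw [choice_diag, loss_diag, lose_comp_startWord_tensor, ← comp_assoc, player_comp_lose,
    ident_comp f.dom_eq]

theorem loss_not_choice : choice i (loss (!i) f.isRight) f = loss (!i) f.isRight := by
  ext1
  rw [choice_diag, loss_diag, lose_comp_startWord_tensor, ← comp_assoc, player_comp_lose_not,
    comp_assoc, start_comp]

theorem tensor_merge_comp_mergeWord :
    𝟙 [▶, ▶] ⊗ merge ⊳ (f.diag ⊗ g.diag ⊳ mergeWord w) ⊗ h.diag ⊳ mergeWord w =
      f.diag ⊗ g.diag ⊗ h.diag ⊗ h.diag ⊳ 𝟙 w ⊗ swap w w ⊗ 𝟙 w ⊳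
      mergeWord w ⊗ mergeWord w ⊳ mergeWord w := by
  have copy : 𝟙 [▶, ▶] ⊗ merge ⊳ (f.diag ⊗ g.diag ⊳ mergeWord w) ⊗ h.diag =
      f.diag ⊗ g.diag ⊗ h.diag ⊗ h.diag ⊳ mergeWord w ⊗ mergeWord w := by
    rw [← comp_tensor_comp (by simp) (by simp), ident_comp (by simp), merge_comp,
      comp_tensor_comp (by simp) (by simp), tensor_assoc]
  rw [middle_swap_comp_mergeWord f.isRight, ← comp_assoc, copy, comp_assoc]

theorem choice_choice_not :
    choice i (choice (!i) f g) h = choice (!i) (choice i f h) (choice i g h) := by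
  have nat := middle_swap_natural f.diag g.diag h.diag h.diag
  simp only [dom_eq, cod_eq] at nat
  have split : (player (!i) ⊳ f.diag ⊗ g.diag ⊳ mergeWord w) ⊗ h.diag =
      player (!i) ⊗ 𝟙 [▶] ⊳ (f.diag ⊗ g.diag ⊳ mergeWord w) ⊗ h.diag := by
    rw [comp_tensor _ (by simp), h.dom_eq]
  have join : (player i ⊳ f.diag ⊗ h.diag ⊳ mergeWord w) ⊗
      (player i ⊳ g.diag ⊗ h.diag ⊳ mergeWord w) = player i ⊗ player i ⊳
        f.diag ⊗ h.diag ⊗ g.diag ⊗ h.diag ⊳ mergeWord w ⊗ mergeWord w := by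
    rw [comp_tensor_comp (by simp) (by simp), comp_tensor_comp (by simp) (by simp), tensor_assoc]
  ext1
  simp only [choice_diag, split, join, comp_assoc]
  rw [← comp_assoc (player i), player_comp_player_not]
  simp only [comp_assoc]
  rw [tensor_merge_comp_mergeWord, ← comp_assoc (f.diag ⊗ _), nat,
    comp_assoc, whiskered_swap_comp_swap_comp (by simp)]

theorem choice_choice_not_self : choice i f (choice (!i) f g) = f := by
  have distrib := choice_choice_not (!i) (loss (!i) f.isRight) g f
  rw [Bool.not_not, loss_not_choice, loss_choice, choice_comm (!i) g f] at distrib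
  exact distrib.symm

instance : Max (Column M w) := ⟨choice false⟩

instance : Min (Column M w) := ⟨choice true⟩

instance : Lattice (Column M w) :=
  .mk' (choice_comm false) (choice_assoc false) (choice_comm true) (choice_assoc true)
    (choice_choice_not_self false) (choice_choice_not_self true)

instance : DistribLattice (Column M w) :=
  .ofInfSupLe fun f g h => by
    rw [inf_comm, inf_comm f g, inf_comm f h]
    exact (choice_choice_not true g h f).le

theorem isBot_loss (hw : IsRight w) : IsBot (loss false hw : Column M w) := fun f =>
  sup_eq_right.1 (loss_choice false f)

theorem isTop_loss (hw : IsRight w) : IsTop (loss true hw : Column M w) := fun f =>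
  inf_eq_right.1 (loss_choice true f)

theorem choice_mem {L : Set (Column M w)} (hL : IsSublattice L) {f g : Column M w} (hf : f ∈ L)
    (hg : g ∈ L) : ∀ i, choice i f g ∈ L
  | false => hL.supClosed hf hg
  | true => hL.infClosed hf hg

end Choice

section LastRow

variable {n w : Word} (i : Bool) (f : Column M w)

/-- Precomposition of a column with `priority p`. -/
def priorityComp (p : Fin (M + 1)) : Column M w where
  diag := priority p ⊳ f.diag
  isAcyclic := (IsAcyclic.of (.priority p)).comp f.isAcyclic (by simp)
  dom_eq := by simp
  cod_eq := by simp

/-- `priorityComp` as a lattice homomorphism. -/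
def priorityHom (p : Fin (M + 1)) : LatticeHom (Column M w) (Column M w) :=
  have map_choice (i : Bool) (f g : Column M w) :
      (choice i f g).priorityComp p = choice i (f.priorityComp p) (g.priorityComp p) := by
    ext1
    simp only [priorityComp, choice_diag]
    rw [comp_tensor_comp (by simp) (by simp), ← comp_assoc, priority_comp_player, comp_assoc,
      comp_assoc]
  { toFun := (priorityComp · p)
    map_sup' := map_choice false
    map_inf' := map_choice true }

/-- The column `f ⊗ start`, whose last row is empty. -/
def tensorStart (f : Column M n) : Column M (n ++ [▶]) where
  diag := f.diag ⊗ start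
  isAcyclic := f.isAcyclic.tensor (.of .start)
  dom_eq := by simp
  cod_eq := by simp

theorem choice_tensorStart (f g : Column M n) :
    choice i f.tensorStart g.tensorStart = (choice i f g).tensorStart := by
  have reorder := middle_swap_natural f.diag start g.diag start
  simp only [dom_eq, cod_eq] at reorder
  have idem : start ⊗ start ⊳ merge = (start : Diag M) := by
    simpa [startWord, startObj] using IsAcyclic.startWord_comp (M := M) (.of .merge)
  have split : (f.diag ⊗ g.diag ⊳ mergeWord n) ⊗ start =
      f.diag ⊗ g.diag ⊗ start ⊗ start ⊳ mergeWord n ⊗ merge := by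
    rw [← idem, comp_tensor_comp (by simp) (by simp), idem, tensor_assoc]
  ext1
  simp only [choice_diag, tensorStart, mergeWord_append, mergeWord_singleton]
  rw [comp_tensor _ (by simp), split]
  simpa using congrArg (player i ⊳ · ⊳ mergeWord n ⊗ merge) reorder

/-- `tensorStart` as a lattice homomorphism. -/
def tensorStartHom (M : ℕ) (n : Word) : LatticeHom (Column M n) (Column M (n ++ [▶])) where
  toFun := tensorStart
  map_sup' f g := (choice_tensorStart false f g).symm
  map_inf' f g := (choice_tensorStart true f g).symm

/-- The column whose only nonempty row is the last one, with entry `priority p`. -/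
def startPriority (hn : IsRight n) (p : Fin (M + 1)) : Column M (n ++ [▶]) where
  diag := startWord n ⊗ priority p
  isAcyclic := (isAcyclic_startWord hn).tensor (.of (.priority p))
  dom_eq := by simp
  cod_eq := by simp

theorem loss_append_singleton (hn : IsRight n) (hw : IsRight (n ++ [▶])) :
    (loss i hw : Column M (n ++ [▶])) = tensorStart (loss i hn) := by
  ext1
  simp [tensorStart, startWord_append, comp_tensor]

/-- The columns generated as a lattice by those with empty last row and by
`startPriority hn p` for `p ∈ s`. -/
def lastRowIn (hn : IsRight n) (s : Set (Fin (M + 1))) : Set (Column M (n ++ [▶])) :=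
  latticeClosure (Set.range tensorStart ∪ startPriority hn '' s)

theorem tensorStart_mem_lastRowIn (hn : IsRight n) (s : Set (Fin (M + 1))) (f : Column M n) :
    f.tensorStart ∈ lastRowIn hn s :=
  subset_latticeClosure (.inl ⟨f, rfl⟩)

theorem startPriority_mem_lastRowIn (hn : IsRight n) {s : Set (Fin (M + 1))} {p : Fin (M + 1)}
    (hp : p ∈ s) : startPriority hn p ∈ lastRowIn hn s :=
  subset_latticeClosure (.inr ⟨p, hp, rfl⟩)

theorem priorityComp_tensorStart (p : Fin (M + 1)) (f : Column M n) :
    f.tensorStart.priorityComp p = (f.priorityComp p).tensorStart := by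
  ext1
  simp [priorityComp, tensorStart, comp_tensor]

theorem priorityComp_startPriority (hn : IsRight n) (p q : Fin (M + 1)) :
    (startPriority hn q).priorityComp p = startPriority hn (max p q) := by
  ext1
  have priority_mul : priority p ⊳ priority q = (priority (max p q) : Diag M) :=
    eq_of_pgaEq (.C3 p q)
  simp [priorityComp, startPriority, ← priority_mul, tensor_comp]

theorem priorityComp_mem_lastRowIn (hn : IsRight n) (p : Fin (M + 1)) {f : Column M (n ++ [▶])}
    (hf : f ∈ lastRowIn hn Set.univ) : f.priorityComp p ∈ lastRowIn hn Set.univ := by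
  refine latticeClosure_min (Set.union_subset ?_ ?_)
    (isSublattice_latticeClosure.preimage (priorityHom p)) hf
  · rintro _ ⟨f, rfl⟩
    change f.tensorStart.priorityComp p ∈ lastRowIn hn Set.univ
    exact (priorityComp_tensorStart p f).symm ▸ tensorStart_mem_lastRowIn hn _ _
  · rintro _ ⟨q, -, rfl⟩
    change (startPriority hn q).priorityComp p ∈ lastRowIn hn Set.univ
    exact (priorityComp_startPriority hn p q).symm ▸ startPriority_mem_lastRowIn hn trivial

end LastRow

section HasColumnsIn

variable {n w : Word}

/-- A set of columns which contains the losing columns and is closed under the choices of both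
players and under precomposition with priorities. -/
structure IsClosedUnderPlay (L : Set (Column M w)) : Prop extends IsSublattice L where
  loss_mem (i : Bool) (hw : IsRight w) : loss i hw ∈ L
  priorityComp_mem (p : Fin (M + 1)) {f : Column M w} : f ∈ L → f.priorityComp p ∈ L

theorem isClosedUnderPlay_lastRowIn (hn : IsRight n) :
    IsClosedUnderPlay (lastRowIn (M := M) hn Set.univ) where
  __ := isSublattice_latticeClosure
  loss_mem i hw := loss_append_singleton i hn hw ▸ tensorStart_mem_lastRowIn hn _ _
  priorityComp_mem := priorityComp_mem_lastRowIn hn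

/-- All columns of the diagram `h : u → w` lie in `L`. The column of `h` at an input wire is
obtained by plugging all other input wires with `start`. -/
def HasColumnsIn (L : Set (Column M w)) : Word → Diag M → Prop
  | [], _ => True
  | o :: u, h => 𝟙 [o] ⊗ startWord u ⊳ h ∈ diag '' L ∧ HasColumnsIn L u (startObj o ⊗ 𝟙 u ⊳ h)

variable {L : Set (Column M w)} {u v : Word} {f g h : Diag M}

theorem hasColumnsIn_singleton (hh : h.dom = [▶]) : HasColumnsIn L [▶] h ↔ h ∈ diag '' L := by
  simp [HasColumnsIn, hh]

theorem hasColumnsIn_pair : HasColumnsIn L [▶, ▶] h ↔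
    𝟙 [▶] ⊗ start ⊳ h ∈ diag '' L ∧ start ⊗ 𝟙 [▶] ⊳ h ∈ diag '' L := by
  simp [HasColumnsIn, startObj]

theorem hasColumnsIn_append (hh : h.dom = u ++ v) : HasColumnsIn L (u ++ v) h ↔
    HasColumnsIn L u (𝟙 u ⊗ startWord v ⊳ h) ∧ HasColumnsIn L v (startWord u ⊗ 𝟙 v ⊳ h) := by
  induction u generalizing h with
  | nil => simp [HasColumnsIn, ident_comp (f := h) (w := v) hh]
  | cons o u ih =>
    have first_col : 𝟙 [o] ⊗ startWord u ⊳ 𝟙 (o :: u) ⊗ startWord v ⊳ h =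
        𝟙 [o] ⊗ startWord (u ++ v) ⊳ h := by
      have fuse := tensor_comp_right (M := M) (f := 𝟙 [o] ⊗ startWord u) (g := 𝟙 [])
        (g' := startWord v) (by simp)
      rw [← comp_assoc, startWord_append]
      simpa using congrArg (· ⊳ h) fuse.symm
    have left_cols : startObj o ⊗ 𝟙 u ⊳ 𝟙 (o :: u) ⊗ startWord v ⊳ h =
        𝟙 u ⊗ startWord v ⊳ startObj o ⊗ 𝟙 (u ++ v) ⊳ h := by
      simpa using congrArg (· ⊳ h) (whisker_exchange (startObj o) (𝟙 u ⊗ startWord v))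
    have right_cols : startWord u ⊗ 𝟙 v ⊳ startObj o ⊗ 𝟙 (u ++ v) ⊳ h =
        startWord (o :: u) ⊗ 𝟙 v ⊳ h := by
      have fuse := tensor_eq_right_comp_left (M := M) (startObj o) (startWord u ⊗ 𝟙 v)
      simpa [startWord] using congrArg (· ⊳ h) fuse.symm
    rw [List.cons_append, HasColumnsIn, HasColumnsIn, ih (by simp), first_col, left_cols,
      right_cols, and_assoc]

theorem IsClosedUnderPlay.player_comp (hL : IsClosedUnderPlay L) (hh : IsAcyclic h)
    (hd : h.dom = [▶, ▶]) (hc : h.cod = w) (H : HasColumnsIn L [▶, ▶] h) (i : Bool) :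
    HasColumnsIn L [▶] (player i ⊳ h) := by
  obtain ⟨⟨f, hf, left⟩, ⟨g, hg, right⟩⟩ := hasColumnsIn_pair.1 H
  have split := hh.eq_tensor_comp_mergeWord (u := [▶]) (v := [▶]) hd
  simp only [startWord_singleton, ← left, ← right, hc] at split
  exact (hasColumnsIn_singleton (by simp)).2
    ⟨choice i f g, choice_mem hL.toIsSublattice hf hg i, by rw [choice_diag, ← split]⟩

theorem IsClosedUnderPlay.lose_comp (hL : IsClosedUnderPlay L) (hh : IsAcyclic h)
    (hd : h.dom = []) (hc : h.cod = w) (i : Bool) :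
    HasColumnsIn L [▶] (lose i ⊳ h) := by
  have start_h := hh.startWord_comp
  rw [hd, hc, startWord_nil, ident_comp hd] at start_h
  exact (hasColumnsIn_singleton (by simp)).2
    ⟨_, hL.loss_mem i (hc ▸ hh.isRight.2), by rw [loss_diag, start_h]⟩

theorem HasColumnsIn.tensor_comp (hf : IsAcyclic f) (hg : IsAcyclic g)
    (hh : IsAcyclic h) (hd : h.dom = (f ⊗ g).cod) (hc : h.cod = w)
    (ihf : ∀ {h : Diag M}, IsAcyclic h → h.dom = f.cod → h.cod = w →
      HasColumnsIn L f.cod h → HasColumnsIn L f.dom (f ⊳ h))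
    (ihg : ∀ {h : Diag M}, IsAcyclic h → h.dom = g.cod → h.cod = w →
      HasColumnsIn L g.cod h → HasColumnsIn L g.dom (g ⊳ h))
    (H : HasColumnsIn L (f ⊗ g).cod h) : HasColumnsIn L (f ⊗ g).dom (f ⊗ g ⊳ h) := by
  have f_cols : 𝟙 f.dom ⊗ startWord g.dom ⊳ f ⊗ g ⊳ h = f ⊳ 𝟙 f.cod ⊗ startWord g.cod ⊳ h := by
    have slide := tensor_eq_left_comp_right f (startWord g.cod)
    rw [startWord_dom, tensor_ident_nil] at slide
    rw [← comp_assoc, ← comp_assoc f, ← comp_tensor_comp (by simp) (by simp), hg.startWord_comp,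
      ident_comp rfl, slide]
  have g_cols : startWord f.dom ⊗ 𝟙 g.dom ⊳ f ⊗ g ⊳ h = g ⊳ startWord f.cod ⊗ 𝟙 g.cod ⊳ h := by
    have slide := tensor_eq_right_comp_left (startWord f.cod) g
    rw [startWord_dom, ident_nil_tensor] at slide
    rw [← comp_assoc, ← comp_assoc g, ← comp_tensor_comp (by simp) (by simp), hf.startWord_comp,
      ident_comp rfl, slide]
  rw [tensor_dom, hasColumnsIn_append (by simp), f_cols, g_cols]
  rw [tensor_cod, hasColumnsIn_append (by simpa using hd)] at H
  exact ⟨ihf (((IsAcyclic.ident hf.isRight.2).tensor (isAcyclic_startWord hg.isRight.2)).comp hh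
      (by simp [hd])) (by simp) (by simpa) H.1,
    ihg (((isAcyclic_startWord hf.isRight.2).tensor (IsAcyclic.ident hg.isRight.2)).comp hh
      (by simp [hd])) (by simp) (by simpa) H.2⟩

theorem HasColumnsIn.swap_comp (hd : h.dom = v ++ u) (H : HasColumnsIn L (v ++ u) h) :
    HasColumnsIn L (u ++ v) (swap u v ⊳ h) := by
  have left_cols : 𝟙 u ⊗ startWord v ⊳ swap u v ⊳ h = startWord v ⊗ 𝟙 u ⊳ h := by
    simpa using congrArg (· ⊳ h) (tensor_comp_swap (𝟙 u) (startWord v))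
  have right_cols : startWord u ⊗ 𝟙 v ⊳ swap u v ⊳ h = 𝟙 v ⊗ startWord u ⊳ h := by
    simpa using congrArg (· ⊳ h) (tensor_comp_swap (startWord u) (𝟙 v))
  rw [hasColumnsIn_append (by simp), left_cols, right_cols, and_comm]
  exact (hasColumnsIn_append hd).1 H

theorem HasColumnsIn.merge_comp (hd : h.dom = [▶]) (H : HasColumnsIn L [▶] h) :
    HasColumnsIn L [▶, ▶] (merge ⊳ h) := by
  rw [hasColumnsIn_pair, ← comp_assoc, tensor_start_comp_merge, ← comp_assoc,
    start_tensor_comp_merge, ident_comp hd, and_self, ← hasColumnsIn_singleton hd]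
  exact H

theorem HasColumnsIn.comp (hL : IsClosedUnderPlay L) (hg : IsAcyclic g) (hh : IsAcyclic h)
    (hd : h.dom = g.cod) (hc : h.cod = w) (H : HasColumnsIn L g.cod h) :
    HasColumnsIn L g.dom (g ⊳ h) := by
  induction g, hg using IsAcyclic.induction generalizing h with
  | ident u _ => rwa [ident_comp (w := u) hd]
  | swap u v _ _ => exact H.swap_comp hd
  | comp f g _ hg hfg ihf ihg =>
    simp only [comp_dom, comp_cod, comp_assoc] at *
    exact ihf (hg.comp hh hd.symm) (by simp [hfg]) (by simp [hc]) (hfg ▸ ihg hh hd hc H)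
  | tensor f g hf hg ihf ihg => exact H.tensor_comp hf hg hh hd hc ihf ihg
  | player0 => exact hL.player_comp hh hd hc H false
  | player1 => exact hL.player_comp hh hd hc H true
  | lose0 => exact hL.lose_comp hh hd hc false
  | lose1 => exact hL.lose_comp hh hd hc true
  | merge => exact H.merge_comp hd
  | start => trivial
  | priority p =>
    obtain ⟨f, hf, rfl⟩ := (hasColumnsIn_singleton hd).1 H
    exact (hasColumnsIn_singleton (by simp)).2 ⟨_, hL.priorityComp_mem p hf, rfl⟩

theorem IsClosedUnderPlay.eq_univ (hL : IsClosedUnderPlay L) (H : HasColumnsIn L w (𝟙 w)) :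
    L = Set.univ := by
  refine Set.eq_univ_of_forall fun f => ?_
  have f_mem := HasColumnsIn.comp hL f.isAcyclic (.ident f.isRight) f.cod_eq.symm rfl
    (by rwa [cod_eq])
  rw [comp_ident f.cod_eq, dom_eq, hasColumnsIn_singleton f.dom_eq] at f_mem
  obtain ⟨g, hg, hgf⟩ := f_mem
  exact Column.ext hgf ▸ hg

theorem hasColumnsIn_tensor_start {s : Set (Fin (M + 1))} (hn : IsRight n) (hh : IsAcyclic h)
    (hd : h.dom = u) (hc : h.cod = n) : HasColumnsIn (lastRowIn hn s) u (h ⊗ start) := by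
  induction u generalizing h with
  | nil => trivial
  | cons o u ih =>
    have hu := hh.isRight.1
    rw [hd, isRight_cons] at hu
    obtain ⟨rfl, hu⟩ := hu
    let f : Column M n :=
      { diag := 𝟙 [▶] ⊗ startWord u ⊳ h
        isAcyclic := ((IsAcyclic.ident (by simp)).tensor (isAcyclic_startWord hu)).comp hh
          (by simp [hd])
        dom_eq := by simp
        cod_eq := by simp [hc] }
    have absorb (g : Diag M) (hg : g.cod = h.dom) : (g ⊳ h) ⊗ start = g ⊳ h ⊗ start := by
      simpa using comp_tensor start hg
    refine ⟨⟨f.tensorStart, tensorStart_mem_lastRowIn hn s f, ?_⟩, ?_⟩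
    · simpa [f, tensorStart] using absorb _ (by simp [hd])
    · have rest := ih (h := start ⊗ 𝟙 u ⊳ h)
        (((IsAcyclic.of .start).tensor (.ident hu)).comp hh (by simp [hd])) (by simp) (by simp [hc])
      simpa [startObj, absorb (start ⊗ 𝟙 u) (by simp [hd])] using rest

theorem lastRowIn_univ (hn : IsRight n) : lastRowIn (M := M) hn Set.univ = Set.univ := by
  refine (isClosedUnderPlay_lastRowIn hn).eq_univ ((hasColumnsIn_append (by simp)).2 ⟨?_, ?_⟩)
  · simpa using hasColumnsIn_tensor_start hn (.ident hn) rfl rfl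
  · have priority_zero : priority 0 = (𝟙 [▶] : Diag M) := eq_of_pgaEq .C4
    rw [hasColumnsIn_singleton (by simp), comp_ident (by simp), ← priority_zero]
    exact ⟨_, startPriority_mem_lastRowIn hn (Set.mem_univ 0), rfl⟩

end HasColumnsIn

end Column

section Feedback

variable {u w : Word} {F : Diag M}

theorem trace_comp_start (hd : F.dom = u ++ [▶]) (hc : F.cod = w) :
    trace u w (F ⊳ 𝟙 w ⊗ start) = 𝟙 u ⊗ start ⊳ F := by
  subst hc
  have start_capSwap : start ⊗ 𝟙 [◀] ⊳ capSwap = (𝟙 [◀] ⊗ start ⊳ cap : Diag M) := by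
    simpa [capSwap] using congrArg (· ⊳ cap) (tensor_ident_comp_swap (M := M) start [◀])
  have exchange_F := whisker_exchange F (𝟙 [◀] ⊗ start ⊳ cap)
  have exchange_cup := congrArg (𝟙 u ⊗ ·) (whisker_exchange (M := M) cup start)
  simp only [hd] at exchange_F
  calc trace u F.cod (F ⊳ 𝟙 F.cod ⊗ start)
      = 𝟙 u ⊗ cup ⊳ F ⊗ 𝟙 [◀] ⊳ 𝟙 F.cod ⊗ (start ⊗ 𝟙 [◀] ⊳ capSwap) := by simp [trace]
    _ = 𝟙 u ⊗ (cup ⊳ 𝟙 [▶, ◀] ⊗ start) ⊳ 𝟙 (u ++ [▶]) ⊗ cap ⊳ F := by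
        rw [start_capSwap]
        simpa using congrArg (𝟙 u ⊗ cup ⊳ ·) exchange_F
    _ = 𝟙 u ⊗ start ⊳ 𝟙 u ⊗ (cup ⊗ 𝟙 [▶] ⊳ 𝟙 [▶] ⊗ cap) ⊳ F := by
        simpa using congrArg (· ⊳ 𝟙 (u ++ [▶]) ⊗ cap ⊳ F) exchange_cup
    _ = 𝟙 u ⊗ start ⊳ F := by
        rw [cup_zigzag]
        simp [hd, ident_comp]

/-- Two nested loops opened by `cup`. -/
def nestedCup : Diag M := cup ⊳ 𝟙 [▶] ⊗ cup ⊗ 𝟙 [◀]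

/-- Closes the two loops opened by `nestedCup`. -/
def nestedCapSwap : Diag M := 𝟙 [▶] ⊗ capSwap ⊗ 𝟙 [◀] ⊳ capSwap

@[simp] theorem nestedCup_dom : (nestedCup : Diag M).dom = [] := by simp [nestedCup]
@[simp] theorem nestedCup_cod : (nestedCup : Diag M).cod = [▶, ▶, ◀, ◀] := by simp [nestedCup]
@[simp] theorem nestedCapSwap_dom : (nestedCapSwap : Diag M).dom = [▶, ▶, ◀, ◀] := by
  simp [nestedCapSwap]
@[simp] theorem nestedCapSwap_cod : (nestedCapSwap : Diag M).cod = [] := by simp [nestedCapSwap]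

theorem trace_trace_eq_nested : trace u w (trace (u ++ [▶]) (w ++ [▶]) F) =
    𝟙 u ⊗ nestedCup ⊳ F ⊗ 𝟙 [◀, ◀] ⊳ 𝟙 w ⊗ nestedCapSwap := by
  simp [trace, nestedCup, nestedCapSwap]

theorem trace_swap_pair_singleton : trace [▶, ▶] [▶, ▶] (swap [▶, ▶] [▶]) =
    (swap [▶] [▶] : Diag M) :=
  calc trace [▶, ▶] [▶, ▶] (swap [▶, ▶] [▶])
      = trace [▶, ▶] [▶, ▶] (𝟙 [▶] ⊗ swap [▶] [▶] ⊳ swap [▶] [▶] ⊗ 𝟙 [▶]) := by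
        rw [swap_cons_left ▶ [▶]]
    _ = trace [▶, ▶] [▶, ▶] (𝟙 [▶] ⊗ swap [▶] [▶]) ⊳ swap [▶] [▶] :=
        trace_comp_right rfl
    _ = (𝟙 [▶] ⊗ trace [▶] [▶] (swap [▶] [▶])) ⊳ swap [▶] [▶] := by
        rw [ident_tensor_trace]; rfl
    _ = swap [▶] [▶] := by simp [trace_swap]

theorem nested_swap : 𝟙 [▶, ▶] ⊗ nestedCup ⊳ swap [▶, ▶] [▶, ▶] ⊗ 𝟙 [◀, ◀] ⊳
    𝟙 [▶, ▶] ⊗ nestedCapSwap = (𝟙 [▶, ▶] : Diag M) :=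
  calc 𝟙 [▶, ▶] ⊗ nestedCup ⊳ swap [▶, ▶] [▶, ▶] ⊗ 𝟙 [◀, ◀] ⊳ 𝟙 [▶, ▶] ⊗ nestedCapSwap
      = trace [▶, ▶] [▶, ▶] (trace [▶, ▶, ▶] [▶, ▶, ▶] (swap [▶, ▶] [▶, ▶])) :=
        trace_trace_eq_nested.symm
    _ = trace [▶, ▶] [▶, ▶] (trace [▶, ▶, ▶] [▶, ▶, ▶]
          (swap [▶, ▶] [▶] ⊗ 𝟙 [▶] ⊳ 𝟙 [▶] ⊗ swap [▶, ▶] [▶])) := by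
        rw [swap_cons_right [▶, ▶] ▶ [▶]]
    _ = trace [▶, ▶] [▶, ▶]
          (swap [▶, ▶] [▶] ⊳ trace [▶, ▶, ▶] [▶, ▶, ▶] (𝟙 [▶] ⊗ swap [▶, ▶] [▶])) :=
        congrArg _ (trace_comp_left (g := swap [▶, ▶] [▶]) rfl)
    _ = trace [▶, ▶] [▶, ▶]
          (swap [▶, ▶] [▶] ⊳ 𝟙 [▶] ⊗ trace [▶, ▶] [▶, ▶] (swap [▶, ▶] [▶])) := by
        rw [ident_tensor_trace]; rfl
    _ = 𝟙 [▶, ▶] := by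
        rw [trace_swap_pair_singleton]
        exact trace_swap_append [▶]

/-- The mate `◀ → ◀◀` of `merge`. -/
def mergeMate : Diag M := 𝟙 [◀] ⊗ (nestedCup ⊳ merge ⊗ 𝟙 [◀, ◀]) ⊳ cap ⊗ 𝟙 [◀, ◀]

@[simp] theorem mergeMate_dom : (mergeMate : Diag M).dom = [◀] := by simp [mergeMate]
@[simp] theorem mergeMate_cod : (mergeMate : Diag M).cod = [◀, ◀] := by simp [mergeMate]

theorem cup_comp_mergeMate :
    cup ⊳ 𝟙 [▶] ⊗ mergeMate = (nestedCup ⊳ merge ⊗ 𝟙 [◀, ◀] : Diag M) := by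
  have exchange := whisker_exchange (M := M) cup (nestedCup ⊳ merge ⊗ 𝟙 [◀, ◀])
  calc cup ⊳ 𝟙 [▶] ⊗ mergeMate
      = (cup ⊳ 𝟙 [▶, ◀] ⊗ (nestedCup ⊳ merge ⊗ 𝟙 [◀, ◀])) ⊳ 𝟙 [▶] ⊗ cap ⊗ 𝟙 [◀, ◀] := by
        simp [mergeMate]
    _ = (nestedCup ⊳ merge ⊗ 𝟙 [◀, ◀]) ⊳ (cup ⊗ 𝟙 [▶] ⊳ 𝟙 [▶] ⊗ cap) ⊗ 𝟙 [◀, ◀] := by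
        simpa using congrArg (· ⊳ 𝟙 [▶] ⊗ cap ⊗ 𝟙 [◀, ◀]) exchange
    _ = nestedCup ⊳ merge ⊗ 𝟙 [◀, ◀] := by rw [cup_zigzag]; simp

theorem mergeMate_comp_nestedCapSwap :
    𝟙 [▶, ▶] ⊗ mergeMate ⊳ nestedCapSwap = (merge ⊗ 𝟙 [◀] ⊳ capSwap : Diag M) := by
  let evaluate : Diag M := 𝟙 [◀] ⊗ merge ⊳ cap
  have slide := ident_tensor_comp_swap evaluate [▶, ▶]
  have exchange_caps := whisker_exchange evaluate nestedCapSwap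
  have exchange_cups := whisker_exchange (M := M) (swap [▶, ▶] [◀]) nestedCup
  calc 𝟙 [▶, ▶] ⊗ mergeMate ⊳ nestedCapSwap
      = 𝟙 [▶, ▶, ◀] ⊗ nestedCup ⊳ (𝟙 [▶, ▶] ⊗ evaluate) ⊗ 𝟙 [◀, ◀] ⊳ nestedCapSwap := by
        simp [mergeMate, evaluate]
    _ = 𝟙 [▶, ▶, ◀] ⊗ nestedCup ⊳ swap [▶, ▶] [◀, ▶, ▶] ⊗ 𝟙 [◀, ◀] ⊳
          evaluate ⊗ 𝟙 [▶, ▶, ◀, ◀] ⊳ nestedCapSwap := by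
        simpa [evaluate] using
          congrArg (fun t => 𝟙 [▶, ▶, ◀] ⊗ nestedCup ⊳ t ⊗ 𝟙 [◀, ◀] ⊳ nestedCapSwap) slide
    _ = 𝟙 [▶, ▶, ◀] ⊗ nestedCup ⊳ swap [▶, ▶] [◀, ▶, ▶] ⊗ 𝟙 [◀, ◀] ⊳
          𝟙 [◀, ▶, ▶] ⊗ nestedCapSwap ⊳ evaluate := by
        simpa [evaluate] using congrArg
          (𝟙 [▶, ▶, ◀] ⊗ nestedCup ⊳ swap [▶, ▶] [◀, ▶, ▶] ⊗ 𝟙 [◀, ◀] ⊳ ·) exchange_caps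
    _ = swap [▶, ▶] [◀] ⊳ 𝟙 [◀] ⊗ (𝟙 [▶, ▶] ⊗ nestedCup ⊳ swap [▶, ▶] [▶, ▶] ⊗ 𝟙 [◀, ◀] ⊳
          𝟙 [▶, ▶] ⊗ nestedCapSwap) ⊳ evaluate := by
        rw [swap_cons_right [▶, ▶] ◀ [▶, ▶]]
        simpa using congrArg (· ⊳ 𝟙 [◀] ⊗ swap [▶, ▶] [▶, ▶] ⊗ 𝟙 [◀, ◀] ⊳
          𝟙 [◀, ▶, ▶] ⊗ nestedCapSwap ⊳ evaluate) exchange_cups.symm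
    _ = swap [▶, ▶] [◀] ⊳ evaluate := by
        rw [nested_swap]
        simp [evaluate]
    _ = merge ⊗ 𝟙 [◀] ⊳ capSwap := by
        simpa [capSwap] using congrArg (· ⊳ cap) (tensor_ident_comp_swap (M := M) merge [◀]).symm

theorem trace_comp_merge (hd : F.dom = u ++ [▶]) (hc : F.cod = w ++ [▶, ▶]) :
    trace u w (F ⊳ 𝟙 w ⊗ merge) =
      trace u w (trace (u ++ [▶]) (w ++ [▶]) (𝟙 u ⊗ merge ⊳ F)) := by
  have exchange := whisker_exchange F mergeMate
  simp only [hd, hc, mergeMate_dom, mergeMate_cod] at exchange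
  calc trace u w (F ⊳ 𝟙 w ⊗ merge)
      = 𝟙 u ⊗ cup ⊳ F ⊗ 𝟙 [◀] ⊳ 𝟙 w ⊗ (merge ⊗ 𝟙 [◀] ⊳ capSwap) := by simp [trace]
    _ = 𝟙 u ⊗ (cup ⊳ 𝟙 [▶] ⊗ mergeMate) ⊳ F ⊗ 𝟙 [◀, ◀] ⊳ 𝟙 w ⊗ nestedCapSwap := by
        rw [← mergeMate_comp_nestedCapSwap]
        simpa using congrArg (𝟙 u ⊗ cup ⊳ · ⊳ 𝟙 w ⊗ nestedCapSwap) exchange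
    _ = trace u w (trace (u ++ [▶]) (w ++ [▶]) (𝟙 u ⊗ merge ⊳ F)) := by
        rw [cup_comp_mergeMate, trace_trace_eq_nested]
        simp

/-- The loop that merges the last output of `h : ▶ → w▶` into its input. -/
def feedback (w : Word) (h : Diag M) : Diag M := trace [▶] w (merge ⊳ h)

@[simp] theorem feedback_dom : (feedback w F).dom = [▶] := by simp [feedback]
@[simp] theorem feedback_cod : (feedback w F).cod = w := by simp [feedback]

theorem feedback_tensor_start (hd : F.dom = [▶]) (hc : F.cod = w) :
    feedback w (F ⊗ start) = F := by
  have opened := trace_comp_start (u := [▶]) (F := merge ⊳ F) (by simp) (by simpa using hc)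
  have split : F ⊗ start = F ⊳ 𝟙 w ⊗ start := by
    simpa [hc] using tensor_eq_left_comp_right F start
  rw [feedback, split, ← comp_assoc, opened, ← comp_assoc, tensor_start_comp_merge, ident_comp hd]

theorem feedback_comp_merge (hc : F.cod = w ++ [▶, ▶]) :
    feedback w (F ⊳ 𝟙 w ⊗ merge) = feedback w (feedback (w ++ [▶]) F) := by
  have nested := trace_comp_merge (u := [▶]) (F := merge ⊳ F) (by simp) (by simpa using hc)
  have pull := trace_comp_left (g := merge) (w := w ++ [▶]) (F := merge ⊳ F) rfl
  have reassoc : merge ⊗ 𝟙 [▶] ⊳ merge ⊳ F = 𝟙 [▶] ⊗ merge ⊳ merge ⊳ F := by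
    simpa using congrArg (· ⊳ F) (merge_assoc (M := M))
  rw [feedback, ← comp_assoc, nested, ← reassoc]
  exact congrArg _ pull

theorem tensor_trace (f : Diag M) (hd : F.dom = u ++ [▶]) :
    f ⊗ trace u w F = trace (f.dom ++ u) (f.cod ++ w) (f ⊗ F) := by
  have pull := trace_comp_left (g := f ⊗ 𝟙 u) (w := f.cod ++ w) (F := 𝟙 f.cod ⊗ F)
    (u := f.cod ++ u) (by simp)
  calc f ⊗ trace u w F
      = f ⊗ 𝟙 u ⊳ trace (f.cod ++ u) (f.cod ++ w) (𝟙 f.cod ⊗ F) := by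
        rw [tensor_eq_left_comp_right, trace_dom, ident_tensor_trace]
    _ = trace (f.dom ++ u) (f.cod ++ w) (f ⊗ 𝟙 (u ++ [▶]) ⊳ 𝟙 f.cod ⊗ F) := by
        simpa using pull.symm
    _ = trace (f.dom ++ u) (f.cod ++ w) (f ⊗ F) := by rw [← hd, ← tensor_eq_left_comp_right]

theorem trace_tensor_comp_swap {f g : Diag M} (hf : f.cod = w ++ [▶]) (hg : g.dom = [▶]) :
    trace f.dom (w ++ g.cod) (f ⊗ g ⊳ 𝟙 w ⊗ swap [▶] g.cod) = f ⊳ 𝟙 w ⊗ g := by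
  have slide : 𝟙 (w ++ [▶]) ⊗ g ⊳ 𝟙 w ⊗ swap [▶] g.cod = 𝟙 w ⊗ swap [▶] [▶] ⊳ 𝟙 w ⊗ g ⊗ 𝟙 [▶] := by
    simpa [hg] using congrArg (𝟙 w ⊗ ·) (ident_tensor_comp_swap g [▶])
  have split := tensor_eq_left_comp_right f g
  have push := trace_comp_right (u := f.dom) (F := f ⊗ 𝟙 [▶] ⊳ 𝟙 w ⊗ swap [▶] [▶])
    (g := 𝟙 w ⊗ g) (w := w ++ [▶]) (by simp [hg])
  have pull := trace_comp_left (g := f) (u := w ++ [▶]) (w := w ++ [▶])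
    (F := 𝟙 w ⊗ swap [▶] [▶]) hf
  calc trace f.dom (w ++ g.cod) (f ⊗ g ⊳ 𝟙 w ⊗ swap [▶] g.cod)
      = trace f.dom (w ++ g.cod) (f ⊗ 𝟙 [▶] ⊳ 𝟙 w ⊗ swap [▶] [▶] ⊳ 𝟙 w ⊗ g ⊗ 𝟙 [▶]) := by
        rw [split, comp_assoc, hf, hg, slide]
    _ = trace f.dom (w ++ [▶]) (f ⊗ 𝟙 [▶] ⊳ 𝟙 w ⊗ swap [▶] [▶]) ⊳ 𝟙 w ⊗ g := by
        simpa using push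
    _ = f ⊳ (𝟙 w ⊗ trace [▶] [▶] (swap [▶] [▶])) ⊳ 𝟙 w ⊗ g := by
        rw [pull, ident_tensor_trace, comp_assoc]
    _ = f ⊳ 𝟙 w ⊗ g := by simp [trace_swap, hg, ident_comp]

theorem mergeWord_append_singleton (w : Word) : (mergeWord (w ++ [▶]) : Diag M) =
    (𝟙 w ⊗ swap [▶] w ⊳ mergeWord w ⊗ 𝟙 [▶]) ⊗ 𝟙 [▶] ⊳ 𝟙 w ⊗ merge := by
  have split := tensor_eq_left_comp_right (M := M) (mergeWord w) merge
  rw [mergeWord_append, mergeWord_singleton, split]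
  simp

theorem trace_tensor_comp_mergeWord {f g : Diag M} (hf : f.cod = w ++ [▶]) (hfd : f.dom = u)
    (hg : g.dom = [▶]) :
    trace u w (f ⊗ g ⊳ mergeWord (w ++ [▶])) = f ⊳ 𝟙 w ⊗ feedback w g ⊳ mergeWord w := by
  subst hfd
  let route : Diag M := 𝟙 w ⊗ swap [▶] w ⊳ mergeWord w ⊗ 𝟙 [▶]
  have slide_merge := trace_comp_merge (u := f.dom) (w := w) (F := f ⊗ g ⊳ route ⊗ 𝟙 [▶])
    (by simp [hg]) (by simp [route])
  have slide_route := trace_comp_right (u := f.dom ++ [▶]) (w := f.cod ++ w)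
    (F := f ⊗ (merge ⊳ g)) (g := route) (by simp [route, hf])
  have slide_mergeWord := trace_comp_right (u := f.dom) (w := w ++ w)
    (F := f ⊗ feedback w g ⊳ 𝟙 w ⊗ swap [▶] w) (g := mergeWord w) (by simp)
  have yank := trace_tensor_comp_swap (w := w) (g := feedback w g) hf (by simp)
  calc trace f.dom w (f ⊗ g ⊳ mergeWord (w ++ [▶]))
      = trace f.dom w ((f ⊗ g ⊳ route ⊗ 𝟙 [▶]) ⊳ 𝟙 w ⊗ merge) := by
        rw [mergeWord_append_singleton, comp_assoc]
    _ = trace f.dom w (trace (f.dom ++ [▶]) (w ++ [▶]) (f ⊗ (merge ⊳ g) ⊳ route ⊗ 𝟙 [▶])) := by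
        rw [slide_merge, ← comp_assoc, ← tensor_comp f hg.symm]
    _ = trace f.dom w (trace (f.dom ++ [▶]) (f.cod ++ w) (f ⊗ (merge ⊳ g)) ⊳ route) := by
        rw [← slide_route]; simp [route]
    _ = trace f.dom w (f ⊗ feedback w g ⊳ route) := by
        rw [← tensor_trace f (by simp)]; rfl
    _ = f ⊳ 𝟙 w ⊗ feedback w g ⊳ mergeWord w := by
        simp only [feedback_cod, mergeWord_cod] at yank slide_mergeWord
        rw [← comp_assoc f, ← yank, ← slide_mergeWord, comp_assoc]

theorem trace_eq_comp_feedback (hF : IsAcyclic F) (hd : F.dom = u ++ [▶]) (hc : F.cod = w ++ [▶]) :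
    trace u w F =
      (𝟙 u ⊗ start ⊳ F) ⊳ 𝟙 w ⊗ feedback w (startWord u ⊗ 𝟙 [▶] ⊳ F) ⊳ mergeWord w := by
  have split := hF.eq_tensor_comp_mergeWord hd
  rw [hc, startWord_singleton] at split
  exact (congrArg (trace u w) split).trans
    (trace_tensor_comp_mergeWord (by simp [hc]) (by simp) (by simp))

end Feedback

section Parity

/-- The loop body `▶ → ▶▶▶` of the parity axiom, with the wire that is fed back last. -/
def parityBranch (p : Fin (M + 1)) : Diag M :=
  player0 ⊳ (player1 ⊳ 𝟙 [▶] ⊗ priority p) ⊗ 𝟙 [▶] ⊳ 𝟙 [▶] ⊗ swap [▶] [▶]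

theorem feedback_parityBranch (p : Fin (M + 1)) :
    feedback [▶, ▶] (parityBranch p) = of (parityLHS M p) := by
  have close_loop : swap [▶] [▶] ⊗ 𝟙 [◀] ⊳ 𝟙 [▶] ⊗ capSwap =
      (𝟙 [▶] ⊗ swap [▶] [◀] ⊳ capSwap ⊗ 𝟙 [▶] : Diag M) := by
    have slide := tensor_ident_comp_swap (M := M) capSwap [▶]
    simpa [swap_cons_left ▶ [◀]] using (congrArg (𝟙 [▶] ⊗ swap [▶] [◀] ⊳ ·) slide).symm
  calc feedback [▶, ▶] (parityBranch p)
      = 𝟙 [▶] ⊗ cup ⊳ (merge ⊳ player0 ⊳ (player1 ⊳ 𝟙 [▶] ⊗ priority p) ⊗ 𝟙 [▶]) ⊗ 𝟙 [◀] ⊳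
          𝟙 [▶] ⊗ (swap [▶] [▶] ⊗ 𝟙 [◀] ⊳ 𝟙 [▶] ⊗ capSwap) := by
        simp [feedback, trace, parityBranch]
    _ = (((𝟙 [▶] ⊗ cup ⊳
          ((merge ⊳ player0) ⊳ (player1 ⊳ 𝟙 [▶] ⊗ priority p) ⊗ 𝟙 [▶]) ⊗ 𝟙 [◀]) ⊳
          (𝟙 [▶] ⊗ 𝟙 [▶]) ⊗ swap [▶] [◀]) ⊳ (𝟙 [▶] ⊗ swap [▶] [◀]) ⊗ 𝟙 [▶]) ⊳
          (𝟙 [▶] ⊗ cap) ⊗ 𝟙 [▶] := by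
        rw [close_loop]
        simp [capSwap]
    _ = of (parityLHS M p) := rfl

theorem feedback_parityBranch_of_even {p : Fin (M + 1)} (hp : Even p.val) :
    feedback [▶, ▶] (parityBranch p) = player0 :=
  (feedback_parityBranch p).trans (eq_of_pgaEq (.parity_even p hp))

theorem feedback_parityBranch_of_odd {p : Fin (M + 1)} (hp : Odd p.val) :
    feedback [▶, ▶] (parityBranch p) = start ⊗ 𝟙 [▶] :=
  (feedback_parityBranch p).trans (eq_of_pgaEq (.parity_odd p hp))

theorem mergeWord_right_comm {w : Word} (h : IsRight w) :
    𝟙 w ⊗ swap w w ⊳ mergeWord w ⊗ 𝟙 w ⊳ mergeWord w =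
      (mergeWord w ⊗ 𝟙 w ⊳ mergeWord w : Diag M) := by
  have absorb := congrArg (𝟙 w ⊗ · ⊳ mergeWord w) (swap_comp_mergeWord (M := M) h)
  rw [mergeWord_assoc h]
  simpa using absorb

theorem startWord_comp_mergeWord_append_singleton {w : Word} (h : IsRight w) :
    𝟙 (w ++ [▶]) ⊗ startWord w ⊗ 𝟙 [▶] ⊳ mergeWord (w ++ [▶]) = (𝟙 w ⊗ merge : Diag M) := by
  have slide := congrArg (𝟙 w ⊗ · ⊗ 𝟙 [▶] ⊳ mergeWord w ⊗ 𝟙 [▶, ▶] ⊳ 𝟙 w ⊗ merge)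
    (ident_tensor_comp_swap (M := M) (startWord w) [▶])
  have unit := congrArg (· ⊗ 𝟙 [▶, ▶] ⊳ 𝟙 w ⊗ merge) (tensor_startWord_comp_mergeWord (M := M) h)
  rw [mergeWord_append_singleton]
  exact (by simpa using slide : _ = 𝟙 w ⊗ startWord w ⊗ 𝟙 [▶, ▶] ⊳ mergeWord w ⊗ 𝟙 [▶, ▶] ⊳
    𝟙 w ⊗ merge).trans (by simpa using unit)

end Parity

namespace Column

theorem tensor_right_comm {w : Word} (f g h : Column M w) :
    (f.diag ⊗ g.diag ⊳ mergeWord w) ⊗ h.diag ⊳ mergeWord w =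
      𝟙 [▶] ⊗ swap [▶] [▶] ⊳ (f.diag ⊗ h.diag ⊳ mergeWord w) ⊗ g.diag ⊳ mergeWord w := by
  have slide := congrArg (f.diag ⊗ ·) (tensor_comp_swap g.diag h.diag)
  simp only [dom_eq, cod_eq] at slide
  rw [tensor_comp_right _ (by simp), tensor_comp _ (by simp), dom_eq, cod_eq] at slide
  rw [comp_tensor_right _ (by simp), comp_tensor_right _ (by simp), cod_eq, cod_eq, comp_assoc,
    comp_assoc, ← mergeWord_right_comm f.isRight, tensor_assoc, tensor_assoc,
    ← comp_assoc (f.diag ⊗ _), slide, comp_assoc, mergeWord_right_comm f.isRight]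

variable {w : Word} (hw : IsRight w)

section PriorityElimination

variable (p : Fin (M + 1)) (f g : Column M (w ++ [▶]))

theorem tensor_startPriority_comp_mergeWord {F : Diag M} (hc : F.cod = w ++ [▶]) :
    F ⊗ (startPriority hw p).diag ⊳ mergeWord (w ++ [▶]) =
      𝟙 F.dom ⊗ priority p ⊳ F ⊗ 𝟙 [▶] ⊳ 𝟙 w ⊗ merge := by
  have split : (startPriority hw p).diag = priority p ⊳ startWord w ⊗ 𝟙 [▶] := by
    simpa [startPriority] using tensor_eq_right_comp_left (startWord w) (priority p)
  have split_F : F ⊗ priority p = 𝟙 F.dom ⊗ priority p ⊳ F ⊗ 𝟙 [▶] := by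
    simpa using tensor_eq_right_comp_left F (priority p)
  rw [split, tensor_comp_right F (by simp), comp_assoc, hc,
    startWord_comp_mergeWord_append_singleton hw, split_F, comp_assoc]

theorem inf_startPriority_sup_diag :
    (f ⊓ startPriority hw p ⊔ g).diag =
      (parityBranch p ⊳ (f.diag ⊗ g.diag ⊳ mergeWord (w ++ [▶])) ⊗ 𝟙 [▶]) ⊳ 𝟙 w ⊗ merge := by
  let x := startPriority hw p
  calc (f ⊓ x ⊔ g).diag
      = player0 ⊳ (player1 ⊳ f.diag ⊗ x.diag ⊳ mergeWord (w ++ [▶])) ⊗ g.diag ⊳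
          mergeWord (w ++ [▶]) := rfl
    _ = player0 ⊳ player1 ⊗ 𝟙 [▶] ⊳ (f.diag ⊗ x.diag ⊳ mergeWord (w ++ [▶])) ⊗ g.diag ⊳
          mergeWord (w ++ [▶]) := by
        rw [comp_tensor g.diag (by simp), g.dom_eq, comp_assoc]
    _ = player0 ⊳ player1 ⊗ 𝟙 [▶] ⊳ 𝟙 [▶] ⊗ swap [▶] [▶] ⊳
          (f.diag ⊗ g.diag ⊳ mergeWord (w ++ [▶])) ⊗ x.diag ⊳ mergeWord (w ++ [▶]) := by
        rw [tensor_right_comm]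
    _ = player0 ⊳ player1 ⊗ 𝟙 [▶] ⊳ 𝟙 [▶] ⊗ swap [▶] [▶] ⊳ 𝟙 [▶, ▶] ⊗ priority p ⊳
          (f.diag ⊗ g.diag ⊳ mergeWord (w ++ [▶])) ⊗ 𝟙 [▶] ⊳ 𝟙 w ⊗ merge := by
        rw [tensor_startPriority_comp_mergeWord hw p (by simp)]
        simp
    _ = (parityBranch p ⊳ (f.diag ⊗ g.diag ⊳ mergeWord (w ++ [▶])) ⊗ 𝟙 [▶]) ⊳ 𝟙 w ⊗ merge := by
        have slide := congrArg (𝟙 [▶] ⊗ ·) (tensor_ident_comp_swap (priority p) [▶])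
        simpa [parityBranch] using congrArg (player0 ⊳ player1 ⊗ 𝟙 [▶] ⊳ · ⊳
          (f.diag ⊗ g.diag ⊳ mergeWord (w ++ [▶])) ⊗ 𝟙 [▶] ⊳ 𝟙 w ⊗ merge) slide.symm

theorem feedback_inf_startPriority_sup : feedback w (f ⊓ startPriority hw p ⊔ g).diag =
    feedback w (feedback [▶, ▶] (parityBranch p) ⊳ f.diag ⊗ g.diag ⊳ mergeWord (w ++ [▶])) := by
  have push := trace_comp_right (u := [▶]) (w := [▶, ▶]) (F := merge ⊳ parityBranch p)
    (g := f.diag ⊗ g.diag ⊳ mergeWord (w ++ [▶])) (by simp)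
  rw [inf_startPriority_sup_diag, feedback_comp_merge (by simp)]
  simpa [feedback] using congrArg (feedback w) push

theorem feedback_inf_startPriority_sup_of_even {p : Fin (M + 1)} (hp : Even p.val) :
    feedback w (f ⊓ startPriority hw p ⊔ g).diag = feedback w (f ⊔ g).diag := by
  rw [feedback_inf_startPriority_sup, feedback_parityBranch_of_even hp]
  rfl

theorem feedback_inf_startPriority_sup_of_odd {p : Fin (M + 1)} (hp : Odd p.val) :
    feedback w (f ⊓ startPriority hw p ⊔ g).diag = feedback w g.diag := by
  rw [feedback_inf_startPriority_sup, feedback_parityBranch_of_odd hp, ← comp_assoc,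
    ← comp_tensor_comp (by simp) (by simp), ident_comp g.dom_eq, start_comp,
    tensor_eq_right_comp_left]
  simp [startWord_tensor_comp_mergeWord g.isRight]

end PriorityElimination

section IsAcyclicFeedback

theorem lastRowIn_empty : lastRowIn (M := M) hw ∅ = Set.range tensorStart := by
  rw [lastRowIn, Set.image_empty, Set.union_empty, ← Set.image_univ]
  exact (isSublattice_univ.image (tensorStartHom M w)).latticeClosure_eq

theorem lastRowIn_insert (p : Fin (M + 1)) (s : Set (Fin (M + 1))) :
    lastRowIn hw (insert p s) = latticeClosure
      (insert (startPriority hw p) (Set.range tensorStart ∪ startPriority hw '' s)) := by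
  rw [lastRowIn, Set.image_insert_eq, Set.union_insert]

theorem loss_mem_lastRowIn (s : Set (Fin (M + 1))) (i : Bool) (hw' : IsRight (w ++ [▶])) :
    loss i hw' ∈ lastRowIn hw s :=
  loss_append_singleton i hw hw' ▸ tensorStart_mem_lastRowIn hw s _

theorem isAcyclic_feedback_of_mem_lastRowIn {s : Set (Fin (M + 1))} (hs : s.Finite)
    {f : Column M (w ++ [▶])} (hf : f ∈ lastRowIn hw s) : IsAcyclic (feedback w f.diag) := by
  induction s, hs using Set.Finite.induction_on generalizing f with
  | empty =>
    obtain ⟨f, rfl⟩ := lastRowIn_empty hw ▸ hf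
    exact (feedback_tensor_start f.dom_eq f.cod_eq).symm ▸ f.isAcyclic
  | @insert p s _ _ ih =>
    rw [lastRowIn_insert] at hf
    obtain ⟨c, hc, a, ha, rfl⟩ := exists_eq_sup_inf_of_mem_latticeClosure_insert
      (isBot_loss f.isRight) (isTop_loss f.isRight) (loss_mem_lastRowIn hw s false f.isRight)
      (loss_mem_lastRowIn hw s true f.isRight) hf
    rw [sup_comm]
    obtain hp | hp := Nat.even_or_odd p.val
    · rw [feedback_inf_startPriority_sup_of_even hw a c hp]
      exact ih (isSublattice_latticeClosure.supClosed ha hc)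
    · rw [feedback_inf_startPriority_sup_of_odd hw a c hp]
      exact ih hc

theorem isAcyclic_feedback (f : Column M (w ++ [▶])) : IsAcyclic (feedback w f.diag) :=
  have hw : IsRight w := (isRight_append.1 f.isRight).1
  isAcyclic_feedback_of_mem_lastRowIn hw Set.finite_univ (lastRowIn_univ hw ▸ Set.mem_univ f)

end IsAcyclicFeedback

end Column

theorem acyclicTraces : AcyclicTraces M := by
  intro u w F hF hd hc
  have hu : IsRight u := (isRight_append.1 (hd ▸ hF.isRight.1)).1
  have hw : IsRight w := (isRight_append.1 (hc ▸ hF.isRight.2)).1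
  let f : Column M (w ++ [▶]) :=
    { diag := startWord u ⊗ 𝟙 [▶] ⊳ F
      isAcyclic := ((isAcyclic_startWord hu).tensor (.ident (by simp))).comp hF (by simp [hd])
      dom_eq := by simp
      cod_eq := by simp [hc] }
  have direct : IsAcyclic (𝟙 u ⊗ start ⊳ F) :=
    ((IsAcyclic.ident hu).tensor (.of .start)).comp hF (by simp [hd])
  rw [trace_eq_comp_feedback hF hd hc]
  exact direct.comp (((IsAcyclic.ident hw).tensor f.isAcyclic_feedback).comp
    (isAcyclic_mergeWord hw) (by simp)) (by simp [hc])

theorem isAcyclic_of_iff {u w : Word} {d : Syn M u w} :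
    IsAcyclic (of d) ↔ ∃ d' : Syn M u w, Acyclic d' ∧ PGAeq d d' := by
  constructor
  · rintro ⟨u', w', d', hd', h⟩
    obtain rfl : u = u' := by simpa using congrArg dom h
    obtain rfl : w = w' := by simpa using congrArg cod h
    exact ⟨d', hd', of_eq_of.1 h⟩
  · rintro ⟨d', hd', h⟩
    exact ⟨u, w, d', hd', of_eq_of.2 h⟩

end Diag

/-- **Statement 9** (Loop removal). Every diagram `d : ▶^m → ▶^n` is PGA-equal to an
acyclic one, i.e. to a diagram composed only of the generators
`player0, lose0, player1, lose1, merge, start, priority p` (no `cup` or `cap`). -/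
theorem loop_removal (M : ℕ) (hM : 2 ≤ M) (m n : ℕ) (d : Syn M (rword m) (rword n)) :
    ∃ d' : Syn M (rword m) (rword n), Acyclic d' ∧ PGAeq d d' :=
  Diag.isAcyclic_of_iff.1 <|
    Diag.isAcyclic_of_acyclicTraces Diag.acyclicTraces (Diag.isRight_rword m)
      (Diag.isRight_rword n) d

end PaperPG
end

section
/- (Soundness of the distributivity axiom B20, semantically) Let L be the open parity game with one entry position 1, three exit positions 1, 2, 3, all internal priorities 0, internal positions u (owned by Player 0) and w (owned by Player 1), and edges: entry 1 → u, u → w, u → exit 3, w → exit 1, w → exit 2. Let R be the open parity game with one entry position 1, three exit positions 1, 2, 3, all internal priorities 0, internal positions w′ (owned by Player 1), u₁ and u₂ (owned by Player 0) and m (owned by Player 1), and edges: entry 1 → w′, w′ → u₁, w′ → u₂, u₁ → exit 1, u₁ → m, u₂ → exit 2, u₂ → m, m → exit 3. Then ⟦L⟧ = ⟦R⟧ = {(T,1) : T ⊆ {1,2,3}×ℙ and ({(1,0),(2,0)} ⊆ T or (3,0) ∈ T)}. -/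
/-!
When all priorities are even, Player 1 can only profit from exits and from dead ends of Player 0,
so the game is a safety game. Let `X` be a set of permitted exits and call a position *safe* if it
is outside the attractor, for Player 1, of the forbidden exits and the dead ends of Player 0. On
safe positions Player 0 has a move to a safe position and every move of Player 1 leads to one,
hence always moving to a safe position keeps the play safe. Conversely, from an attracted position
any strategy of Player 0 is beaten by induction along the attractor: at each position of Player 1,
redirect the choice made for the current history towards the forbidden exit or the dead end.

Safety is a disjunction over the moves of Player 0 and a conjunction over those of Player 1. With
`xᵢ` saying that exit `i` is permitted, the left-hand game of B20 evaluates to `(x₁ ∧ x₂) ∨ x₃` and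
the right-hand one to `(x₁ ∨ x₃) ∧ (x₂ ∨ x₃)`: the axiom is distributivity of `∨` over `∧`.
-/

set_option autoImplicit true

namespace PaperPG

/-! ## Open parity games and their semantics -/

/-- An open parity game of type `m → n`, where `m = (m⁺, m⁻)` and `n = (n⁺, n⁻)`:
entry positions are `Fin (m.1 + n.2)`, exit positions are `Fin (m.2 + n.1)`,
`V` internal positions with owners, a priority labelling bounded by `M`,
an edge relation with a unique edge out of each entry position and a unique
edge into each exit position. -/
structure OPG (M : ℕ) (m n : ℕ × ℕ) where
  V : ℕ
  owner0 : Fin V → Bool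
  E : (Fin (m.1 + n.2) ⊕ Fin V) → (Fin V ⊕ Fin (m.2 + n.1)) → Prop
  prio : Fin V → ℕ
  prio_le : ∀ v, prio v ≤ M
  entry_unique : ∀ i, ∃! t, E (Sum.inl i) t
  exit_unique : ∀ o, ∃! s, E s (Sum.inr o)

namespace OPG

variable {M : ℕ} {m n : ℕ × ℕ}

/-- Entry positions together with internal positions: the possible sources of edges. -/
abbrev EntryV (A : OPG M m n) := Fin (m.1 + n.2) ⊕ Fin A.V

/-- All positions of an open parity game: entries + internal positions + exits. -/
abbrev Node (A : OPG M m n) := (Fin (m.1 + n.2) ⊕ Fin A.V) ⊕ Fin (m.2 + n.1)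

def embed (A : OPG M m n) : (Fin A.V ⊕ Fin (m.2 + n.1)) → A.Node :=
  Sum.map Sum.inr id

/-- A strategy for Player 0 (`pl = true`) or Player 1 (`pl = false`): for every
finite history ending at a position owned by that player it chooses a successor
along an edge (and it must choose one whenever an outgoing edge exists). -/
def Strat (A : OPG M m n) (pl : Bool) :=
  { σ : List A.EntryV → Option (Fin A.V ⊕ Fin (m.2 + n.1)) //
      ∀ l v, l.getLast? = some (Sum.inr v) → A.owner0 v = pl →
        (∀ t, σ l = some t → A.E (Sum.inr v) t) ∧
        ((∃ t, A.E (Sum.inr v) t) → (σ l).isSome) }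

/-- The history (sequence of non-exit positions) of a play up to time `k`. -/
def histList (A : OPG M m n) (p : ℕ → Option A.Node) : ℕ → List A.EntryV
  | 0 => []
  | k + 1 => A.histList p k ++
      (match p k with
        | some (Sum.inl s) => [s]
        | _ => [])

/-- `p` is the play induced by the strategies `σ0` and `σ1` starting at entry `i`. -/
def IsPlay (A : OPG M m n) (σ0 : A.Strat true) (σ1 : A.Strat false)
    (i : Fin (m.1 + n.2)) (p : ℕ → Option A.Node) : Prop :=
  p 0 = some (Sum.inl (Sum.inl i)) ∧
  ∀ k : ℕ,
    (p k = none → p (k + 1) = none) ∧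
    (∀ o : Fin (m.2 + n.1), p k = some (Sum.inr o) → p (k + 1) = none) ∧
    (∀ e : Fin (m.1 + n.2), p k = some (Sum.inl (Sum.inl e)) →
        ∃ t, A.E (Sum.inl e) t ∧ p (k + 1) = some (A.embed t)) ∧
    (∀ v : Fin A.V, p k = some (Sum.inl (Sum.inr v)) →
        p (k + 1) = Option.map A.embed
          ((if A.owner0 v then σ0.1 else σ1.1) (A.histList p (k + 1))))

/-- Maximum priority encountered along a play up to time `k`. -/
def maxPrioUpTo (A : OPG M m n) (p : ℕ → Option A.Node) (k : ℕ) : ℕ :=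
  (Finset.range (k + 1)).sup fun j =>
    match p j with
    | some (Sum.inl (Sum.inr v)) => A.prio v
    | _ => 0

/-- The play `p` is finite, ends at exit position `o`, and the maximum priority
encountered along it is `k`. -/
def EndsAtExit (A : OPG M m n) (p : ℕ → Option A.Node) (o : Fin (m.2 + n.1)) (k : ℕ) : Prop :=
  ∃ j, p j = some (Sum.inr o) ∧ A.maxPrioUpTo p j = k

/-- Priority `k` occurs infinitely often along `p`. -/
def InfOften (A : OPG M m n) (p : ℕ → Option A.Node) (k : ℕ) : Prop :=
  ∀ N, ∃ j, N ≤ j ∧ ∃ v : Fin A.V, p j = some (Sum.inl (Sum.inr v)) ∧ A.prio v = k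

/-- The play is infinite and the maximum priority occurring infinitely often is even:
Player 0 wins the parity condition. -/
def Wins0Inf (A : OPG M m n) (p : ℕ → Option A.Node) : Prop :=
  ∃ k, A.InfOften p k ∧ Even k ∧ ∀ j, A.InfOften p j → j ≤ k

/-- The play is infinite and the maximum priority occurring infinitely often is odd:
Player 1 wins the parity condition. -/
def Wins1Inf (A : OPG M m n) (p : ℕ → Option A.Node) : Prop :=
  ∃ k, A.InfOften p k ∧ Odd k ∧ ∀ j, A.InfOften p j → j ≤ k

/-- The play ends at a Player-0 position with no available move (a loss for Player 0). -/
def DeadEnd0 (A : OPG M m n) (p : ℕ → Option A.Node) : Prop :=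
  ∃ j v, p j = some (Sum.inl (Sum.inr v)) ∧ p (j + 1) = none ∧ A.owner0 v = true

/-- `⟨i, σ0⟩ = lose`: some Player-1 strategy produces a play that is losing for Player 0. -/
def LosesFrom (A : OPG M m n) (i : Fin (m.1 + n.2)) (σ0 : A.Strat true) : Prop :=
  ∃ (σ1 : A.Strat false) (p : ℕ → Option A.Node),
    A.IsPlay σ0 σ1 i p ∧ (A.Wins1Inf p ∨ A.DeadEnd0 p)

/-- The denotation `⟨i, σ0⟩` (when it is not `lose`): the set of pairs `(o, k)` of an
exit position and a maximal priority realised by some play against a Player-1 strategy. -/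
def denot (A : OPG M m n) (i : Fin (m.1 + n.2)) (σ0 : A.Strat true) :
    Set (Fin (m.2 + n.1) × ℕ) :=
  { x | ∃ (σ1 : A.Strat false) (p : ℕ → Option A.Node),
      A.IsPlay σ0 σ1 i p ∧ A.EndsAtExit p x.1 x.2 }

/-- The semantics `⟦A⟧` of an open parity game: all pairs `(T, i)` with
`T ⊆ exits(A) × ℙ` such that, for some Player-0 strategy `σ0`,
`⟨i,σ0⟩ ≠ lose` and `⟨i,σ0⟩ ⊆ T`. -/
def sem (A : OPG M m n) : Set (Set (Fin (m.2 + n.1) × ℕ) × Fin (m.1 + n.2)) :=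
  { Ti | (∀ x ∈ Ti.1, x.2 ≤ M) ∧
      ∃ σ0 : A.Strat true, ¬ A.LosesFrom Ti.2 σ0 ∧ A.denot Ti.2 σ0 ⊆ Ti.1 }

/-- Equivalence of open parity games: equality of semantics. -/
def equiv (A B : OPG M m n) : Prop := A.sem = B.sem

end OPG
/-- The left-hand game of axiom B20: entry `1 → u`; `u` (Player 0) moves to `w` or
to exit 3; `w` (Player 1) moves to exit 1 or exit 2; all priorities 0.
Internally `u, w` are `0, 1` and exits `1, 2, 3` are the indices `0, 1, 2`. -/
def B20L (M : ℕ) : OPG M (1, 0) (3, 0) where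
  V := 2
  owner0 := fun v => v.val == 0
  prio := fun _ => 0
  prio_le := fun _ => Nat.zero_le M
  E := fun s t =>
    (match s, t with
      | Sum.inl _, Sum.inl v => v.val == 0
      | Sum.inr v, Sum.inl v' => v.val == 0 && v'.val == 1
      | Sum.inr v, Sum.inr z =>
          (v.val == 0 && z.val == 2) || (v.val == 1 && (z.val == 0 || z.val == 1))
      | _, _ => false) = true
  entry_unique := by unfold ExistsUnique; decide
  exit_unique := by unfold ExistsUnique; decide

/-- The right-hand game of axiom B20: entry `1 → w′`; `w′` (Player 1) moves to `u₁`
or `u₂`; `u₁` (Player 0) moves to exit 1 or to `m`; `u₂` (Player 0) moves to exit 2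
or to `m`; `m` (Player 1) moves to exit 3; all priorities 0.
Internally `w′, u₁, u₂, m` are `0, 1, 2, 3`. -/
def B20R (M : ℕ) : OPG M (1, 0) (3, 0) where
  V := 4
  owner0 := fun v => v.val == 1 || v.val == 2
  prio := fun _ => 0
  prio_le := fun _ => Nat.zero_le M
  E := fun s t =>
    (match s, t with
      | Sum.inl _, Sum.inl v => v.val == 0
      | Sum.inr v, Sum.inl v' =>
          (v.val == 0 && (v'.val == 1 || v'.val == 2)) ||
            ((v.val == 1 || v.val == 2) && v'.val == 3)
      | Sum.inr v, Sum.inr z =>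
          (v.val == 1 && z.val == 0) || (v.val == 2 && z.val == 1) ||
            (v.val == 3 && z.val == 2)
      | _, _ => false) = true
  entry_unique := by unfold ExistsUnique; decide
  exit_unique := by unfold ExistsUnique; decide

namespace OPG

variable {M : ℕ} {m n : ℕ × ℕ} {A : OPG M m n} {pl : Bool} {σ0 : A.Strat true}
  {σ1 σ1' : A.Strat false} {i : Fin (m.1 + n.2)} {p p' : ℕ → Option A.Node}
  {X : Set (Fin (m.2 + n.1))} {v : Fin A.V} {j k : ℕ}

/-- Internal positions together with exit positions: the possible targets of edges. -/
abbrev ExitV (A : OPG M m n) := Fin A.V ⊕ Fin (m.2 + n.1)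

/-! ### Strategies -/

/-- The strategy `σ` moves to a position satisfying `P` whenever some edge leads to one; no
condition is imposed on the owner of the position from which the edge leaves. -/
def Strat.Prefers (σ : A.Strat pl) (P : A.ExitV → Prop) : Prop :=
  ∀ l v, l.getLast? = some (Sum.inr v) →
    (∃ t, A.E (Sum.inr v) t ∧ P t) → ∃ t, σ.1 l = some t ∧ P t

theorem exists_strat_prefers (A : OPG M m n) (pl : Bool) (P : A.ExitV → Prop) :
    ∃ σ : A.Strat pl, σ.Prefers P := by
  have exists_move (v : Fin A.V) : ∃ r : Option A.ExitV, (∀ t, r = some t → A.E (Sum.inr v) t) ∧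
      ((∃ t, A.E (Sum.inr v) t) → r.isSome) ∧
      ((∃ t, A.E (Sum.inr v) t ∧ P t) → ∃ t, r = some t ∧ P t) := by
    by_cases hP : ∃ t, A.E (Sum.inr v) t ∧ P t
    · obtain ⟨t, hE, ht⟩ := hP
      exact ⟨some t, by simp [hE], by simp, by simp [ht]⟩
    by_cases hE : ∃ t, A.E (Sum.inr v) t
    · obtain ⟨t, ht⟩ := hE
      exact ⟨some t, by simp [ht], by simp, (absurd · hP)⟩
    · exact ⟨none, by simp, (absurd · hE), (absurd · hP)⟩
  choose move move_edge move_isSome move_pref using exists_move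
  refine ⟨⟨fun l ↦ l.getLast?.bind (Sum.elim (fun _ ↦ none) move), fun l v hl _ ↦ ?_⟩,
    fun l v hl ↦ ?_⟩
  · simp only [hl, Option.bind_some, Sum.elim_inr]
    exact ⟨move_edge v, move_isSome v⟩
  · simpa [hl] using move_pref v

/-- The strategy that moves to `t` after the history `l` and agrees with `σ` elsewhere. -/
def Strat.update (σ : A.Strat pl) (l : List A.EntryV) (t : A.ExitV)
    (h : ∀ v, l.getLast? = some (Sum.inr v) → A.E (Sum.inr v) t) : A.Strat pl :=
  open Classical in
  ⟨Function.update σ.1 l (some t), fun l' v hl' hv ↦ by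
    rcases eq_or_ne l' l with rfl | hne
    · simpa using h v hl'
    · simpa [Function.update_of_ne hne] using σ.2 l' v hl' hv⟩

theorem Strat.update_self (σ : A.Strat pl) (l : List A.EntryV) (t : A.ExitV)
    (h : ∀ v, l.getLast? = some (Sum.inr v) → A.E (Sum.inr v) t) :
    (σ.update l t h).1 l = some t :=
  Function.update_self ..

theorem Strat.update_of_ne (σ : A.Strat pl) {l l' : List A.EntryV} (hne : l' ≠ l) (t : A.ExitV)
    (h : ∀ v, l.getLast? = some (Sum.inr v) → A.E (Sum.inr v) t) :
    (σ.update l t h).1 l' = σ.1 l' :=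
  Function.update_of_ne hne ..

/-! ### Plays -/

theorem embed_injective : Function.Injective A.embed :=
  Sum.map_injective.2 ⟨Sum.inr_injective, Function.injective_id⟩

theorem histList_succ_of_eq {s : A.EntryV} (h : p k = some (Sum.inl s)) :
    A.histList p (k + 1) = A.histList p k ++ [s] := by
  simp [histList, h]

theorem getLast?_histList {s : A.EntryV} (h : p k = some (Sum.inl s)) :
    (A.histList p (k + 1)).getLast? = some s := by
  simp [histList_succ_of_eq h]

theorem monotone_length_histList (p : ℕ → Option A.Node) :
    Monotone fun k ↦ (A.histList p k).length :=
  monotone_nat_of_le_succ fun k ↦ by simp [histList]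

theorem histList_congr (h : ∀ j < k, p j = p' j) : A.histList p k = A.histList p' k := by
  induction k with
  | zero => rfl
  | succ k ih => simp only [histList, h k k.lt_succ_self, ih fun j hj ↦ h j (by omega)]

/-- The position following `x` in a play of `σ0` against `σ1`, where the history `l` ends in `x`;
`none` if the play ends at `x`. -/
noncomputable def next (σ0 : A.Strat true) (σ1 : A.Strat false) (l : List A.EntryV) :
    A.Node → Option A.Node
  | Sum.inl (Sum.inl e) => some (A.embed (A.entry_unique e).choose)
  | Sum.inl (Sum.inr v) => Option.map A.embed ((if A.owner0 v then σ0.1 else σ1.1) l)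
  | Sum.inr _ => none

theorem isPlay_iff : A.IsPlay σ0 σ1 i p ↔ p 0 = some (Sum.inl (Sum.inl i)) ∧
    ∀ k, p (k + 1) = (p k).bind (next σ0 σ1 (A.histList p (k + 1))) := by
  refine and_congr_right fun _ ↦ forall_congr' fun k ↦ ?_
  rcases p k with _ | (e | v) | o
  · simp
  · have hunique := (A.entry_unique e).choose_spec
    simp only [next, Option.bind_some]
    generalize (A.entry_unique e).choose = t₀ at hunique
    have edge_iff (t : A.ExitV) : A.E (Sum.inl e) t ↔ t = t₀ :=
      ⟨hunique.2 t, fun h ↦ h ▸ hunique.1⟩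
    simp [edge_iff, -Sum.exists]
  · simp [next]
  · simp [next]

/-- The history of the play of `σ0` against `σ1` from `i` up to time `k`, and its position at
time `k`. -/
noncomputable def playState (σ0 : A.Strat true) (σ1 : A.Strat false) (i : Fin (m.1 + n.2)) :
    ℕ → List A.EntryV × Option A.Node
  | 0 => ([], some (Sum.inl (Sum.inl i)))
  | k + 1 =>
    let s := playState σ0 σ1 i k
    let l := s.1 ++ (match s.2 with
      | some (Sum.inl x) => [x]
      | _ => [])
    (l, s.2.bind (next σ0 σ1 l))

theorem exists_isPlay (σ0 : A.Strat true) (σ1 : A.Strat false) (i : Fin (m.1 + n.2)) :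
    ∃ p, A.IsPlay σ0 σ1 i p := by
  have hist_eq (k : ℕ) :
      A.histList (fun k ↦ (playState σ0 σ1 i k).2) k = (playState σ0 σ1 i k).1 := by
    induction k with
    | zero => rfl
    | succ k ih => simp only [histList, ih, playState]
  refine ⟨fun k ↦ (playState σ0 σ1 i k).2, isPlay_iff.2 ⟨rfl, fun k ↦ ?_⟩⟩
  rw [hist_eq]
  rfl

theorem IsPlay.one_eq_some_embed (hp : A.IsPlay σ0 σ1 i p) {t : A.ExitV}
    (ht : A.E (Sum.inl i) t) : p 1 = some (A.embed t) := by
  obtain ⟨t', ht', h⟩ := (hp.2 0).2.2.1 i hp.1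
  rw [h, (A.entry_unique i).unique ht' ht]

theorem IsPlay.succ_of_owner0 (hp : A.IsPlay σ0 σ1 i p)
    (hk : p k = some (Sum.inl (Sum.inr v))) (hv : A.owner0 v = true) :
    p (k + 1) = (σ0.1 (A.histList p (k + 1))).map A.embed := by
  simpa [hv] using (hp.2 k).2.2.2 v hk

theorem IsPlay.succ_of_owner1 (hp : A.IsPlay σ0 σ1 i p)
    (hk : p k = some (Sum.inl (Sum.inr v))) (hv : A.owner0 v = false) :
    p (k + 1) = (σ1.1 (A.histList p (k + 1))).map A.embed := by
  simpa [hv] using (hp.2 k).2.2.2 v hk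

theorem IsPlay.eq_of_agree (hp : A.IsPlay σ0 σ1 i p) (hp' : A.IsPlay σ0 σ1' i p')
    (h : ∀ j < k, σ1'.1 (A.histList p (j + 1)) = σ1.1 (A.histList p (j + 1))) (hj : j ≤ k) :
    p' j = p j := by
  induction j using Nat.strong_induction_on with
  | _ j ih =>
    cases j with
    | zero => rw [hp.1, hp'.1]
    | succ j =>
      have hist_eq : A.histList p' (j + 1) = A.histList p (j + 1) :=
        histList_congr fun l hl ↦ ih l hl (by omega)
      rw [(isPlay_iff.1 hp').2 j, (isPlay_iff.1 hp).2 j, hist_eq, ih j j.lt_succ_self (by omega)]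
      rcases p j with _ | (e | v) | o
      · rfl
      · rfl
      · cases hv : A.owner0 v <;> simp [next, hv, h j hj]
      · rfl

-- Histories of a play grow strictly until it ends, so changing Player 1's choice at the history
-- up to time `k` alters nothing before time `k + 1`.
theorem IsPlay.exists_deviation (hp : A.IsPlay σ0 σ1 i p)
    (hk : p k = some (Sum.inl (Sum.inr v))) (hv : A.owner0 v = false) {t : A.ExitV}
    (ht : A.E (Sum.inr v) t) :
    ∃ σ1' p', A.IsPlay σ0 σ1' i p' ∧ p' (k + 1) = some (A.embed t) := by
  have edge (w : Fin A.V) (hw : (A.histList p (k + 1)).getLast? = some (Sum.inr w)) :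
      A.E (Sum.inr w) t := by
    rw [getLast?_histList hk] at hw
    cases hw
    exact ht
  obtain ⟨p', hp'⟩ := exists_isPlay σ0 (σ1.update (A.histList p (k + 1)) t edge) i
  have earlier_hist_ne (j : ℕ) (hj : j < k) : A.histList p (j + 1) ≠ A.histList p (k + 1) := by
    have hle : (A.histList p (j + 1)).length ≤ (A.histList p k).length :=
      monotone_length_histList p hj
    intro h
    rw [h, histList_succ_of_eq hk] at hle
    simp at hle
  have agree (j : ℕ) (hj : j ≤ k) : p' j = p j :=
    hp.eq_of_agree hp' (fun l hl ↦ σ1.update_of_ne (earlier_hist_ne l hl) t edge) hj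
  refine ⟨_, p', hp', ?_⟩
  rw [hp'.succ_of_owner1 ((agree k le_rfl).trans hk) hv,
    histList_congr fun j hj ↦ agree j (Nat.le_of_lt_succ hj), σ1.update_self, Option.map_some]

/-! ### Attractors and safe positions -/

/-- Player 1's attractor: the positions from which Player 1 can force the play, in finitely many
moves, to an exit outside `X` or to a dead end of Player 0. -/
inductive Attractor (A : OPG M m n) (X : Set (Fin (m.2 + n.1))) : A.ExitV → Prop
  | exit {o : Fin (m.2 + n.1)} : o ∉ X → Attractor A X (Sum.inr o)
  | owner0 {v : Fin A.V} : A.owner0 v = true → (∀ t, A.E (Sum.inr v) t → Attractor A X t) →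
      Attractor A X (Sum.inl v)
  | owner1 {v : Fin A.V} {t : A.ExitV} : A.owner0 v = false → A.E (Sum.inr v) t → Attractor A X t →
      Attractor A X (Sum.inl v)

/-- The positions from which Player 0 can forever avoid the exits outside `X` and the dead ends
of Player 0. -/
def Safe (A : OPG M m n) (X : Set (Fin (m.2 + n.1))) (t : A.ExitV) : Prop :=
  ¬ A.Attractor X t

theorem safe_exit_iff {o : Fin (m.2 + n.1)} : A.Safe X (Sum.inr o) ↔ o ∈ X :=
  ⟨fun h ↦ by_contra fun ho ↦ h (.exit ho), by rintro ho (h | _ | _); exact h ho⟩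

theorem safe_iff_exists (hv : A.owner0 v = true) :
    A.Safe X (Sum.inl v) ↔ ∃ t, A.E (Sum.inr v) t ∧ A.Safe X t := by
  constructor
  · intro h
    by_contra! hE
    exact h (.owner0 hv fun t ht ↦ not_not.1 (hE t ht))
  · rintro ⟨t, ht, hsafe⟩ (_ | ⟨-, h⟩ | ⟨hv', -, -⟩)
    · exact hsafe (h t ht)
    · simp [hv] at hv'

theorem safe_iff_forall (hv : A.owner0 v = false) :
    A.Safe X (Sum.inl v) ↔ ∀ t, A.E (Sum.inr v) t → A.Safe X t := by
  constructor
  · exact fun h t ht hA ↦ h (.owner1 hv ht hA)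
  · rintro h (_ | ⟨hv', -⟩ | ⟨-, ht, hA⟩)
    · simp [hv] at hv'
    · exact h _ ht hA

theorem safe_iff_or (hv : A.owner0 v = true) {a b : A.ExitV}
    (hE : ∀ t, A.E (Sum.inr v) t ↔ t = a ∨ t = b) :
    A.Safe X (Sum.inl v) ↔ A.Safe X a ∨ A.Safe X b := by
  simp only [safe_iff_exists hv, hE, or_and_right, exists_or, exists_eq_left]

theorem safe_iff_and (hv : A.owner0 v = false) {a b : A.ExitV}
    (hE : ∀ t, A.E (Sum.inr v) t ↔ t = a ∨ t = b) :
    A.Safe X (Sum.inl v) ↔ A.Safe X a ∧ A.Safe X b := by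
  simp only [safe_iff_forall hv, hE, forall_eq_or_imp, forall_eq]

theorem safe_iff_of_unique_edge (hv : A.owner0 v = false) {a : A.ExitV}
    (hE : ∀ t, A.E (Sum.inr v) t ↔ t = a) : A.Safe X (Sum.inl v) ↔ A.Safe X a := by
  simp only [safe_iff_forall hv, hE, forall_eq]

theorem Attractor.exists_losing_play {t : A.ExitV} (h : A.Attractor X t)
    (hp : A.IsPlay σ0 σ1 i p) (hk : p k = some (A.embed t)) :
    ∃ σ1 p, A.IsPlay σ0 σ1 i p ∧ (A.DeadEnd0 p ∨ ∃ j, ∃ o ∉ X, p j = some (Sum.inr o)) := by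
  induction h generalizing σ1 p k with
  | exit ho => exact ⟨σ1, p, hp, .inr ⟨k, _, ho, hk⟩⟩
  | @owner0 v hv _ ih =>
    have hsucc := hp.succ_of_owner0 hk hv
    have hedge := (σ0.2 _ v (getLast?_histList hk) hv).1
    rcases hmove : σ0.1 (A.histList p (k + 1)) with _ | t
    · exact ⟨σ1, p, hp, .inl ⟨k, v, hk, by rw [hsucc, hmove]; rfl, hv⟩⟩
    · exact ih t (hedge t hmove) hp (by rw [hsucc, hmove]; rfl)
  | owner1 hv ht _ ih =>
    obtain ⟨σ1', p', hp', hk'⟩ := hp.exists_deviation hk hv ht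
    exact ih hp' hk'

theorem safe_of_not_losesFrom {t : A.ExitV} (ht : A.E (Sum.inl i) t)
    (hlose : ¬ A.LosesFrom i σ0) (hX : ∀ x ∈ A.denot i σ0, x.1 ∈ X) : A.Safe X t := by
  intro hA
  obtain ⟨σ1, -⟩ := A.exists_strat_prefers false fun _ ↦ True
  obtain ⟨p, hp⟩ := exists_isPlay σ0 σ1 i
  obtain ⟨σ1', p', hp', hdead | ⟨j, o, ho, hj⟩⟩ :=
    hA.exists_losing_play hp (hp.one_eq_some_embed ht)
  · exact hlose ⟨σ1', p', hp', .inr hdead⟩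
  · exact ho (hX (o, A.maxPrioUpTo p' j) ⟨σ1', p', hp', j, hj, rfl⟩)

theorem IsPlay.succ_eq_map_safe (hp : A.IsPlay σ0 σ1 i p) {t : A.ExitV} (ht : A.E (Sum.inl i) t)
    (hsafe : A.Safe X t) (hσ0 : σ0.Prefers (A.Safe X)) (k : ℕ) :
    ∃ r : Option A.ExitV, p (k + 1) = r.map A.embed ∧ ∀ t ∈ r, A.Safe X t := by
  induction k with
  | zero => exact ⟨some t, hp.one_eq_some_embed ht, by simpa using hsafe⟩
  | succ k ih =>
    obtain ⟨_ | (v | o), hk, hr⟩ := ih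
    · exact ⟨none, (hp.2 (k + 1)).1 hk, by simp⟩
    · have hlast := getLast?_histList hk
      have hv := hr _ rfl
      cases howner : A.owner0 v with
      | true =>
        obtain ⟨t, hmove, ht⟩ := hσ0 _ v hlast ((safe_iff_exists howner).1 hv)
        exact ⟨some t, by rw [hp.succ_of_owner0 hk howner, hmove], by simpa using ht⟩
      | false =>
        exact ⟨_, hp.succ_of_owner1 hk howner, fun t ht ↦
          (safe_iff_forall howner).1 hv t ((σ1.2 _ v hlast howner).1 t ht)⟩
    · exact ⟨none, (hp.2 (k + 1)).2.1 o hk, by simp⟩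

theorem IsPlay.safe_of_eq (hp : A.IsPlay σ0 σ1 i p) {t : A.ExitV} (ht : A.E (Sum.inl i) t)
    (hsafe : A.Safe X t) (hσ0 : σ0.Prefers (A.Safe X))
    {t' : A.ExitV} (hk : p k = some (A.embed t')) : A.Safe X t' := by
  cases k with
  | zero => cases t' <;> simp [hp.1, embed] at hk
  | succ k =>
    obtain ⟨r, hr, hsafe_r⟩ := hp.succ_eq_map_safe ht hsafe hσ0 k
    obtain ⟨t, htr, htt'⟩ := Option.map_eq_some_iff.1 (hr.symm.trans hk)
    rw [← embed_injective htt']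
    exact hsafe_r t htr

theorem exists_strat_iff_safe (hprio : ∀ v, Even (A.prio v)) {t : A.ExitV}
    (ht : A.E (Sum.inl i) t) :
    (∃ σ0 : A.Strat true, ¬ A.LosesFrom i σ0 ∧ ∀ x ∈ A.denot i σ0, x.1 ∈ X) ↔ A.Safe X t := by
  refine ⟨fun ⟨σ0, hlose, hX⟩ ↦ safe_of_not_losesFrom ht hlose hX, fun hsafe ↦ ?_⟩
  obtain ⟨σ0, hσ0⟩ := A.exists_strat_prefers true (A.Safe X)
  refine ⟨σ0, ?_, ?_⟩
  · rintro ⟨σ1, p, hp, ⟨c, hinf, hodd, -⟩ | ⟨j, v, hj, hnone, hv⟩⟩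
    · obtain ⟨-, -, v, -, rfl⟩ := hinf 0
      exact Nat.not_even_iff_odd.2 hodd (hprio v)
    · have hsafe_v : A.Safe X (Sum.inl v) := hp.safe_of_eq ht hsafe hσ0 hj
      obtain ⟨t, hmove, -⟩ := hσ0 _ v (getLast?_histList hj) ((safe_iff_exists hv).1 hsafe_v)
      simp [hp.succ_of_owner0 hj hv, hmove] at hnone
  · rintro ⟨o, c⟩ ⟨σ1, p, hp, j, hj, -⟩
    exact safe_exit_iff.1 (hp.safe_of_eq ht hsafe hσ0 hj)

theorem maxPrioUpTo_eq_zero (hprio : ∀ v, A.prio v = 0) (p : ℕ → Option A.Node) (k : ℕ) :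
    A.maxPrioUpTo p k = 0 := by
  refine Nat.le_zero.1 (Finset.sup_le fun j _ ↦ ?_)
  split <;> simp [hprio]

theorem mem_sem_iff_safe (hprio : ∀ v, A.prio v = 0) {t : A.ExitV} (ht : A.E (Sum.inl i) t)
    {T : Set (Fin (m.2 + n.1) × ℕ)} :
    (T, i) ∈ A.sem ↔ (∀ x ∈ T, x.2 ≤ M) ∧ A.Safe {o | (o, 0) ∈ T} t := by
  have denot_subset_iff (σ0 : A.Strat true) :
      A.denot i σ0 ⊆ T ↔ ∀ x ∈ A.denot i σ0, x.1 ∈ {o | (o, 0) ∈ T} := by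
    refine forall₂_congr fun x hx ↦ ?_
    obtain ⟨-, p, -, j, -, hj⟩ := hx
    rw [Set.mem_ofPred_eq, ← maxPrioUpTo_eq_zero hprio p j, hj]
  rw [← exists_strat_iff_safe (fun v ↦ by simp [hprio v]) ht]
  simp only [← denot_subset_iff]
  rfl

end OPG

/-! ### The two sides of B20 -/

namespace B20L

variable {M : ℕ}

/-- The position `u` of the left-hand game. -/
def u : Fin (B20L M).V := (0 : Fin 2)

/-- The position `w` of the left-hand game. -/
def w : Fin (B20L M).V := (1 : Fin 2)

theorem edge_u_iff (t : (B20L M).ExitV) :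
    (B20L M).E (Sum.inr u) t ↔ t = Sum.inl w ∨ t = Sum.inr 2 := by
  rcases t with t | t <;> fin_cases t <;> simp [B20L, u, w]

theorem edge_w_iff (t : (B20L M).ExitV) :
    (B20L M).E (Sum.inr w) t ↔ t = Sum.inr 0 ∨ t = Sum.inr 1 := by
  rcases t with t | t <;> fin_cases t <;> simp [B20L, w]

theorem safe_u_iff (X : Set (Fin 3)) :
    (B20L M).Safe X (Sum.inl u) ↔ (0 ∈ X ∧ 1 ∈ X) ∨ 2 ∈ X := by
  rw [OPG.safe_iff_or rfl edge_u_iff, OPG.safe_iff_and rfl edge_w_iff]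
  exact or_congr (and_congr OPG.safe_exit_iff OPG.safe_exit_iff) OPG.safe_exit_iff

end B20L

namespace B20R

variable {M : ℕ}

/-- The position `w′` of the right-hand game. -/
def w' : Fin (B20R M).V := (0 : Fin 4)

/-- The position `u₁` of the right-hand game. -/
def u₁ : Fin (B20R M).V := (1 : Fin 4)

/-- The position `u₂` of the right-hand game. -/
def u₂ : Fin (B20R M).V := (2 : Fin 4)

/-- The position `m` of the right-hand game. -/
def m : Fin (B20R M).V := (3 : Fin 4)

theorem edge_w'_iff (t : (B20R M).ExitV) :
    (B20R M).E (Sum.inr w') t ↔ t = Sum.inl u₁ ∨ t = Sum.inl u₂ := by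
  rcases t with t | t <;> fin_cases t <;> simp [B20R, w', u₁, u₂]

theorem edge_u₁_iff (t : (B20R M).ExitV) :
    (B20R M).E (Sum.inr u₁) t ↔ t = Sum.inr 0 ∨ t = Sum.inl m := by
  rcases t with t | t <;> fin_cases t <;> simp [B20R, u₁, m]

theorem edge_u₂_iff (t : (B20R M).ExitV) :
    (B20R M).E (Sum.inr u₂) t ↔ t = Sum.inr 1 ∨ t = Sum.inl m := by
  rcases t with t | t <;> fin_cases t <;> simp [B20R, u₂, m]

theorem edge_m_iff (t : (B20R M).ExitV) :
    (B20R M).E (Sum.inr m) t ↔ t = Sum.inr 2 := by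
  rcases t with t | t <;> fin_cases t <;> simp [B20R, m]

theorem safe_w'_iff (X : Set (Fin 3)) :
    (B20R M).Safe X (Sum.inl w') ↔ (0 ∈ X ∨ 2 ∈ X) ∧ (1 ∈ X ∨ 2 ∈ X) := by
  rw [OPG.safe_iff_and rfl edge_w'_iff, OPG.safe_iff_or rfl edge_u₁_iff,
    OPG.safe_iff_or rfl edge_u₂_iff, OPG.safe_iff_of_unique_edge rfl edge_m_iff]
  exact and_congr (or_congr OPG.safe_exit_iff OPG.safe_exit_iff)
    (or_congr OPG.safe_exit_iff OPG.safe_exit_iff)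

end B20R

/-- **Statement 11** (Soundness of the distributivity axiom B20, semantically).
`⟦L⟧ = ⟦R⟧ = {(T,1) | {(1,0),(2,0)} ⊆ T or (3,0) ∈ T}`. -/
theorem B20_sound (M : ℕ) (hM : 2 ≤ M) :
    (B20L M).sem =
      { Ti : Set (Fin ((1, 0).2 + (3, 0).1) × ℕ) × Fin ((1, 0).1 + (3, 0).2) |
          (∀ x ∈ Ti.1, x.2 ≤ M) ∧
          (((⟨0, by omega⟩, 0) ∈ Ti.1 ∧ (⟨1, by omega⟩, 0) ∈ Ti.1) ∨
            (⟨2, by omega⟩, 0) ∈ Ti.1) } ∧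
    (B20R M).sem =
      { Ti : Set (Fin ((1, 0).2 + (3, 0).1) × ℕ) × Fin ((1, 0).1 + (3, 0).2) |
          (∀ x ∈ Ti.1, x.2 ≤ M) ∧
          (((⟨0, by omega⟩, 0) ∈ Ti.1 ∧ (⟨1, by omega⟩, 0) ∈ Ti.1) ∨
            (⟨2, by omega⟩, 0) ∈ Ti.1) } := by
  refine ⟨Set.ext fun ⟨T, i⟩ ↦ ?_, Set.ext fun ⟨T, i⟩ ↦ ?_⟩
  · rw [OPG.mem_sem_iff_safe (t := Sum.inl B20L.u) (fun _ ↦ rfl) rfl, B20L.safe_u_iff]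
    rfl
  · rw [OPG.mem_sem_iff_safe (t := Sum.inl B20R.w') (fun _ ↦ rfl) rfl, B20R.safe_w'_iff,
      ← and_or_right]
    rfl

end PaperPG
end

section
/- (Soundness of the priority-composition axiom C3, semantically) Let p, q ∈ ℙ. The open parity game with one entry position 1, one exit position 1, two internal Player-1 positions u and v with priorities p and q respectively, and edges entry 1 → u, u → v, v → exit 1, is equivalent to the open parity game with one entry position 1, one exit position 1, a single internal Player-1 position of priority max(p,q) with edges entry 1 → it → exit 1; both have semantics {(T,1) : T ⊆ {1}×ℙ and (1, max(p,q)) ∈ T}. -/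
namespace PaperPG

/-- The sequential composite of two priority positions: entry `1 → u`; `u`
(Player 1, priority `p`) moves to `v`; `v` (Player 1, priority `q`) moves to the
unique exit. -/
def seqPrioG (M p q : ℕ) (hp : p ≤ M) (hq : q ≤ M) : OPG M (1, 0) (1, 0) where
  V := 2
  owner0 := fun _ => false
  prio := fun v => if v.val = 0 then p else q
  prio_le := fun v => by split <;> omega
  E := fun s t =>
    (match s, t with
      | Sum.inl _, Sum.inl v => v.val == 0
      | Sum.inr v, Sum.inl v' => v.val == 0 && v'.val == 1
      | Sum.inr v, Sum.inr _ => v.val == 1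
      | _, _ => false) = true
  entry_unique := by unfold ExistsUnique; decide
  exit_unique := by unfold ExistsUnique; decide

/-- A single Player-1 position of priority `r` between the entry and the exit. -/
def onePrioG (M r : ℕ) (hr : r ≤ M) : OPG M (1, 0) (1, 0) where
  V := 1
  owner0 := fun _ => false
  prio := fun _ => r
  prio_le := fun _ => hr
  E := fun s t =>
    (match s, t with
      | Sum.inl _, Sum.inl _ => true
      | Sum.inr _, Sum.inr _ => true
      | _, _ => false) = true
  entry_unique := by unfold ExistsUnique; decide
  exit_unique := by unfold ExistsUnique; decide

/-! In both games every non-exit position has exactly one outgoing edge, so neither player has a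
real choice: whatever the strategies, the play from an entry position `i` is the orbit of the
successor map. If that orbit reaches an exit `o` with maximum priority `r`, no strategy loses from
`i` and every denotation is `{(o, r)}`, so `(T, i)` is in the semantics exactly when
`(o, r) ∈ T`. -/

namespace OPG

variable {M : ℕ} {m n : ℕ × ℕ} {A : OPG M m n}

instance Strat.instNonempty {pl : Bool} : Nonempty (A.Strat pl) := by
  classical
  refine ⟨fun l => l.getLast?.bind fun s => if h : ∃ t, A.E s t then some h.choose else none, ?_⟩
  intro l v hl _
  by_cases h : ∃ t, A.E (Sum.inr v) t
  · simpa [hl, h, -Sum.exists] using h.choose_spec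
  · simp [hl, h, -Sum.exists]

theorem getLast?_histList_succ {p : ℕ → Option A.Node} {k : ℕ} {s : A.EntryV}
    (hs : p k = some (Sum.inl s)) : (A.histList p (k + 1)).getLast? = some s := by
  simp [histList, hs]

/-- `next` is a successor map for `A`: the only edge out of a non-exit position `s` leads to
`next s`. Having such a map expresses that `A` is deterministic, regardless of who owns which
position; the map is kept explicit so that the plays of `A` can be computed from it. -/
def IsSuccMap (A : OPG M m n) (next : A.EntryV → Fin A.V ⊕ Fin (m.2 + n.1)) : Prop :=
  ∀ s t, A.E s t ↔ t = next s

/-- The orbit of the entry position `i` under `next`, encoded like the plays in `IsPlay`: it takes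
the value `none` at all times after an exit position has been reached. -/
def orbit (A : OPG M m n) (next : A.EntryV → Fin A.V ⊕ Fin (m.2 + n.1)) (i : Fin (m.1 + n.2)) :
    ℕ → Option A.Node
  | 0 => some (Sum.inl (Sum.inl i))
  | k + 1 => (A.orbit next i k).bind (Sum.elim (fun s => some (A.embed (next s))) fun _ => none)

variable {next : A.EntryV → Fin A.V ⊕ Fin (m.2 + n.1)} {i : Fin (m.1 + n.2)}
  {o o' : Fin (m.2 + n.1)} {j k r r' : ℕ}

theorem orbit_succ_of_inl {s : A.EntryV} (hs : A.orbit next i k = some (Sum.inl s)) :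
    A.orbit next i (k + 1) = some (A.embed (next s)) := by
  simp [orbit, hs]

theorem orbit_eq_none_of_exit_lt (ho : A.orbit next i j = some (Sum.inr o)) (hjk : j < k) :
    A.orbit next i k = none := by
  induction k, hjk using Nat.le_induction with
  | base => simp [orbit, ho]
  | succ k _ ih => simp [orbit, ih]

theorem orbit_exit_time_unique (ho : A.orbit next i j = some (Sum.inr o))
    (ho' : A.orbit next i k = some (Sum.inr o')) : j = k := by
  by_contra hne
  rcases Nat.lt_or_gt_of_ne hne with hlt | hgt
  · simp [orbit_eq_none_of_exit_lt ho hlt] at ho'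
  · simp [orbit_eq_none_of_exit_lt ho' hgt] at ho

theorem endsAtExit_orbit_unique (he : A.EndsAtExit (A.orbit next i) o r)
    (he' : A.EndsAtExit (A.orbit next i) o' r') : o = o' ∧ r = r' := by
  obtain ⟨j, ho, rfl⟩ := he
  obtain ⟨k, ho', rfl⟩ := he'
  obtain rfl := orbit_exit_time_unique ho ho'
  simpa [ho] using ho'

theorem not_infOften_orbit (ho : A.orbit next i j = some (Sum.inr o)) :
    ¬ A.InfOften (A.orbit next i) k := by
  intro hinf
  obtain ⟨l, hjl, v, hv, -⟩ := hinf (j + 1)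
  simp [orbit_eq_none_of_exit_lt ho hjl] at hv

theorem not_deadEnd0_orbit : ¬ A.DeadEnd0 (A.orbit next i) := by
  rintro ⟨j, v, hv, hnone, -⟩
  simp [orbit_succ_of_inl hv] at hnone

namespace IsSuccMap

variable {σ0 : A.Strat true} {σ1 : A.Strat false} {p : ℕ → Option A.Node}

theorem strat_apply (h : A.IsSuccMap next) {pl : Bool} (σ : A.Strat pl) {l : List A.EntryV}
    {v : Fin A.V} (hl : l.getLast? = some (Sum.inr v)) (hv : A.owner0 v = pl) :
    σ.1 l = some (next (Sum.inr v)) := by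
  obtain ⟨hedge, hmoves⟩ := σ.2 l v hl hv
  obtain ⟨t, ht⟩ := Option.isSome_iff_exists.1 (hmoves ⟨_, (h _ _).2 rfl⟩)
  rw [ht, (h _ _).1 (hedge t ht)]

theorem strategies_apply_histList (h : A.IsSuccMap next) {v : Fin A.V}
    (hv : p k = some (Sum.inl (Sum.inr v))) :
    (if A.owner0 v then σ0.1 else σ1.1) (A.histList p (k + 1)) = some (next (Sum.inr v)) := by
  have hlast := getLast?_histList_succ hv
  cases howner : A.owner0 v
  · simpa using h.strat_apply σ1 hlast howner
  · simpa using h.strat_apply σ0 hlast howner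

theorem eq_orbit (h : A.IsSuccMap next) (hp : A.IsPlay σ0 σ1 i p) : p = A.orbit next i := by
  funext k
  induction k with
  | zero => exact hp.1
  | succ k ih =>
    obtain ⟨hnone, hexit, hentry, hinternal⟩ := hp.2 k
    rw [orbit, ← ih]
    rcases hk : p k with _ | ((e | v) | o)
    · exact hnone hk
    · obtain ⟨t, ht, hsucc⟩ := hentry e hk
      rw [hsucc, (h _ _).1 ht]
      rfl
    · rw [hinternal v hk, h.strategies_apply_histList hk]
      rfl
    · exact hexit o hk

theorem isPlay_orbit (h : A.IsSuccMap next) : A.IsPlay σ0 σ1 i (A.orbit next i) := by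
  refine ⟨rfl, fun k => ⟨fun hk => ?_, fun o hk => ?_, fun e hk => ?_, fun v hk => ?_⟩⟩
  · simp [orbit, hk]
  · exact orbit_eq_none_of_exit_lt hk k.lt_succ_self
  · exact ⟨_, (h _ _).2 rfl, orbit_succ_of_inl hk⟩
  · rw [orbit_succ_of_inl hk, h.strategies_apply_histList hk, Option.map_some]

theorem not_losesFrom (h : A.IsSuccMap next) (he : A.EndsAtExit (A.orbit next i) o r) :
    ¬ A.LosesFrom i σ0 := by
  rintro ⟨σ1, p, hp, hlose⟩
  obtain ⟨j, ho, -⟩ := he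
  obtain rfl := h.eq_orbit hp
  rcases hlose with ⟨k, hinf, -⟩ | hdead
  · exact not_infOften_orbit ho hinf
  · exact not_deadEnd0_orbit hdead

theorem denot_eq_singleton (h : A.IsSuccMap next) (he : A.EndsAtExit (A.orbit next i) o r) :
    A.denot i σ0 = {(o, r)} := by
  ext ⟨o', r'⟩
  rw [Set.mem_singleton_iff, Prod.mk.injEq]
  constructor
  · rintro ⟨σ1, p, hp, he'⟩
    rw [h.eq_orbit hp] at he'
    exact endsAtExit_orbit_unique he' he
  · rintro ⟨rfl, rfl⟩
    exact ⟨Classical.arbitrary _, A.orbit next i, h.isPlay_orbit, he⟩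

theorem mem_sem_iff (h : A.IsSuccMap next) (he : A.EndsAtExit (A.orbit next i) o r)
    {T : Set (Fin (m.2 + n.1) × ℕ)} :
    (T, i) ∈ A.sem ↔ (∀ x ∈ T, x.2 ≤ M) ∧ (o, r) ∈ T := by
  simp only [sem, Set.mem_ofPred_eq, h.not_losesFrom he, h.denot_eq_singleton he,
    not_false_eq_true, true_and, Set.singleton_subset_iff, exists_const]

theorem sem_eq (h : A.IsSuccMap next) {o : Fin (m.1 + n.2) → Fin (m.2 + n.1)}
    {r : Fin (m.1 + n.2) → ℕ} (he : ∀ i, A.EndsAtExit (A.orbit next i) (o i) (r i)) :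
    A.sem = {Ti | (∀ x ∈ Ti.1, x.2 ≤ M) ∧ (o Ti.2, r Ti.2) ∈ Ti.1} := by
  ext ⟨T, i⟩
  exact h.mem_sem_iff (he i)

end IsSuccMap

end OPG

/-- The successor map of `seqPrioG`: entry to `u = 0`, then to `v = 1`, then to the exit. -/
def seqPrioNext : Fin (1 + 0) ⊕ Fin 2 → Fin 2 ⊕ Fin (0 + 1)
  | Sum.inl _ => Sum.inl 0
  | Sum.inr v => if v = 0 then Sum.inl 1 else Sum.inr 0

/-- The successor map of `onePrioG`: entry to the only internal position, then to the exit. -/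
def onePrioNext : Fin (1 + 0) ⊕ Fin 1 → Fin 1 ⊕ Fin (0 + 1)
  | Sum.inl _ => Sum.inl 0
  | Sum.inr _ => Sum.inr 0

section

variable (M p q r : ℕ) (hp : p ≤ M) (hq : q ≤ M) (hr : r ≤ M)

theorem isSuccMap_seqPrioNext : (seqPrioG M p q hp hq).IsSuccMap seqPrioNext := by
  dsimp only [OPG.IsSuccMap, seqPrioG]
  decide

theorem isSuccMap_onePrioNext : (onePrioG M r hr).IsSuccMap onePrioNext := by
  dsimp only [OPG.IsSuccMap, onePrioG]
  decide

theorem endsAtExit_orbit_seqPrioNext (i : Fin (1 + 0)) :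
    (seqPrioG M p q hp hq).EndsAtExit ((seqPrioG M p q hp hq).orbit seqPrioNext i)
      (0 : Fin (0 + 1)) (max p q) := by
  refine ⟨3, rfl, ?_⟩
  simp [OPG.maxPrioUpTo, Finset.range_add_one, OPG.orbit, OPG.embed, seqPrioNext, seqPrioG,
    max_comm]

theorem endsAtExit_orbit_onePrioNext (i : Fin (1 + 0)) :
    (onePrioG M r hr).EndsAtExit ((onePrioG M r hr).orbit onePrioNext i) (0 : Fin (0 + 1)) r := by
  refine ⟨2, rfl, ?_⟩
  simp [OPG.maxPrioUpTo, Finset.range_add_one, OPG.orbit, OPG.embed, onePrioNext, onePrioG]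

theorem sem_seqPrioG :
    (seqPrioG M p q hp hq).sem =
      {Ti | (∀ x ∈ Ti.1, x.2 ≤ M) ∧ ((0 : Fin (0 + 1)), max p q) ∈ Ti.1} :=
  (isSuccMap_seqPrioNext M p q hp hq).sem_eq (endsAtExit_orbit_seqPrioNext M p q hp hq)

theorem sem_onePrioG :
    (onePrioG M r hr).sem = {Ti | (∀ x ∈ Ti.1, x.2 ≤ M) ∧ ((0 : Fin (0 + 1)), r) ∈ Ti.1} :=
  (isSuccMap_onePrioNext M r hr).sem_eq (endsAtExit_orbit_onePrioNext M r hr)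

end

/-- **Statement 12** (Soundness of the priority-composition axiom C3,
semantically). Composing priorities `p` then `q` is equivalent to the single
priority `max p q`; both games have semantics `{(T,1) | (1, max p q) ∈ T}`. -/
theorem priority_comp_sound (M p q : ℕ) (hM : 2 ≤ M) (hp : p ≤ M) (hq : q ≤ M) :
    (seqPrioG M p q hp hq).equiv (onePrioG M (max p q) (by omega)) ∧
    (seqPrioG M p q hp hq).sem =
      { Ti : Set (Fin ((1, 0).2 + (1, 0).1) × ℕ) × Fin ((1, 0).1 + (1, 0).2) |
          (∀ x ∈ Ti.1, x.2 ≤ M) ∧ (⟨0, by omega⟩, max p q) ∈ Ti.1 } ∧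
    (onePrioG M (max p q) (by omega)).sem =
      { Ti : Set (Fin ((1, 0).2 + (1, 0).1) × ℕ) × Fin ((1, 0).1 + (1, 0).2) |
          (∀ x ∈ Ti.1, x.2 ≤ M) ∧ (⟨0, by omega⟩, max p q) ∈ Ti.1 } := by
  have hseq := sem_seqPrioG M p q hp hq
  have hone := sem_onePrioG M (max p q) (max_le hp hq)
  exact ⟨hseq.trans hone.symm, hseq, hone⟩

end PaperPG
end
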